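/- arXiv:1605.00088 — 2 statements merged into one kernel-verified Lean document; each statement's English description precedes it below -/
import Mathlib

section
/- For fixed k ≥ 1, the number τ_k(x) of positive integers n ≤ x with exactly k prime factors counted with multiplicity satisfies τ_k(x) ~ x (log log x)^{k-1} / ((k-1)! log x) as x → ∞. -/
namespace Landau
section A1
open MeasureTheory Filter Topology Complex

/-- Fejer type kernel. -/
noncomputable def ker (u : ℝ) : ℝ := Real.sinc (u / 2) ^ 2

lemma ker_nonneg (u : ℝ) : 0 ≤ ker u := sq_nonneg _

lemma ker_cont : Continuous ker := by
  unfold ker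
  exact (Real.continuous_sinc.comp (continuous_id.div_const 2)).pow 2

lemma ker_le (u : ℝ) : ker u ≤ 5 * (1 + u ^ 2)⁻¹ := by
  have h1 : ker u ≤ 1 := by
    unfold ker
    have := Real.sinc_le_one (u / 2)
    have := Real.neg_one_le_sinc (u / 2)
    nlinarith
  have h2 : u ^ 2 * ker u ≤ 4 := by
    unfold ker
    rcases eq_or_ne u 0 with rfl | hu
    · simp
    · rw [Real.sinc_of_ne_zero (by simpa using hu)]
      have := Real.sin_sq_le_one (u / 2)
      have : u ^ 2 * (Real.sin (u / 2) / (u / 2)) ^ 2 = 4 * Real.sin (u / 2) ^ 2 := by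
        field_simp
        ring
      linarith
  rw [← div_eq_mul_inv, le_div_iff₀ (by positivity)]
  linarith

lemma ker_int : Integrable ker := by
  refine Integrable.mono' (integrable_inv_one_add_sq.const_mul 5) ker_cont.aestronglyMeasurable ?_
  filter_upwards with u
  rw [Real.norm_of_nonneg (ker_nonneg u)]
  exact ker_le u

lemma ker_fourier_half (u : ℝ) (hu : u ≠ 0) :
    ∫ t in (0:ℝ)..1, ((1 - t : ℝ) : ℂ) * exp (I * t * u) =
      (exp (I * u) - 1) / (I * u) ^ 2 - 1 / (I * u) := by
  have hu' : (I * u : ℂ) ≠ 0 := by simp [hu]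
  have hu2 : (u : ℂ) ≠ 0 := by exact_mod_cast hu
  have hd : ∀ t ∈ Set.uIcc (0:ℝ) 1, HasDerivAt
      (fun t : ℝ => (1 - (t : ℂ)) * exp (I * t * u) / (I * u) + exp (I * t * u) / (I * u) ^ 2)
      (((1 - t : ℝ) : ℂ) * exp (I * t * u)) t := by
    intro t _
    have h1 : HasDerivAt (fun t : ℝ => exp (I * t * u)) (exp (I * t * u) * (I * u)) t := by
      have : HasDerivAt (fun t : ℂ => exp (I * t * u)) (exp (I * t * u) * (I * u)) t := by
        have := (((hasDerivAt_id (t : ℂ)).const_mul I).mul_const (u : ℂ)).cexp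
        simpa using this
      exact this.comp_ofReal
    have h2 : HasDerivAt (fun t : ℝ => (1 - (t : ℂ))) (-1) t := by
      have := ((hasDerivAt_id (t : ℂ)).const_sub 1).comp_ofReal
      simpa using this
    have h3 := ((h2.mul h1).div_const (I * u)).add (h1.div_const ((I * u) ^ 2))
    convert! h3 using 1
    push_cast
    field_simp
    ring
  rw [intervalIntegral.integral_eq_sub_of_hasDerivAt hd]
  · simp
    ring
  · apply Continuous.intervalIntegrable
    fun_prop

lemma ker_fourier (u : ℝ) :
    ∫ t in (-1:ℝ)..1, ((1 - |t| : ℝ) : ℂ) * exp (I * t * u) = (ker u : ℂ) := by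
  have hc : Continuous (fun t : ℝ => ((1 - |t| : ℝ) : ℂ) * exp (I * t * u)) := by fun_prop
  have h1 : ∫ t in (0:ℝ)..1, ((1 - |t| : ℝ) : ℂ) * exp (I * t * u) =
      ∫ t in (0:ℝ)..1, ((1 - t : ℝ) : ℂ) * exp (I * t * u) := by
    apply intervalIntegral.integral_congr
    intro t ht
    rw [Set.uIcc_of_le zero_le_one] at ht
    simp [abs_of_nonneg ht.1]
  have h2 : ∫ t in (-1:ℝ)..0, ((1 - |t| : ℝ) : ℂ) * exp (I * t * u) =
      ∫ t in (0:ℝ)..1, ((1 - t : ℝ) : ℂ) * exp (I * t * (-u : ℝ)) := by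
    have := intervalIntegral.integral_comp_neg (a := 0) (b := 1)
      (fun t : ℝ => ((1 - |t| : ℝ) : ℂ) * exp (I * t * u))
    simp only [neg_zero] at this
    rw [← this]
    apply intervalIntegral.integral_congr
    intro t ht
    rw [Set.uIcc_of_le zero_le_one] at ht
    simp [abs_of_nonneg ht.1]
  rw [← intervalIntegral.integral_add_adjacent_intervals (b := 0) (hc.intervalIntegrable _ _)
    (hc.intervalIntegrable _ _), h1, h2]
  rcases eq_or_ne u 0 with rfl | hu
  · have : ∫ t in (0:ℝ)..1, ((1 - t : ℝ) : ℂ) = ((1 / 2 : ℝ) : ℂ) := by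
      rw [intervalIntegral.integral_ofReal]
      congr 1
      rw [intervalIntegral.integral_sub (by simp) (by simp)]
      simp
      norm_num
    simp only [ofReal_zero, mul_zero, neg_zero, Complex.exp_zero, mul_one, this, ker]
    norm_num [Real.sinc_zero]
  · rw [ker_fourier_half u hu, ker_fourier_half (-u) (by simpa using hu), ker,
      Real.sinc_of_ne_zero (by simpa using hu)]
    have hu' : (u : ℂ) ≠ 0 := by exact_mod_cast hu
    have hs : (exp (I * u) + exp (-(I * u))) = 2 - 4 * (Complex.sin (u / 2)) ^ 2 := by
      have : Complex.cos u = 1 - 2 * (Complex.sin (u / 2)) ^ 2 := by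
        have h := Complex.cos_two_mul (u / 2 : ℂ)
        have h' := Complex.sin_sq_add_cos_sq (u / 2 : ℂ)
        rw [show (2 * (u / 2) : ℂ) = u by ring] at h
        rw [h]
        linear_combination 2 * h'
      have h2 : exp (I * u) + exp (-(I * u)) = 2 * Complex.cos u := by
        rw [Complex.cos]; ring_nf
      rw [h2, this]; ring
    push_cast
    have hI : I ^ 2 = -1 := I_sq
    field_simp
    simp only [hI]
    linear_combination hs

end A1
end Landau

namespace Landau
section A2
open MeasureTheory Filter Topology Complex

/-- the identity with damping -/
lemma fubini_step (f : ℝ → ℝ) (hf : Measurable f) (C : ℝ) (hC : ∀ u, |f u| ≤ C)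
    (G : ℂ → ℂ)
    (hG' : ∀ z : ℂ, 0 < z.re → ∫ u in Set.Ioi (0:ℝ), (f u : ℂ) * exp (-z * u) = G z)
    (l y δ : ℝ) (hδ : 0 < δ) :
    ∫ u in Set.Ioi (0:ℝ), ((f u * Real.exp (-δ * u) * ker (l * (y - u)) : ℝ) : ℂ) =
    ∫ t in Set.Ioc (-1:ℝ) 1, ((1 - |t| : ℝ) : ℂ) * exp (I * t * (l * y)) * G (δ + I * (l * t)) := by
  have h1 : ∀ u : ℝ, ((f u * Real.exp (-δ * u) * ker (l * (y - u)) : ℝ) : ℂ) =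
      ∫ t in Set.Ioc (-1:ℝ) 1, (f u * Real.exp (-δ * u) : ℝ) *
        (((1 - |t| : ℝ) : ℂ) * exp (I * t * (l * (y - u) : ℝ))) := by
    intro u
    rw [integral_const_mul, ← intervalIntegral.integral_of_le (by norm_num), ker_fourier]
    push_cast
    rfl
  simp_rw [h1]
  rw [integral_integral_swap]
  · refine setIntegral_congr_fun measurableSet_Ioc fun t _ => ?_
    rw [← hG' _ (by simp [hδ]), ← integral_const_mul]
    congr 1
    ext u
    push_cast
    have : exp (-(δ + I * (l * t)) * u) = exp (-δ * u) * exp (-I * l * t * u) := by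
      rw [← Complex.exp_add]; ring_nf
    rw [this]
    have : exp (I * t * (l * (y - u))) = exp (I * t * (l * y)) * exp (-I * l * t * u) := by
      rw [← Complex.exp_add]; ring_nf
    rw [this]
    ring
  · have hb : Integrable (fun p : ℝ × ℝ => (C * Real.exp (-δ * p.1)) * (1 : ℝ))
        ((volume.restrict (Set.Ioi 0)).prod (volume.restrict (Set.Ioc (-1:ℝ) 1))) := by
      apply Integrable.mul_prod (f := fun x => C * Real.exp (-δ * x)) (g := fun _ => (1:ℝ))
      · have := (integrableOn_exp_mul_Ioi (show -δ < 0 by linarith) 0)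
        exact this.const_mul C
      · exact integrable_const _
    refine Integrable.mono' hb ?_ ?_
    · apply Measurable.aestronglyMeasurable
      unfold Function.uncurry
      have : Measurable (fun p : ℝ × ℝ => f p.1) := hf.comp measurable_fst
      fun_prop
    · have : ∀ᵐ p : ℝ × ℝ ∂((volume.restrict (Set.Ioi 0)).prod (volume.restrict (Set.Ioc (-1:ℝ) 1))),
          p ∈ (Set.Ioi (0:ℝ)) ×ˢ (Set.Ioc (-1:ℝ) 1) := by
        rw [Measure.prod_restrict]
        exact ae_restrict_mem (measurableSet_Ioi.prod measurableSet_Ioc)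
      filter_upwards [this] with p hp
      obtain ⟨u, t⟩ := p
      have ht : t ∈ Set.Ioc (-1:ℝ) 1 := hp.2
      simp only [Function.uncurry, norm_mul, mul_one]
      have e1 : ‖exp (I * t * (l * (y - u) : ℝ))‖ = 1 := by
        rw [show I * t * (l * (y - u) : ℝ) = ((t * (l * (y - u)) : ℝ) : ℂ) * I by push_cast; ring]
        exact norm_exp_ofReal_mul_I _
      have e2 : ‖((1 - |t| : ℝ) : ℂ)‖ ≤ 1 := by
        rw [Complex.norm_real, Real.norm_eq_abs, abs_le]
        have := abs_nonneg t
        have : |t| ≤ 1 := abs_le.2 ⟨ht.1.le, ht.2⟩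
        constructor <;> linarith
      rw [e1, mul_one, Complex.norm_real, norm_mul, Real.norm_eq_abs, Real.norm_eq_abs, Real.abs_exp]
      have := Real.exp_pos (-δ * u)
      calc _ ≤ |f u| * Real.exp (-δ * u) * 1 := by gcongr
        _ ≤ _ := by rw [mul_one]; gcongr; exact hC u

lemma ker_shift_int (l y : ℝ) (hl : 0 < l) : Integrable (fun u => ker (l * (y - u))) := by
  have := (ker_int.comp_mul_left' hl.ne').comp_sub_left y
  exact this

lemma limit_step (f : ℝ → ℝ) (hf : Measurable f) (C : ℝ) (hC : ∀ u, |f u| ≤ C)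
    (G : ℂ → ℂ) (hG : ContinuousOn G {z | 0 ≤ z.re})
    (hG' : ∀ z : ℂ, 0 < z.re → ∫ u in Set.Ioi (0:ℝ), (f u : ℂ) * exp (-z * u) = G z)
    (l y : ℝ) (hl : 0 < l) :
    ((∫ u in Set.Ioi (0:ℝ), f u * ker (l * (y - u)) : ℝ) : ℂ) =
    ∫ t in Set.Ioc (-1:ℝ) 1, ((1 - |t| : ℝ) : ℂ) * exp (I * t * (l * y)) * G (I * (l * t)) := by
  have hC0 : 0 ≤ C := (abs_nonneg _).trans (hC 0)
  have hdom : ∀ δ ∈ Set.Icc (0:ℝ) 1, ∀ t ∈ Set.Icc (-1:ℝ) 1,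
      (δ + I * (l * t) : ℂ) ∈ {z : ℂ | 0 ≤ z.re} := by
    intro δ hδ t _
    simp [hδ.1]
  -- bound on G
  obtain ⟨M, hM⟩ : ∃ M, ∀ δ ∈ Set.Icc (0:ℝ) 1, ∀ t ∈ Set.Icc (-1:ℝ) 1,
      ‖G (δ + I * (l * t))‖ ≤ M := by
    have hc : ContinuousOn (fun p : ℝ × ℝ => G (p.1 + I * (l * p.2)))
        (Set.Icc (0:ℝ) 1 ×ˢ Set.Icc (-1:ℝ) 1) := by
      refine hG.comp (by fun_prop) ?_
      rintro ⟨δ, t⟩ ⟨h1, h2⟩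
      exact hdom δ h1 t h2
    obtain ⟨M, hM⟩ := (isCompact_Icc.prod isCompact_Icc).exists_bound_of_continuousOn hc
    exact ⟨M, fun δ hδ t ht => hM (δ, t) ⟨hδ, ht⟩⟩
  have hev : ∀ᶠ δ : ℝ in 𝓝[>] 0, δ ∈ Set.Ioo (0:ℝ) 1 := Ioo_mem_nhdsGT one_pos
  have e2 : ∀ t ∈ Set.Ioc (-1:ℝ) 1, ‖((1 - |t| : ℝ) : ℂ)‖ ≤ 1 := by
    intro t ht
    rw [Complex.norm_real, Real.norm_eq_abs, abs_le]
    have := abs_nonneg t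
    have : |t| ≤ 1 := abs_le.2 ⟨ht.1.le, ht.2⟩
    constructor <;> linarith
  have e1 : ∀ t : ℝ, ‖exp (I * t * (l * y))‖ = 1 := by
    intro t
    rw [show I * t * (l * y) = ((t * (l * y) : ℝ) : ℂ) * I by push_cast; ring]
    exact norm_exp_ofReal_mul_I _
  have hR : Tendsto (fun δ : ℝ => ∫ t in Set.Ioc (-1:ℝ) 1,
      ((1 - |t| : ℝ) : ℂ) * exp (I * t * (l * y)) * G (δ + I * (l * t))) (𝓝[>] 0)
      (𝓝 (∫ t in Set.Ioc (-1:ℝ) 1,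
        ((1 - |t| : ℝ) : ℂ) * exp (I * t * (l * y)) * G (I * (l * t)))) := by
    refine tendsto_integral_filter_of_dominated_convergence (fun _ => M) ?_ ?_ ?_ ?_
    · filter_upwards [hev] with δ hδ
      apply ContinuousOn.aestronglyMeasurable _ measurableSet_Ioc
      refine ContinuousOn.mul (by fun_prop) ?_
      refine hG.comp (by fun_prop) ?_
      intro t ht
      exact hdom δ ⟨hδ.1.le, hδ.2.le⟩ t (Set.Ioc_subset_Icc_self ht)
    · filter_upwards [hev] with δ hδ
      filter_upwards [ae_restrict_mem measurableSet_Ioc] with t ht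
      rw [norm_mul, norm_mul, e1, mul_one]
      have := hM δ ⟨hδ.1.le, hδ.2.le⟩ t (Set.Ioc_subset_Icc_self ht)
      calc _ ≤ 1 * ‖G (δ + I * (l * t))‖ := by gcongr; exact e2 t ht
        _ ≤ M := by rw [one_mul]; exact this
    · exact integrable_const _
    · filter_upwards [ae_restrict_mem measurableSet_Ioc] with t ht
      refine Tendsto.const_mul _ ?_
      have h0 := hdom 0 (by simp) t (Set.Ioc_subset_Icc_self ht)
      have := (hG _ h0)
      simp only [ofReal_zero, zero_add] at this
      refine this.tendsto.comp (tendsto_nhdsWithin_iff.2 ⟨?_, ?_⟩)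
      · refine tendsto_nhdsWithin_of_tendsto_nhds ?_
        have : Continuous (fun δ : ℝ => (δ + I * (l * t) : ℂ)) := by fun_prop
        simpa using this.tendsto 0
      · filter_upwards [hev] with δ hδ
        exact hdom δ ⟨hδ.1.le, hδ.2.le⟩ t (Set.Ioc_subset_Icc_self ht)
  have hL : Tendsto (fun δ : ℝ => ∫ u in Set.Ioi (0:ℝ),
      ((f u * Real.exp (-δ * u) * ker (l * (y - u)) : ℝ) : ℂ)) (𝓝[>] 0)
      (𝓝 (∫ u in Set.Ioi (0:ℝ), ((f u * ker (l * (y - u)) : ℝ) : ℂ))) := by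
    refine tendsto_integral_filter_of_dominated_convergence
      (fun u => C * ker (l * (y - u))) ?_ ?_ ?_ ?_
    · filter_upwards with δ
      apply Measurable.aestronglyMeasurable
      have := ker_cont.measurable
      fun_prop
    · filter_upwards [hev] with δ hδ
      filter_upwards [ae_restrict_mem measurableSet_Ioi] with u hu
      rw [Complex.norm_real, norm_mul, norm_mul, Real.norm_of_nonneg (ker_nonneg _),
        Real.norm_eq_abs, Real.norm_eq_abs, Real.abs_exp]
      have hk := ker_nonneg (l * (y - u))
      have : Real.exp (-δ * u) ≤ 1 := by
        apply Real.exp_le_one_iff.2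
        have : 0 < u := hu
        nlinarith [hδ.1]
      calc _ ≤ C * 1 * ker (l * (y - u)) := by
            gcongr
            exact hC u
        _ = _ := by ring
    · exact ((ker_shift_int l y hl).const_mul C).integrableOn
    · filter_upwards with u
      have : Continuous (fun δ : ℝ => ((f u * Real.exp (-δ * u) * ker (l * (y - u)) : ℝ) : ℂ)) := by
        fun_prop
      have := this.tendsto 0
      refine tendsto_nhdsWithin_of_tendsto_nhds ?_
      simpa using this
  rw [← integral_complex_ofReal]
  refine tendsto_nhds_unique hL (hR.congr' ?_)
  filter_upwards [hev] with δ hδ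
  exact (fubini_step f hf C hC G hG' l y δ hδ.1).symm

lemma conv_tendsto_zero (f : ℝ → ℝ) (hf : Measurable f) (C : ℝ) (hC : ∀ u, |f u| ≤ C)
    (G : ℂ → ℂ) (hG : ContinuousOn G {z | 0 ≤ z.re})
    (hG' : ∀ z : ℂ, 0 < z.re → ∫ u in Set.Ioi (0:ℝ), (f u : ℂ) * exp (-z * u) = G z)
    (l : ℝ) (hl : 0 < l) :
    Tendsto (fun y : ℝ => ∫ u in Set.Ioi (0:ℝ), f u * ker (l * (y - u))) atTop (𝓝 0) := by
  have h := Real.tendsto_integral_exp_smul_cocompact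
    (Set.indicator (Set.Ioc (-1:ℝ) 1) (fun t : ℝ => ((1 - |t| : ℝ) : ℂ) * G (I * (l * t))))
  have hw : Tendsto (fun y : ℝ => -(l / (2 * Real.pi)) * y) atTop (cocompact ℝ) := by
    refine Tendsto.mono_right ?_ atBot_le_cocompact
    apply tendsto_id.const_mul_atTop_of_neg
    have := Real.pi_pos
    simp only [Left.neg_neg_iff]
    positivity
  have h2 := h.comp hw
  have h3 : Tendsto (fun y : ℝ => ((∫ u in Set.Ioi (0:ℝ), f u * ker (l * (y - u)) : ℝ) : ℂ))
      atTop (𝓝 0) := by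
    refine h2.congr fun y => ?_
    rw [limit_step f hf C hC G hG hG' l y hl]
    simp only [Function.comp]
    rw [← integral_indicator measurableSet_Ioc]
    congr 1
    ext t
    by_cases ht : t ∈ Set.Ioc (-1:ℝ) 1
    · simp only [Set.indicator_of_mem ht, Circle.smul_def, Real.fourierChar_apply, smul_eq_mul]
      have : (2 * Real.pi * -(t * (-(l / (2 * Real.pi)) * y)) : ℝ) = t * (l * y) := by
        have := Real.pi_pos
        field_simp
      rw [this, show (((t * (l * y) : ℝ) : ℂ) * I) = I * t * (l * y) by push_cast; ring]
      ring
    · simp [Set.indicator_of_notMem ht]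
  have := (Complex.continuous_re.tendsto 0).comp h3
  simpa only [Function.comp_def, ofReal_re, zero_re] using this

end A2
end Landau

namespace Landau
section A3
open MeasureTheory Filter Topology Complex

noncomputable def B (u : ℝ) : ℝ := Chebyshev.psi (Real.exp u) * Real.exp (-u)

lemma B_nonneg (u : ℝ) : 0 ≤ B u := mul_nonneg (Chebyshev.psi_nonneg _) (Real.exp_pos _).le

lemma B_le (u : ℝ) : B u ≤ Real.log 4 + 4 := by
  have := Chebyshev.psi_le_const_mul_self (Real.exp_pos u).le
  unfold B
  calc _ ≤ (Real.log 4 + 4) * Real.exp u * Real.exp (-u) := by gcongr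
    _ = _ := by rw [mul_assoc, ← Real.exp_add]; simp

lemma B_zero (u : ℝ) (hu : u ≤ 0) : B u = 0 := by
  unfold B
  rw [Chebyshev.psi_eq_zero_of_le_one (Real.exp_le_one_iff.2 hu), zero_mul]

lemma B_mono (u v : ℝ) (huv : u ≤ v) : B u * Real.exp (u - v) ≤ B v := by
  unfold B
  have : Chebyshev.psi (Real.exp u) ≤ Chebyshev.psi (Real.exp v) :=
    Chebyshev.psi_mono (Real.exp_le_exp.2 huv)
  calc _ = Chebyshev.psi (Real.exp u) * Real.exp (-v) := by
        rw [mul_assoc, ← Real.exp_add]; ring_nf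
    _ ≤ _ := by gcongr

lemma B_meas : Measurable B := by
  unfold B
  have : Measurable Chebyshev.psi := Chebyshev.psi_mono.measurable
  fun_prop

noncomputable def G (z : ℂ) : ℂ :=
  (ArithmeticFunction.vonMangoldt.LFunctionResidueClassAux (1 : ZMod 1) (1 + z) - 1) / (1 + z)

lemma G_cont : ContinuousOn G {z | 0 ≤ z.re} := by
  unfold G
  have h := ArithmeticFunction.vonMangoldt.continuousOn_LFunctionResidueClassAux (1 : ZMod 1)
  refine ContinuousOn.div (ContinuousOn.sub ?_ continuousOn_const) (by fun_prop) ?_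
  · refine h.comp (f := fun z => 1 + z) (by fun_prop) ?_
    intro z hz
    simp only [Set.mem_ofPred_eq, add_re, one_re] at *
    linarith
  · intro z hz h0
    have := congrArg Complex.re h0
    simp only [Set.mem_ofPred_eq, add_re, one_re, zero_re] at *
    linarith

lemma psi_eq_sum (t : ℝ) : (Chebyshev.psi t) =
    ∑ k ∈ Finset.Icc 1 ⌊t⌋₊, ArithmeticFunction.vonMangoldt k := by
  rw [Chebyshev.psi]; rfl

lemma LSeries_laplace (z : ℂ) (hz : 0 < z.re) :
    LSeries (fun n => (ArithmeticFunction.vonMangoldt n : ℂ)) (1 + z) =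
      (1 + z) * ∫ u in Set.Ioi (0:ℝ), (B u : ℂ) * exp (-z * u) := by
  rw [LSeries_eq_mul_integral_of_nonneg (fun n => ArithmeticFunction.vonMangoldt n) (r := 1)
    zero_le_one (by simpa using hz) ?_ (fun n => ArithmeticFunction.vonMangoldt_nonneg)]
  · congr 1
    have him : Set.Ioi (1:ℝ) = Real.exp '' (Set.Ioi (0:ℝ)) := by
      ext t
      constructor
      · intro ht
        exact ⟨Real.log t, Real.log_pos ht, Real.exp_log (by have : (1:ℝ) < t := ht; linarith)⟩
      · rintro ⟨u, hu, rfl⟩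
        exact Real.one_lt_exp_iff.2 hu
    rw [him, integral_image_eq_integral_abs_deriv_smul measurableSet_Ioi
      (fun x _ => (Real.hasDerivAt_exp x).hasDerivWithinAt) Real.exp_injective.injOn]
    refine setIntegral_congr_fun measurableSet_Ioi fun u _ => ?_
    have h1 : (∑ k ∈ Finset.Icc 1 ⌊Real.exp u⌋₊, ((ArithmeticFunction.vonMangoldt k : ℝ) : ℂ)) =
      (Chebyshev.psi (Real.exp u) : ℂ) := by
      rw [psi_eq_sum]; push_cast; rfl
    have h2 : ((Real.exp u : ℝ) : ℂ) ^ (-(1 + z + 1)) = exp (u * (-(1 + z + 1))) := by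
      rw [Complex.cpow_def_of_ne_zero (by exact_mod_cast (Real.exp_pos u).ne'),
        ← Complex.ofReal_log (Real.exp_pos u).le, Real.log_exp]
    simp only [h1, h2, B, Real.abs_exp, Complex.real_smul]
    push_cast
    have : exp (u * (-(1 + z + 1))) = exp (-u) * exp (-u) * exp (-z * u) := by
      rw [← Complex.exp_add, ← Complex.exp_add]; ring_nf
    rw [this, Complex.exp_neg]
    field_simp [Complex.exp_ne_zero]
  · refine Asymptotics.IsBigO.of_bound (Real.log 4 + 4) ?_
    filter_upwards with n
    have h := Chebyshev.psi_le_const_mul_self (Nat.cast_nonneg (α := ℝ) n)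
    have h2 := psi_eq_sum n
    rw [Nat.floor_natCast] at h2
    rw [← h2, Real.norm_of_nonneg (Chebyshev.psi_nonneg _), Real.rpow_one,
      Real.norm_of_nonneg (Nat.cast_nonneg n)]
    exact h

lemma G_laplace (z : ℂ) (hz : 0 < z.re) :
    ∫ u in Set.Ioi (0:ℝ), ((B u - 1 : ℝ) : ℂ) * exp (-z * u) = G z := by
  have hz0 : z ≠ 0 := by rintro rfl; simp at hz
  have hz1 : 1 + z ≠ 0 := by
    intro h0
    have := congrArg Complex.re h0
    simp only [add_re, one_re, zero_re] at *
    linarith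
  have hIntE : IntegrableOn (fun u : ℝ => exp (-z * u)) (Set.Ioi 0) :=
    integrableOn_exp_mul_complex_Ioi (by simpa using hz) 0
  have hIntB : IntegrableOn (fun u : ℝ => (B u : ℂ) * exp (-z * u)) (Set.Ioi 0) := by
    refine Integrable.bdd_mul (c := Real.log 4 + 4) hIntE ?_ ?_
    · exact (Complex.measurable_ofReal.comp B_meas).aestronglyMeasurable
    · filter_upwards with u
      rw [Complex.norm_real, Real.norm_of_nonneg (B_nonneg u)]
      exact B_le u
  have h := ArithmeticFunction.vonMangoldt.eqOn_LFunctionResidueClassAux (q := 1) (a := 1)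
    isUnit_one (x := 1 + z) (by simpa using hz)
  have hr : (fun n => ((ArithmeticFunction.vonMangoldt.residueClass (1 : ZMod 1) n : ℝ) : ℂ)) =
      fun n => (ArithmeticFunction.vonMangoldt n : ℂ) := by
    ext n
    rw [ArithmeticFunction.vonMangoldt.residueClass, Set.indicator_of_mem]
    exact Subsingleton.elim _ _
  simp only [hr] at h
  rw [LSeries_laplace z hz] at h
  have e : ∀ u : ℝ, ((B u - 1 : ℝ) : ℂ) * exp (-z * u) =
      (B u : ℂ) * exp (-z * u) - exp (-z * u) := by
    intro u; push_cast; ring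
  simp_rw [e]
  rw [integral_sub hIntB hIntE, integral_exp_mul_complex_Ioi (by simpa using hz), G, h]
  simp
  field_simp
  ring

end A3
end Landau

namespace Landau
section A4
open MeasureTheory Filter Topology

noncomputable def kap : ℝ := ∫ v, ker v

lemma kap_pos : 0 < kap := by
  unfold kap
  refine (integral_pos_iff_support_of_nonneg ker_nonneg ker_int).2 ?_
  refine (ker_cont.isOpen_support).measure_pos _ ⟨0, ?_⟩
  simp [ker]

lemma B_shift_int (l y : ℝ) : Integrable (fun v => B (y - v / l) * ker v) := by
  refine Integrable.bdd_mul (c := Real.log 4 + 4) ker_int ?_ ?_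
  · have := B_meas
    exact Measurable.aestronglyMeasurable (by fun_prop)
  · filter_upwards with u
    rw [Real.norm_of_nonneg (B_nonneg _)]
    exact B_le _

lemma change_var (g : ℝ → ℝ) (l y : ℝ) (hl : 0 < l) :
    ∫ v, g (y - v / l) * ker v = l * ∫ u, g u * ker (l * (y - u)) := by
  have h1 := integral_sub_left_eq_self (fun u => g u * ker (l * (y - u))) volume y
  rw [← h1]
  have h2 := Measure.integral_comp_div (fun u => g (y - u) * ker (l * (y - (y - u)))) l
  rw [smul_eq_mul, abs_of_pos hl] at h2
  rw [← h2]
  congr 1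
  ext v
  congr 2
  field_simp
  ring

lemma B_conv (l : ℝ) (hl : 0 < l) :
    Tendsto (fun y : ℝ => ∫ v, B (y - v / l) * ker v) atTop (𝓝 kap) := by
  have hC : ∀ u, |B u - 1| ≤ Real.log 4 + 5 := by
    intro u
    have := B_nonneg u
    have := B_le u
    have : 0 ≤ Real.log 4 := Real.log_nonneg (by norm_num)
    rw [abs_le]; constructor <;> linarith
  have h := (conv_tendsto_zero (fun u => B u - 1) (B_meas.sub_const 1) _ hC G G_cont G_laplace l hl)
  have h := h.const_mul l
  rw [mul_zero] at h
  -- indicator part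
  have hI : Tendsto (fun y : ℝ => ∫ v, (Set.Ioi (0:ℝ)).indicator (fun _ => (1:ℝ)) (y - v / l) * ker v)
      atTop (𝓝 kap) := by
    refine tendsto_integral_filter_of_dominated_convergence ker ?_ ?_ ker_int ?_
    · filter_upwards with y
      have : Measurable ((Set.Ioi (0:ℝ)).indicator (fun _ => (1:ℝ))) :=
        measurable_const.indicator measurableSet_Ioi
      have := ker_cont.measurable
      exact Measurable.aestronglyMeasurable (by fun_prop)
    · filter_upwards with y
      filter_upwards with v
      rw [norm_mul, Real.norm_of_nonneg (ker_nonneg v)]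
      have := ker_nonneg v
      by_cases hm : (y - v / l) ∈ Set.Ioi (0:ℝ)
      · simp [Set.indicator_of_mem hm]
      · simpa [Set.indicator_of_notMem hm]
    · filter_upwards with v
      refine tendsto_const_nhds.congr' ?_
      filter_upwards [eventually_gt_atTop (v / l)] with y hy
      rw [Set.indicator_of_mem (by simpa using hy), one_mul]
  have h2 := h.add hI
  rw [zero_add] at h2
  refine h2.congr fun y => ?_
  rw [change_var B l y hl, change_var _ l y hl, ← integral_indicator measurableSet_Ioi, ← mul_add,
    ← integral_add]
  · congr 2
    ext u
    by_cases hu : u ∈ Set.Ioi (0:ℝ)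
    · simp only [Set.indicator_of_mem hu]; ring
    · simp only [Set.indicator_of_notMem hu]
      rw [B_zero u (by simpa using hu)]; ring
  · refine Integrable.indicator ?_ measurableSet_Ioi
    refine Integrable.bdd_mul (c := Real.log 4 + 5) (ker_shift_int l y hl) ?_ ?_
    · exact (B_meas.sub_const 1).aestronglyMeasurable
    · filter_upwards with u
      exact hC u
  · refine Integrable.bdd_mul (c := 1) (ker_shift_int l y hl) ?_ ?_
    · exact (measurable_const.indicator measurableSet_Ioi).aestronglyMeasurable
    · filter_upwards with u
      by_cases hm : u ∈ Set.Ioi (0:ℝ)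
      · simp [Set.indicator_of_mem hm]
      · simp [Set.indicator_of_notMem hm]

lemma exists_A (η : ℝ) (hη : 0 < η) : ∃ A : ℝ, 0 < A ∧
    kap - η ≤ ∫ v in Set.Icc (-A) A, ker v := by
  have h : Tendsto (fun A : ℝ => ∫ v in (-A)..A, ker v) atTop (𝓝 kap) :=
    intervalIntegral_tendsto_integral ker_int tendsto_neg_atTop_atBot tendsto_id
  have h2 : ∀ᶠ A : ℝ in atTop, kap - η < ∫ v in (-A)..A, ker v :=
    h.eventually (lt_mem_nhds (by linarith))
  obtain ⟨A, hA, hA0⟩ := (h2.and (eventually_gt_atTop 0)).exists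
  refine ⟨A, hA0, ?_⟩
  rw [intervalIntegral.integral_of_le (by linarith), ← integral_Icc_eq_integral_Ioc] at hA
  exact hA.le

lemma B_upper (η : ℝ) (hη : 0 < η) :
    ∀ᶠ y : ℝ in atTop, B y * Real.exp (-(2 * η)) * (kap - η) ≤ kap + η := by
  obtain ⟨A, hA, hA2⟩ := exists_A η hη
  have h := (B_conv (A / η) (by positivity)).eventually (gt_mem_nhds (show kap < kap + η by linarith))
  have h := (tendsto_atTop_add_const_right atTop η tendsto_id).eventually h
  filter_upwards [h] with y hy
  simp only [id] at hy
  refine le_trans ?_ hy.le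
  have hB := B_nonneg y
  calc B y * Real.exp (-(2 * η)) * (kap - η)
      ≤ B y * Real.exp (-(2 * η)) * ∫ v in Set.Icc (-A) A, ker v := by gcongr
    _ = ∫ v in Set.Icc (-A) A, B y * Real.exp (-(2 * η)) * ker v := by rw [integral_const_mul]
    _ ≤ ∫ v in Set.Icc (-A) A, B (y + η - v / (A / η)) * ker v := by
        refine setIntegral_mono_on (ker_int.const_mul _).integrableOn
          (B_shift_int _ _).integrableOn measurableSet_Icc fun v hv => ?_
        have hk := ker_nonneg v
        gcongr
        have hv1 : v / (A / η) ≤ η := by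
          rw [div_div_eq_mul_div, div_le_iff₀ hA]; nlinarith [hv.2]
        have hv2 : -η ≤ v / (A / η) := by
          rw [div_div_eq_mul_div, le_div_iff₀ hA]; nlinarith [hv.1]
        refine le_trans ?_ (B_mono y _ (by linarith))
        gcongr
        linarith
    _ ≤ ∫ v, B (y + η - v / (A / η)) * ker v := by
        refine setIntegral_le_integral (B_shift_int _ _) ?_
        filter_upwards with v
        exact mul_nonneg (B_nonneg _) (ker_nonneg _)

lemma B_lower (η : ℝ) (hη : 0 < η) :
    ∀ᶠ y : ℝ in atTop, kap - η ≤ B y * Real.exp (2 * η) * kap + (Real.log 4 + 4) * η := by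
  obtain ⟨A, hA, hA2⟩ := exists_A η hη
  have h := (B_conv (A / η) (by positivity)).eventually (lt_mem_nhds (show kap - η < kap by linarith))
  have h := (tendsto_atTop_add_const_right atTop (-η) tendsto_id).eventually h
  filter_upwards [h] with y hy
  simp only [id] at hy
  refine hy.le.trans ?_
  have hB := B_nonneg y
  have hL : 0 ≤ Real.log 4 := Real.log_nonneg (by norm_num)
  rw [← integral_add_compl (measurableSet_Icc (a := -A) (b := A)) (B_shift_int _ _)]
  have hsplit := integral_add_compl (measurableSet_Icc (a := -A) (b := A)) ker_int
  have hcp : 0 ≤ ∫ v in (Set.Icc (-A) A)ᶜ, ker v :=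
    integral_nonneg ker_nonneg
  change _ = kap at hsplit
  gcongr ?_ + ?_
  · calc ∫ v in Set.Icc (-A) A, B (y + -η - v / (A / η)) * ker v
        ≤ ∫ v in Set.Icc (-A) A, B y * Real.exp (2 * η) * ker v := by
          refine setIntegral_mono_on (B_shift_int _ _).integrableOn
            (ker_int.const_mul _).integrableOn measurableSet_Icc fun v hv => ?_
          have hk := ker_nonneg v
          gcongr
          have hv1 : v / (A / η) ≤ η := by
            rw [div_div_eq_mul_div, div_le_iff₀ hA]; nlinarith [hv.2]
          have hv2 : -η ≤ v / (A / η) := by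
            rw [div_div_eq_mul_div, le_div_iff₀ hA]; nlinarith [hv.1]
          have h3 := B_mono (y + -η - v / (A / η)) y (by linarith)
          set w := y + -η - v / (A / η) with hw
          have h4 : B w = B w * Real.exp (w - y) * Real.exp (y - w) := by
            rw [mul_assoc, ← Real.exp_add]; simp
          rw [h4]
          gcongr
          linarith
      _ = B y * Real.exp (2 * η) * ∫ v in Set.Icc (-A) A, ker v := by rw [integral_const_mul]
      _ ≤ _ := by gcongr; linarith
  · calc ∫ v in (Set.Icc (-A) A)ᶜ, B (y + -η - v / (A / η)) * ker v
        ≤ ∫ v in (Set.Icc (-A) A)ᶜ, (Real.log 4 + 4) * ker v := by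
          refine setIntegral_mono (B_shift_int _ _).integrableOn
            (ker_int.const_mul _).integrableOn fun v => ?_
          have hk := ker_nonneg v
          have := B_le (y + -η - v / (A / η))
          dsimp only
          gcongr
      _ = (Real.log 4 + 4) * ∫ v in (Set.Icc (-A) A)ᶜ, ker v := by rw [integral_const_mul]
      _ ≤ _ := by gcongr; linarith

lemma B_tendsto : Tendsto B atTop (𝓝 1) := by
  have hk := kap_pos
  rw [tendsto_order]
  constructor
  · intro a ha
    have hc : Tendsto (fun η : ℝ => (kap - η - (Real.log 4 + 4) * η) / (Real.exp (2 * η) * kap))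
        (𝓝[>] 0) (𝓝 1) := by
      have : ContinuousAt (fun η : ℝ => (kap - η - (Real.log 4 + 4) * η) / (Real.exp (2 * η) * kap)) 0 := by
        refine ContinuousAt.div (by fun_prop) (by fun_prop) ?_
        simp [hk.ne']
      have := this.tendsto
      simp [hk.ne'] at this
      exact tendsto_nhdsWithin_of_tendsto_nhds this
    obtain ⟨η, h1, h2⟩ := ((hc.eventually (lt_mem_nhds ha)).and self_mem_nhdsWithin).exists
    filter_upwards [B_lower η h2] with y hy
    rw [lt_div_iff₀ (by positivity)] at h1
    by_contra hcon
    push Not at hcon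
    have : B y * (Real.exp (2 * η) * kap) ≤ a * (Real.exp (2 * η) * kap) := by gcongr
    nlinarith
  · intro a ha
    have hc : Tendsto (fun η : ℝ => (kap + η) / (Real.exp (-(2 * η)) * (kap - η)))
        (𝓝[>] 0) (𝓝 1) := by
      have : ContinuousAt (fun η : ℝ => (kap + η) / (Real.exp (-(2 * η)) * (kap - η))) 0 := by
        refine ContinuousAt.div (by fun_prop) (by fun_prop) ?_
        simp [hk.ne']
      have := this.tendsto
      simp [hk.ne'] at this
      exact tendsto_nhdsWithin_of_tendsto_nhds this
    obtain ⟨η, ⟨h1, h2⟩, h3⟩ := (((hc.eventually (gt_mem_nhds ha)).and self_mem_nhdsWithin).and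
      (nhdsWithin_le_nhds (gt_mem_nhds hk))).exists
    filter_upwards [B_upper η h2] with y hy
    have hpos : 0 < kap - η := by linarith
    rw [div_lt_iff₀ (by positivity)] at h1
    by_contra hcon
    push Not at hcon
    have : a * (Real.exp (-(2 * η)) * (kap - η)) ≤ B y * (Real.exp (-(2 * η)) * (kap - η)) := by
      gcongr
    nlinarith

/-- Prime number theorem for `ψ`. -/
lemma psi_tendsto : Tendsto (fun x : ℝ => Chebyshev.psi x / x) atTop (𝓝 1) := by
  refine (B_tendsto.comp Real.tendsto_log_atTop).congr' ?_
  filter_upwards [eventually_gt_atTop 0] with x hx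
  simp [B, Real.exp_log hx, Real.exp_neg, div_eq_mul_inv]

lemma theta_tendsto : Tendsto (fun x : ℝ => Chebyshev.theta x / x) atTop (𝓝 1) := by
  have h1 : Tendsto (fun x : ℝ => (Chebyshev.psi x - Chebyshev.theta x) / x) atTop (𝓝 0) := by
    have : (Chebyshev.psi - Chebyshev.theta) =o[atTop] (fun x : ℝ => x) := by
      refine Chebyshev.isBigO_psi_sub_theta_sqrt.trans_isLittleO ?_
      rw [Asymptotics.isLittleO_iff_tendsto' (by
        filter_upwards [eventually_gt_atTop 0] with x hx h0
        exact absurd h0 hx.ne')]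
      have h := Real.tendsto_sqrt_atTop.inv_tendsto_atTop
      refine h.congr' ?_
      filter_upwards [eventually_gt_atTop 0] with x hx
      simp [Real.sqrt_div_self]
    exact this.tendsto_div_nhds_zero
  have := psi_tendsto.sub h1
  simp only [sub_zero] at this
  refine this.congr fun x => ?_
  ring

lemma pi_tendsto : Tendsto (fun x : ℝ => (Nat.primeCounting ⌊x⌋₊ : ℝ) * Real.log x / x) atTop (𝓝 1) := by
  have h := Chebyshev.primeCounting_sub_theta_div_log_isBigO
  have h2 : (fun x : ℝ => x / Real.log x ^ 2) =o[atTop] (fun x : ℝ => x / Real.log x) := by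
    have : (fun x : ℝ => (x / Real.log x) * (Real.log x)⁻¹) =o[atTop]
        (fun x : ℝ => (x / Real.log x) * 1) := by
      refine (Asymptotics.isBigO_refl _ _).mul_isLittleO ?_
      rw [Asymptotics.isLittleO_one_iff]
      exact Real.tendsto_log_atTop.inv_tendsto_atTop
    refine this.congr (fun x => ?_) (fun x => by ring)
    rw [div_mul_eq_mul_div, div_eq_mul_inv, div_eq_mul_inv, sq, mul_inv]; ring
  have h3 := (h.trans_isLittleO h2).tendsto_div_nhds_zero
  have h4 := h3.add theta_tendsto
  simp only [zero_add] at h4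
  refine h4.congr' ?_
  filter_upwards [eventually_gt_atTop 1] with x hx
  have := Real.log_pos hx
  field_simp
  ring

end A4
end Landau

namespace Landau
section B1
open Filter Topology

noncomputable def LL (N : ℕ) : ℝ := Real.log (Real.log N)

lemma log_nat_tendsto : Tendsto (fun n : ℕ => Real.log n) atTop atTop :=
  Real.tendsto_log_atTop.comp tendsto_natCast_atTop_atTop

lemma LL_tendsto : Tendsto LL atTop atTop := Real.tendsto_log_atTop.comp log_nat_tendsto

lemma LL_sub (M : ℕ → ℕ) (h1 : ∀ᶠ N in atTop, M N ≤ N) (h2 : ∀ᶠ N in atTop, N ≤ (M N) ^ 4)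
    (h3 : Tendsto M atTop atTop) : Tendsto (fun N => LL (M N) / LL N) atTop (𝓝 1) := by
  have hlow : Tendsto (fun N => 1 - Real.log 4 / LL N) atTop (𝓝 1) := by
    have := (LL_tendsto.const_div_atTop (Real.log 4)).const_sub 1
    simpa using this
  refine tendsto_of_tendsto_of_tendsto_of_le_of_le' hlow tendsto_const_nhds ?_ ?_
  · filter_upwards [h1, h2, h3.eventually_ge_atTop 2, LL_tendsto.eventually_gt_atTop 0] with N a b c d
    rw [le_div_iff₀ d, sub_mul, div_mul_cancel₀ _ d.ne', one_mul]
    have hM : (2:ℝ) ≤ M N := by exact_mod_cast c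
    have hlM : 0 < Real.log (M N) := Real.log_pos (by linarith)
    have hN : (2:ℝ) ≤ N := hM.trans (by exact_mod_cast a)
    have h5 : Real.log N ≤ 4 * Real.log (M N) := by
      have : (N:ℝ) ≤ (M N : ℝ) ^ 4 := by exact_mod_cast b
      have := Real.log_le_log (by linarith) this
      rw [Real.log_pow] at this
      exact_mod_cast this
    have := Real.log_le_log (Real.log_pos (by linarith)) h5
    rw [Real.log_mul (by norm_num) hlM.ne'] at this
    unfold LL
    linarith
  · filter_upwards [h1, h3.eventually_ge_atTop 2, LL_tendsto.eventually_gt_atTop 0] with N a c d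
    rw [div_le_one d]
    have hM : (2:ℝ) ≤ M N := by exact_mod_cast c
    have hlM : 0 < Real.log (M N) := Real.log_pos (by linarith)
    exact Real.log_le_log hlM (Real.log_le_log (by linarith) (by exact_mod_cast a))

lemma sqrt_tendsto : Tendsto Nat.sqrt atTop atTop := by
  rw [tendsto_atTop]
  intro b
  filter_upwards [eventually_ge_atTop (b * b)] with N hN
  exact Nat.le_sqrt.2 hN

lemma div_tendsto (T : ℕ) (hT : 0 < T) : Tendsto (fun N : ℕ => N / T) atTop atTop := by
  rw [tendsto_atTop]
  intro b
  filter_upwards [eventually_ge_atTop (b * T)] with N hN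
  exact (Nat.le_div_iff_mul_le hT).2 hN

lemma LL_sqrt : Tendsto (fun N => LL (Nat.sqrt N) / LL N) atTop (𝓝 1) := by
  refine LL_sub _ (Eventually.of_forall Nat.sqrt_le_self) ?_ sqrt_tendsto
  filter_upwards [sqrt_tendsto.eventually_ge_atTop 2] with N hN
  have h2 : N < (Nat.sqrt N + 1) * (Nat.sqrt N + 1) := Nat.sqrt_lt.1 (Nat.lt_succ_self _)
  set q := Nat.sqrt N
  have : q + 1 ≤ q * q := by nlinarith
  calc N ≤ (q + 1) * (q + 1) := h2.le
    _ ≤ (q * q) * (q * q) := Nat.mul_le_mul this this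
    _ = q ^ 4 := by ring

lemma LL_div (T : ℕ) (hT : 0 < T) : Tendsto (fun N => LL (N / T) / LL N) atTop (𝓝 1) := by
  refine LL_sub _ (Eventually.of_forall fun N => Nat.div_le_self N T) ?_ (div_tendsto T hT)
  filter_upwards [(div_tendsto T hT).eventually_ge_atTop (T + 2)] with N hN
  have h2 : N < T * (N / T + 1) := by
    have := Nat.lt_mul_div_succ N hT
    simpa using this
  set q := N / T
  have h3 : q + 1 ≤ q * q := by nlinarith
  have h4 : T ≤ q * q := by nlinarith
  calc N ≤ T * (q + 1) := h2.le
    _ ≤ (q * q) * (q * q) := Nat.mul_le_mul h4 h3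
    _ = q ^ 4 := by ring

/-- sum of reciprocals of primes up to `N` -/
noncomputable def PP (N : ℕ) : ℝ := ∑ p ∈ (Finset.Icc 1 N).filter Nat.Prime, (1 : ℝ) / p

lemma PP_abel (N : ℕ) : PP N = (Nat.primeCounting N : ℝ) / N +
    ∑ n ∈ Finset.range N, (Nat.primeCounting n : ℝ) / (n * (n + 1)) := by
  induction N with
  | zero => simp [PP]
  | succ N ih =>
    have h1 : PP (N + 1) = PP N + if (N + 1).Prime then (1:ℝ) / (N + 1 : ℕ) else 0 := by
      unfold PP
      rw [Finset.sum_filter, Finset.sum_filter, Finset.sum_Icc_succ_top (by omega)]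
    have h2 : (Nat.primeCounting (N + 1) : ℝ) = Nat.primeCounting N + if (N + 1).Prime then 1 else 0 := by
      simp only [Nat.primeCounting, Nat.primeCounting', Nat.count_succ]
      push_cast
      simp
    rw [h1, ih, Finset.sum_range_succ, h2]
    rcases Nat.eq_zero_or_pos N with rfl | hN
    · simp [Nat.not_prime_one]
    · have : (N:ℝ) ≠ 0 := by positivity
      have : (N:ℝ) + 1 ≠ 0 := by positivity
      push_cast
      split_ifs <;> field_simp <;> ring

lemma log_succ_ratio : Tendsto (fun n : ℕ => Real.log (n + 1 : ℕ) / Real.log n) atTop (𝓝 1) := by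
  have hup : Tendsto (fun n : ℕ => 1 + 1 / Real.log n) atTop (𝓝 1) := by
    simpa using (log_nat_tendsto.const_div_atTop 1).const_add 1
  refine tendsto_of_tendsto_of_tendsto_of_le_of_le' tendsto_const_nhds hup ?_ ?_
  · filter_upwards [eventually_ge_atTop 2] with n hn
    have h2 : (2:ℝ) ≤ n := by exact_mod_cast hn
    rw [le_div_iff₀ (Real.log_pos (by linarith)), one_mul]
    exact Real.log_le_log (by linarith) (by push_cast; linarith)
  · filter_upwards [eventually_ge_atTop 2] with n hn
    have h2 : (2:ℝ) ≤ n := by exact_mod_cast hn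
    have hl := Real.log_pos (show (1:ℝ) < n by linarith)
    rw [div_le_iff₀ hl, add_mul, div_mul_cancel₀ _ hl.ne', one_mul]
    have := Real.log_le_sub_one_of_pos (show (0:ℝ) < (n + 1) / n by positivity)
    rw [Real.log_div (by positivity) (by positivity)] at this
    have h3 : ((n:ℝ) + 1) / n - 1 ≤ 1 := by
      rw [sub_le_iff_le_add, div_le_iff₀ (by linarith)]; linarith
    push_cast
    linarith

lemma log_diff_le {a b : ℝ} (ha : 0 < a) (hab : a ≤ b) : Real.log b - Real.log a ≤ (b - a) / a := by
  have hb : 0 < b := by linarith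
  have := Real.log_le_sub_one_of_pos (show (0:ℝ) < b / a by positivity)
  rw [Real.log_div (by positivity) (by positivity)] at this
  rw [sub_div, div_self ha.ne']
  exact this

lemma log_diff_ge {a b : ℝ} (ha : 0 < a) (hab : a ≤ b) : (b - a) / b ≤ Real.log b - Real.log a := by
  have hb : 0 < b := by linarith
  have := Real.log_le_sub_one_of_pos (show (0:ℝ) < a / b by positivity)
  rw [Real.log_div (by positivity) (by positivity)] at this
  rw [sub_div, div_self hb.ne']
  linarith

lemma nat_div_succ : Tendsto (fun n : ℕ => (n : ℝ) / (n + 1)) atTop (𝓝 1) :=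
  tendsto_natCast_div_add_atTop (1 : ℝ)

lemma LL_diff : Tendsto (fun n : ℕ => n * Real.log n * (LL (n + 1) - LL n)) atTop (𝓝 1) := by
  have hlow : Tendsto (fun n : ℕ => (n : ℝ) / (n + 1) * (Real.log (n + 1 : ℕ) / Real.log n)⁻¹)
      atTop (𝓝 1) := by
    simpa using nat_div_succ.mul (log_succ_ratio.inv₀ one_ne_zero)
  refine tendsto_of_tendsto_of_tendsto_of_le_of_le' hlow tendsto_const_nhds ?_ ?_
  all_goals
    filter_upwards [eventually_ge_atTop 2] with n hn
    have h2 : (2:ℝ) ≤ n := by exact_mod_cast hn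
    have hl := Real.log_pos (show (1:ℝ) < n by linarith)
    have hl' := Real.log_pos (show (1:ℝ) < n + 1 by linarith)
    have hmono : Real.log n ≤ Real.log (n + 1) := Real.log_le_log (by linarith) (by linarith)
    have u1 := log_diff_le (show (0:ℝ) < n by linarith) (show (n:ℝ) ≤ n + 1 by linarith)
    have u2 := log_diff_le hl hmono
    have l1 := log_diff_ge (show (0:ℝ) < n by linarith) (show (n:ℝ) ≤ n + 1 by linarith)
    have l2 := log_diff_ge hl hmono
    unfold LL
    push_cast
    rw [add_sub_cancel_left] at u1 l1
  · have h3 : 1 / ((n:ℝ) + 1) / Real.log (n + 1) ≤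
        Real.log (Real.log (n + 1)) - Real.log (Real.log n) := le_trans (by gcongr) l2
    calc _ = n * Real.log n * (1 / ((n:ℝ) + 1) / Real.log (n + 1)) := by
          rw [inv_div]; field_simp
      _ ≤ _ := by gcongr
  · have h3 : Real.log (Real.log (n + 1)) - Real.log (Real.log n) ≤ 1 / (n:ℝ) / Real.log n :=
        u2.trans (by gcongr)
    calc _ ≤ n * Real.log n * (1 / (n:ℝ) / Real.log n) := by gcongr
      _ = 1 := by field_simp

lemma PP_tendsto : Tendsto (fun N => PP N / LL N) atTop (𝓝 1) := by
  set g : ℕ → ℝ := fun n => if n < 3 then 0 else LL (n + 1) - LL n with hg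
  set a : ℕ → ℝ := fun n => (Nat.primeCounting n : ℝ) / (n * (n + 1)) with ha
  have hg0 : 0 ≤ g := by
    intro n
    simp only [hg, Pi.zero_apply]
    split_ifs with h
    · exact le_rfl
    · push Not at h
      have h2 : (3:ℝ) ≤ n := by exact_mod_cast h
      have hl := Real.log_pos (show (1:ℝ) < n by linarith)
      have hmono : Real.log n ≤ Real.log (n + 1) := Real.log_le_log (by linarith) (by linarith)
      have := Real.log_le_log hl hmono
      unfold LL
      push_cast
      linarith
  have hsum : ∀ N, 3 ≤ N → ∑ n ∈ Finset.range N, g n = LL N - LL 3 := by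
    intro N hN
    induction N, hN using Nat.le_induction with
    | base => simp [hg, Finset.sum_range_succ]
    | succ N hN ih =>
      rw [Finset.sum_range_succ, ih]
      simp only [hg, if_neg (show ¬ N < 3 by omega)]
      ring
  have hsumT : Tendsto (fun N => ∑ n ∈ Finset.range N, g n) atTop atTop := by
    refine (tendsto_atTop_add_const_right atTop (-LL 3) LL_tendsto).congr' ?_
    filter_upwards [eventually_ge_atTop 3] with N hN
    rw [hsum N hN]; ring
  have hpi : Tendsto (fun n : ℕ => (Nat.primeCounting n : ℝ) * Real.log n / n) atTop (𝓝 1) := by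
    have := pi_tendsto.comp (tendsto_natCast_atTop_atTop (R := ℝ))
    simpa [Function.comp_def] using this
  have hg1 : Tendsto (fun n : ℕ => n * Real.log n * g n) atTop (𝓝 1) := by
    refine LL_diff.congr' ?_
    filter_upwards [eventually_ge_atTop 3] with n hn
    simp only [hg, if_neg (show ¬ n < 3 by omega)]
  have hratio : Tendsto (fun n => (a n - g n) / g n) atTop (𝓝 0) := by
    have h := ((hpi.mul nat_div_succ).div hg1 one_ne_zero).sub_const 1
    simp only [mul_one, div_one, sub_self] at h
    refine h.congr' ?_
    filter_upwards [eventually_ge_atTop 3, hg1.eventually (lt_mem_nhds (zero_lt_one))] with n hn hpos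
    have h2 : (3:ℝ) ≤ n := by exact_mod_cast hn
    have hl := Real.log_pos (show (1:ℝ) < n by linarith)
    have hgn : g n ≠ 0 := by rintro h0; rw [h0] at hpos; simp at hpos
    simp only [ha, Pi.div_apply]
    field_simp
  have hlo : (fun n => a n - g n) =o[atTop] g := by
    rw [Asymptotics.isLittleO_iff_tendsto']
    · exact hratio
    · filter_upwards [hg1.eventually (lt_mem_nhds (zero_lt_one))] with n hpos h0
      rw [h0] at hpos; simp at hpos
  have hs := (hlo.sum_range hg0 hsumT).tendsto_div_nhds_zero
  have hpn : Tendsto (fun n : ℕ => (Nat.primeCounting n : ℝ) / n) atTop (𝓝 0) := by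
    have := hpi.mul log_nat_tendsto.inv_tendsto_atTop
    simp only [mul_zero] at this
    refine this.congr' ?_
    filter_upwards [log_nat_tendsto.eventually_gt_atTop 0] with n hn
    simp only [Pi.inv_apply]
    field_simp
  have hinv := LL_tendsto.inv_tendsto_atTop
  -- PP / LL = (pi/n)/LL + (Σ(a-g)/Σg + 1) (LL - LL3)/LL
  have hfin := (hpn.mul hinv).add ((hs.add_const 1).mul ((hinv.const_mul (LL 3)).const_sub 1))
  simp only [mul_zero, zero_add, sub_zero, one_mul] at hfin
  refine hfin.congr' ?_
  filter_upwards [eventually_ge_atTop 3, LL_tendsto.eventually_gt_atTop 0,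
    hsumT.eventually_gt_atTop 0] with N hN h1 h2
  rw [PP_abel, Finset.sum_sub_distrib]
  rw [hsum N hN] at h2 ⊢
  simp only [Pi.inv_apply]
  field_simp
  ring

end B1
end Landau

namespace Landau
section B2
open Filter Topology

/-- the numbers up to `N` with exactly `j` prime factors -/
noncomputable def S (j N : ℕ) : Finset ℕ :=
  (Finset.Icc 1 N).filter (fun n => ArithmeticFunction.cardFactors n = j)

noncomputable def R (j N : ℕ) : ℝ := ∑ m ∈ S j N, (1:ℝ) / m

noncomputable def Q (j N : ℕ) : ℝ :=
  ∑ m ∈ (Finset.Icc 1 N).filter (fun n => ArithmeticFunction.cardFactors n + 2 = j), (1:ℝ) / m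

lemma mem_S {j N n : ℕ} : n ∈ S j N ↔ (1 ≤ n ∧ n ≤ N) ∧ ArithmeticFunction.cardFactors n = j := by
  simp [S]

lemma Om_mul_prime {m p : ℕ} (hm : 1 ≤ m) (hp : p.Prime) :
    ArithmeticFunction.cardFactors (m * p) = ArithmeticFunction.cardFactors m + 1 := by
  rw [ArithmeticFunction.cardFactors_mul (by omega) hp.ne_zero,
    ArithmeticFunction.cardFactors_apply_prime hp]

lemma double_count (k N : ℕ) (F : ℕ → ℕ → ℝ) :
    ∑ n ∈ S (k+1) N, ∑ p ∈ n.primeFactors, F p (n / p) =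
    ∑ m ∈ S k N, ∑ p ∈ (Finset.Icc 1 (N / m)).filter Nat.Prime, F p m := by
  rw [Finset.sum_sigma', Finset.sum_sigma']
  refine Finset.sum_bij' (fun a _ => ⟨a.1 / a.2, a.2⟩) (fun a _ => ⟨a.1 * a.2, a.2⟩) ?_ ?_ ?_ ?_ ?_
  · rintro ⟨n, p⟩ h
    simp only [Finset.mem_sigma, mem_S, Nat.mem_primeFactors, Finset.mem_filter, Finset.mem_Icc] at h ⊢
    obtain ⟨⟨⟨h1, h2⟩, h3⟩, hp, ⟨m, rfl⟩, h0⟩ := h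
    have hm : 1 ≤ m := by
      rcases Nat.eq_zero_or_pos m with h | h
      · simp [h] at h1
      · exact h
    rw [Nat.mul_div_cancel_left _ hp.pos]
    rw [mul_comm, Om_mul_prime hm hp] at h3
    refine ⟨⟨⟨hm, le_trans (Nat.le_mul_of_pos_left _ hp.pos) h2⟩, by omega⟩, ⟨hp.one_le, ?_⟩, hp⟩
    rw [Nat.le_div_iff_mul_le (by omega)]; exact h2
  · rintro ⟨m, p⟩ h
    simp only [Finset.mem_sigma, mem_S, Nat.mem_primeFactors, Finset.mem_filter, Finset.mem_Icc] at h ⊢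
    obtain ⟨⟨⟨h1, h2⟩, h3⟩, ⟨h4, h5⟩, hp⟩ := h
    rw [Nat.le_div_iff_mul_le (by omega)] at h5
    refine ⟨⟨⟨Nat.mul_pos h1 hp.pos, by rw [mul_comm]; exact h5⟩, ?_⟩, hp, Dvd.intro_left _ rfl, ?_⟩
    · rw [Om_mul_prime h1 hp, h3]
    · exact Nat.mul_ne_zero (by omega) hp.ne_zero
  · rintro ⟨n, p⟩ h
    simp only [Finset.mem_sigma, Nat.mem_primeFactors] at h
    simp [Nat.div_mul_cancel h.2.2.1]
  · rintro ⟨m, p⟩ h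
    simp only [Finset.mem_sigma, Finset.mem_filter] at h
    simp [Nat.mul_div_cancel _ h.2.2.pos]
  · rintro ⟨n, p⟩ h
    rfl

lemma sq_const : ∃ c : ℝ, 0 ≤ c ∧ ∀ s : Finset ℕ, ∑ p ∈ s, (1 + Real.log p) / (p:ℝ)^2 ≤ c := by
  have hs : Summable (fun n : ℕ => 3 * (1 / (n:ℝ)^((3:ℝ)/2))) :=
    (Real.summable_one_div_nat_rpow.mpr (by norm_num)).mul_left 3
  refine ⟨∑' n : ℕ, 3 * (1 / (n:ℝ)^((3:ℝ)/2)), tsum_nonneg (fun n => by positivity), fun s => ?_⟩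
  refine le_trans (Finset.sum_le_sum (fun p _ => ?_)) (hs.sum_le_tsum s (fun n _ => by positivity))
  rcases Nat.eq_zero_or_pos p with rfl | hp
  · norm_num
  have hp' : (1:ℝ) ≤ p := by exact_mod_cast hp
  have hp0 : (0:ℝ) < p := by linarith
  have h1 := Real.log_le_rpow_div hp0.le (show (0:ℝ) < 1/2 by norm_num)
  have h2 : (1:ℝ) ≤ (p:ℝ)^((1:ℝ)/2) := Real.one_le_rpow hp' (by norm_num)
  have h3 : (p:ℝ)^2 = (p:ℝ)^((1:ℝ)/2) * (p:ℝ)^((3:ℝ)/2) := by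
    rw [← Real.rpow_add hp0]; norm_num
  have h4 : (0:ℝ) < (p:ℝ)^((3:ℝ)/2) := by positivity
  rw [h3, div_le_iff₀ (by positivity)]
  have : 3 * (1 / (p:ℝ)^((3:ℝ)/2)) * ((p:ℝ)^((1:ℝ)/2) * (p:ℝ)^((3:ℝ)/2)) = 3 * (p:ℝ)^((1:ℝ)/2) := by
    field_simp
  rw [this]
  have : (p:ℝ)^((1:ℝ)/2) / (1/2) = 2 * (p:ℝ)^((1:ℝ)/2) := by ring
  linarith

lemma sq_count : ∃ c : ℝ, 0 ≤ c ∧ ∀ k N : ℕ,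
    ∑ n ∈ S k N, ∑ p ∈ n.primeFactors.filter (fun p => p^2 ∣ n), (1 + Real.log p) / (n:ℝ) ≤ c * Q k N := by
  obtain ⟨c, hc, H⟩ := sq_const
  refine ⟨c, hc, fun k N => ?_⟩
  have key : c * Q k N ≥ ∑ m ∈ (Finset.Icc 1 N).filter (fun n => ArithmeticFunction.cardFactors n + 2 = k),
      ∑ p ∈ Finset.Icc 1 N, ((1 + Real.log p) / (p:ℝ)^2) * (1 / m) := by
    rw [Q, Finset.mul_sum, ge_iff_le]
    refine Finset.sum_le_sum (fun m _ => ?_)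
    rw [← Finset.sum_mul]
    exact mul_le_mul_of_nonneg_right (H _) (by positivity)
  refine le_trans ?_ key
  rw [Finset.sum_sigma', Finset.sum_sigma']
  have hinj : Set.InjOn (fun a : (_ : ℕ) × ℕ => (⟨a.1 / a.2^2, a.2⟩ : (_ : ℕ) × ℕ))
     (((S k N).sigma fun n => n.primeFactors.filter (fun p => p^2 ∣ n)) : Set ((_ : ℕ) × ℕ)) := by
    rintro ⟨n, p⟩ h ⟨n', p'⟩ h' heq
    simp only [Finset.coe_sigma, Set.mem_sigma_iff, Finset.mem_coe, Finset.mem_filter] at h h'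
    simp only [Sigma.mk.injEq, heq_eq_eq] at heq
    obtain ⟨h1, rfl⟩ := heq
    have : n = n' := by
      rw [← Nat.div_mul_cancel h.2.2, h1, Nat.div_mul_cancel h'.2.2]
    rw [this]
  have hnn : ∀ p : ℕ, 0 ≤ 1 + Real.log p := fun p => by
    have := Real.log_natCast_nonneg p; linarith
  calc _ = ∑ b ∈ ((S k N).sigma fun n => n.primeFactors.filter (fun p => p^2 ∣ n)).image
              (fun a : (_ : ℕ) × ℕ => (⟨a.1 / a.2^2, a.2⟩ : (_ : ℕ) × ℕ)),
              ((1 + Real.log b.2) / (b.2:ℝ)^2) * (1 / b.1) := by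
        rw [Finset.sum_image hinj]
        refine Finset.sum_congr rfl ?_
        rintro ⟨n, p⟩ h
        simp only [Finset.mem_sigma, Finset.mem_filter, Nat.mem_primeFactors] at h
        obtain ⟨hn, ⟨hp, -, h0⟩, m, rfl⟩ := h
        simp only
        rw [Nat.mul_div_cancel_left _ (pow_pos hp.pos 2)]
        push_cast
        rw [div_mul_div_comm, mul_one]
    _ ≤ _ := by
        refine Finset.sum_le_sum_of_subset_of_nonneg ?_ ?_
        · intro b hb
          rw [Finset.mem_image] at hb
          obtain ⟨⟨n, p⟩, h, rfl⟩ := hb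
          simp only [Finset.mem_sigma, Finset.mem_filter, Nat.mem_primeFactors, mem_S, Finset.mem_Icc] at h ⊢
          obtain ⟨⟨⟨h1, h2⟩, h3⟩, ⟨hp, h5, h0⟩, m, rfl⟩ := h
          have hm : 1 ≤ m := by
            rcases Nat.eq_zero_or_pos m with h | h
            · simp [h] at h1
            · exact h
          rw [Nat.mul_div_cancel_left _ (pow_pos hp.pos 2)]
          have e : p^2 * m = m * p * p := by ring
          rw [e, Om_mul_prime (Nat.mul_pos hm hp.pos) hp, Om_mul_prime hm hp] at h3
          refine ⟨⟨⟨hm, le_trans (Nat.le_mul_of_pos_left _ (pow_pos hp.pos 2)) h2⟩, by omega⟩, hp.one_le, ?_⟩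
          exact le_trans (Nat.le_of_dvd h1 h5) h2
        · rintro ⟨m, p⟩ _ _
          have := hnn p
          positivity

lemma fact_le {n p : ℕ} : n.factorization p ≤ 1 + (if p^2 ∣ n then ArithmeticFunction.cardFactors n else 0) := by
  rcases Nat.eq_zero_or_pos n with rfl | hn
  · simp
  by_cases hp : p.Prime
  · split_ifs with h
    · have : n.factorization p ≤ ArithmeticFunction.cardFactors n := by
        rw [ArithmeticFunction.cardFactors_apply, ← Nat.primeFactorsList_count_eq]
        exact List.count_le_length
      omega
    · by_contra hcon
      exact h ((hp.pow_dvd_iff_le_factorization hn.ne').mpr (by omega))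
  · rw [Nat.factorization_eq_zero_of_not_prime _ hp]; omega

lemma sum_fact_upper {n : ℕ} (g : ℕ → ℝ) (hg : ∀ p, 0 ≤ g p) :
    ∑ p ∈ n.primeFactors, (n.factorization p : ℝ) * g p ≤
    ∑ p ∈ n.primeFactors, g p + (ArithmeticFunction.cardFactors n : ℝ) *
      ∑ p ∈ n.primeFactors.filter (fun p => p^2 ∣ n), g p := by
  rw [Finset.sum_filter, Finset.mul_sum, ← Finset.sum_add_distrib]
  refine Finset.sum_le_sum (fun p _ => ?_)
  have h := @fact_le n p
  have h' : (n.factorization p : ℝ) ≤ 1 + (if p^2 ∣ n then (ArithmeticFunction.cardFactors n : ℝ) else 0) := by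
    split_ifs at h ⊢ <;> exact_mod_cast h
  refine le_trans (mul_le_mul_of_nonneg_right h' (hg p)) (le_of_eq ?_)
  split_ifs <;> ring

lemma sum_fact_lower {n : ℕ} (g : ℕ → ℝ) (hg : ∀ p, 0 ≤ g p) :
    ∑ p ∈ n.primeFactors, g p ≤ ∑ p ∈ n.primeFactors, (n.factorization p : ℝ) * g p := by
  refine Finset.sum_le_sum (fun p hp => ?_)
  rw [Nat.mem_primeFactors] at hp
  have : 1 ≤ n.factorization p := (hp.1.dvd_iff_one_le_factorization hp.2.2).mp hp.2.1
  have : (1:ℝ) ≤ n.factorization p := by exact_mod_cast this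
  nlinarith [hg p]

lemma Om_eq_sum (n : ℕ) : (ArithmeticFunction.cardFactors n : ℝ) =
    ∑ p ∈ n.primeFactors, (n.factorization p : ℝ) * 1 := by
  rw [ArithmeticFunction.cardFactors_eq_sum_factorization, Finsupp.sum]
  simp

lemma log_eq_sum (n : ℕ) : Real.log n =
    ∑ p ∈ n.primeFactors, (n.factorization p : ℝ) * Real.log p := by
  rw [Real.log_nat_eq_sum_factorization, Finsupp.sum]
  simp

end B2
end Landau

namespace Landau
section B3
open Filter Topology

lemma S_mono {j M N : ℕ} (h : M ≤ N) : S j M ⊆ S j N := by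
  intro n hn; rw [mem_S] at hn ⊢; exact ⟨⟨hn.1.1, hn.1.2.trans h⟩, hn.2⟩

lemma R_mono {j M N : ℕ} (h : M ≤ N) : R j M ≤ R j N :=
  Finset.sum_le_sum_of_subset_of_nonneg (S_mono h) (fun _ _ _ => by positivity)

lemma R_nonneg (j N : ℕ) : 0 ≤ R j N := Finset.sum_nonneg (fun _ _ => by positivity)

lemma PP_mono {M N : ℕ} (h : M ≤ N) : PP M ≤ PP N := by
  unfold PP
  refine Finset.sum_le_sum_of_subset_of_nonneg ?_ (fun _ _ _ => by positivity)
  exact Finset.filter_subset_filter _ (Finset.Icc_subset_Icc_right h)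

lemma PP_nonneg (N : ℕ) : 0 ≤ PP N := Finset.sum_nonneg (fun _ _ => by positivity)

lemma E_eq (j N : ℕ) : ∑ n ∈ S (j+1) N, ∑ p ∈ n.primeFactors, (1:ℝ) / n =
    ∑ m ∈ S j N, (1:ℝ) / m * PP (N / m) := by
  have h := double_count j N (fun p m => (1:ℝ) / m * (1 / p))
  simp only [PP, Finset.mul_sum]
  rw [← h]
  refine Finset.sum_congr rfl (fun n _ => Finset.sum_congr rfl (fun p hp => ?_))
  rw [Nat.mem_primeFactors] at hp
  obtain ⟨hp, ⟨m, rfl⟩, h0⟩ := hp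
  rw [Nat.mul_div_cancel_left _ hp.pos]
  push_cast
  rw [div_mul_div_comm, mul_one, mul_comm]

lemma R_lower (j N : ℕ) : R j N.sqrt * PP N.sqrt ≤ (j+1) * R (j+1) N := by
  have h1 : ∑ n ∈ S (j+1) N, ∑ p ∈ n.primeFactors, (1:ℝ) / n ≤ (j+1) * R (j+1) N := by
    rw [R, Finset.mul_sum]
    refine Finset.sum_le_sum (fun n hn => ?_)
    have := sum_fact_lower (n := n) (fun _ => 1) (fun _ => zero_le_one)
    rw [← Om_eq_sum, (mem_S.mp hn).2] at this
    have h3 : (0:ℝ) ≤ 1 / n := by positivity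
    have := mul_le_mul_of_nonneg_right this h3
    rw [Finset.sum_mul] at this
    push_cast at this
    simpa only [one_mul] using this
  refine le_trans ?_ h1
  rw [E_eq, R, Finset.sum_mul]
  refine le_trans (Finset.sum_le_sum (fun m hm => ?_)) (Finset.sum_le_sum_of_subset_of_nonneg (S_mono (Nat.sqrt_le_self N)) (fun m _ _ => mul_nonneg (by positivity) (PP_nonneg _)))
  refine mul_le_mul_of_nonneg_left (PP_mono ?_) (by positivity)
  rw [mem_S] at hm
  rw [Nat.le_div_iff_mul_le (by omega)]
  exact le_trans (Nat.mul_le_mul_left _ hm.1.2) (Nat.sqrt_le N)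

lemma R_upper : ∃ c : ℝ, 0 ≤ c ∧ ∀ j N : ℕ,
    (j+1) * R (j+1) N ≤ R j N * PP N + (j+1) * (c * Q (j+1) N) := by
  obtain ⟨c, hc, H⟩ := sq_count
  refine ⟨c, hc, fun j N => ?_⟩
  have h1 : (j+1) * R (j+1) N ≤ ∑ n ∈ S (j+1) N, ∑ p ∈ n.primeFactors, (1:ℝ) / n +
      (j+1) * ∑ n ∈ S (j+1) N, ∑ p ∈ n.primeFactors.filter (fun p => p^2 ∣ n), (1 + Real.log p) / (n:ℝ) := by
    rw [R, Finset.mul_sum, Finset.mul_sum, ← Finset.sum_add_distrib]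
    refine Finset.sum_le_sum (fun n hn => ?_)
    have h := sum_fact_upper (n := n) (fun _ => 1) (fun _ => zero_le_one)
    rw [← Om_eq_sum, (mem_S.mp hn).2] at h
    have h2 : ∑ p ∈ n.primeFactors.filter (fun p => p^2 ∣ n), (1:ℝ) ≤
       ∑ p ∈ n.primeFactors.filter (fun p => p^2 ∣ n), (1 + Real.log p) :=
      Finset.sum_le_sum (fun p _ => by have := Real.log_natCast_nonneg p; linarith)
    have h3 : (0:ℝ) ≤ 1 / n := by positivity
    have h4 : ((j:ℝ)+1) ≤ ∑ p ∈ n.primeFactors, (1:ℝ) + (j+1) *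
       ∑ p ∈ n.primeFactors.filter (fun p => p^2 ∣ n), (1 + Real.log p) := by
      push_cast at h
      have : (0:ℝ) ≤ j + 1 := by positivity
      nlinarith
    have := mul_le_mul_of_nonneg_right h4 h3
    refine this.trans (le_of_eq ?_)
    rw [add_mul, mul_assoc, Finset.sum_mul, Finset.sum_mul]
    simp only [one_mul, mul_one_div]
  refine h1.trans (add_le_add ?_ (mul_le_mul_of_nonneg_left (H _ _) (by positivity)))
  rw [E_eq, R, Finset.sum_mul]
  exact Finset.sum_le_sum (fun m hm => mul_le_mul_of_nonneg_left (PP_mono (Nat.div_le_self _ _)) (by positivity))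

lemma R_zero (N : ℕ) (hN : 1 ≤ N) : R 0 N = 1 := by
  have : S 0 N = {1} := by
    ext n
    rw [mem_S, Finset.mem_singleton, ArithmeticFunction.cardFactors_eq_zero_iff_eq_zero_or_one]
    omega
  rw [R, this]; simp

lemma Q_one (N : ℕ) : Q 1 N = 0 := by
  rw [Q, Finset.filter_false_of_mem]
  · simp
  · intro x _; omega

lemma Q_succ (j N : ℕ) : Q (j+2) N = R j N := by
  rw [Q, R, S]; simp

lemma R_tendsto (j : ℕ) : Tendsto (fun N => R j N / LL N ^ j) atTop (𝓝 (1 / (j.factorial : ℝ))) ∧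
    Tendsto (fun N => Q (j+1) N / LL N ^ j) atTop (𝓝 0) := by
  obtain ⟨c, hc, H⟩ := R_upper
  induction j with
  | zero =>
    constructor
    · refine Tendsto.congr' ?_ (tendsto_const_nhds)
      filter_upwards [eventually_ge_atTop 1] with N hN
      simp [R_zero N hN]
    · simp [Q_one]
  | succ j ih =>
    obtain ⟨ih1, ih2⟩ := ih
    have hLL := LL_tendsto.eventually_gt_atTop 0
    refine ⟨?_, ?_⟩
    · have hup : Tendsto (fun N => ((R j N / LL N ^ j) * (PP N / LL N) + (j+1) * (c * ((Q (j+1) N / LL N ^ j) / LL N))) / (j+1)) atTop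
          (𝓝 (((1 / (j.factorial : ℝ)) * 1 + (j+1) * (c * 0)) / (j+1))) :=
        ((ih1.mul PP_tendsto).add (((ih2.div_atTop LL_tendsto).const_mul c).const_mul _)).div_const _
      have hlo : Tendsto (fun N : ℕ => ((R j N.sqrt / LL N.sqrt ^ j) * (PP N.sqrt / LL N.sqrt) * (LL N.sqrt / LL N)^(j+1)) / (j+1)) atTop
          (𝓝 (((1 / (j.factorial : ℝ)) * 1 * 1^(j+1)) / (j+1))) :=
        (((ih1.comp sqrt_tendsto).mul (PP_tendsto.comp sqrt_tendsto)).mul (LL_sqrt.pow _)).div_const _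
      have e1 : ((1 / (j.factorial : ℝ)) * 1 + (j+1) * (c * 0)) / (j+1) = 1 / ((j+1).factorial : ℝ) := by
        rw [Nat.factorial_succ]; push_cast; field_simp; ring
      have e2 : ((1 / (j.factorial : ℝ)) * 1 * 1^(j+1)) / (j+1) = 1 / ((j+1).factorial : ℝ) := by
        rw [Nat.factorial_succ]; push_cast; field_simp; simp
      rw [e1] at hup; rw [e2] at hlo
      refine tendsto_of_tendsto_of_tendsto_of_le_of_le' hlo hup ?_ ?_
      · filter_upwards [hLL, sqrt_tendsto.eventually hLL] with N h1 h2
        rw [div_le_div_iff₀ (by positivity) (by positivity)]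
        have := R_lower j N
        have e : (R j N.sqrt / LL N.sqrt ^ j) * (PP N.sqrt / LL N.sqrt) * (LL N.sqrt / LL N)^(j+1) * LL N ^ (j+1) = R j N.sqrt * PP N.sqrt := by
          rw [div_pow, pow_succ, pow_succ]
          field_simp
        rw [e]; linarith
      · filter_upwards [hLL] with N h1
        rw [div_le_div_iff₀ (by positivity) (by positivity)]
        have := H j N
        have e : ((R j N / LL N ^ j) * (PP N / LL N) + (j+1) * (c * ((Q (j+1) N / LL N ^ j) / LL N))) * LL N ^ (j+1) = R j N * PP N + (j+1) * (c * Q (j+1) N) := by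
          rw [pow_succ]
          field_simp
        rw [e]; linarith
    · have := ih1.div_atTop LL_tendsto
      refine this.congr (fun N => ?_)
      rw [Q_succ, pow_succ, div_div]

end B3
end Landau

namespace Landau
section B4
open Filter Topology

noncomputable def Th (k N : ℕ) : ℝ := ∑ n ∈ S (k+1) N, Real.log n

noncomputable def D (k N : ℕ) : ℝ := ∑ m ∈ S k N, Chebyshev.theta ((N:ℝ) / m)

lemma D_eq (k N : ℕ) : D k N = ∑ n ∈ S (k+1) N, ∑ p ∈ n.primeFactors, Real.log p := by
  have h := double_count k N (fun p _ => Real.log p)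
  rw [h, D]
  refine Finset.sum_congr rfl (fun m _ => ?_)
  rw [Chebyshev.theta_eq_theta_coe_floor, Nat.floor_div_eq_div, Chebyshev.theta, Nat.floor_natCast]
  refine Finset.sum_congr ?_ (fun _ _ => rfl)
  ext p; simp [Nat.succ_le_iff]

lemma D_le (k N : ℕ) : D k N ≤ Th k N := by
  rw [D_eq, Th]
  refine Finset.sum_le_sum (fun n _ => ?_)
  rw [log_eq_sum]
  exact sum_fact_lower (fun p => Real.log p) (fun p => Real.log_natCast_nonneg p)

lemma Th_le : ∃ c : ℝ, 0 ≤ c ∧ ∀ k N : ℕ, Th k N ≤ D k N + (k+1) * (N * (c * Q (k+1) N)) := by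
  obtain ⟨c, hc, H⟩ := sq_count
  refine ⟨c, hc, fun k N => ?_⟩
  have h1 : Th k N ≤ D k N + (k+1) * (N * ∑ n ∈ S (k+1) N, ∑ p ∈ n.primeFactors.filter (fun p => p^2 ∣ n), (1 + Real.log p) / (n:ℝ)) := by
    rw [D_eq, Th, Finset.mul_sum, Finset.mul_sum, ← Finset.sum_add_distrib]
    refine Finset.sum_le_sum (fun n hn => ?_)
    have h := sum_fact_upper (n := n) (fun p => Real.log p) (fun p => Real.log_natCast_nonneg p)
    obtain ⟨⟨n1, n2⟩, n3⟩ := mem_S.mp hn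
    rw [← log_eq_sum, n3] at h
    refine h.trans (add_le_add le_rfl ?_)
    push_cast
    refine mul_le_mul_of_nonneg_left ?_ (by positivity)
    rw [Finset.mul_sum]
    refine Finset.sum_le_sum (fun p _ => ?_)
    have a1 : (1:ℝ) ≤ n := by exact_mod_cast n1
    have a2 : (n:ℝ) ≤ N := by exact_mod_cast n2
    have a3 := Real.log_natCast_nonneg p
    rw [mul_div_assoc', le_div_iff₀ (by linarith)]
    nlinarith
  exact h1.trans (add_le_add le_rfl (mul_le_mul_of_nonneg_left
    (mul_le_mul_of_nonneg_left (H _ _) (by positivity)) (by positivity)))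

lemma theta_close (ε : ℝ) (hε : 0 < ε) : ∃ T : ℕ, 0 < T ∧ ∀ y : ℝ, T ≤ y →
    (1 - ε) * y ≤ Chebyshev.theta y ∧ Chebyshev.theta y ≤ (1 + ε) * y := by
  have h1 := theta_tendsto.eventually (lt_mem_nhds (show 1 - ε < 1 by linarith))
  have h2 := theta_tendsto.eventually (gt_mem_nhds (show 1 < 1 + ε by linarith))
  obtain ⟨T, hT⟩ := eventually_atTop.mp (h1.and h2)
  refine ⟨max 1 ⌈T⌉₊, by positivity, fun y hy => ?_⟩
  push_cast at hy
  have hy1 : 1 ≤ y := (le_max_left _ _).trans hy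
  have hyT : T ≤ y := (Nat.le_ceil T).trans ((le_max_right _ _).trans hy)
  obtain ⟨a, b⟩ := hT y hyT
  rw [lt_div_iff₀ (by linarith)] at a
  rw [div_lt_iff₀ (by linarith)] at b
  exact ⟨a.le, b.le⟩

lemma D_bounds (ε : ℝ) (hε : 0 < ε) : ∃ T : ℕ, 0 < T ∧ ∀ k N : ℕ,
    (1 - ε) * (N * R k (N / T)) ≤ D k N ∧
    D k N ≤ (1 + ε) * (N * R k N) + Real.log 4 * (N * (R k N - R k (N / T))) := by
  obtain ⟨T, hT, H⟩ := theta_close ε hε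
  have big : ∀ {k N m : ℕ}, m ∈ S k (N / T) → (T:ℝ) ≤ (N:ℝ) / m := by
    intro k N m hm
    obtain ⟨⟨m1, m2⟩, -⟩ := mem_S.mp hm
    rw [Nat.le_div_iff_mul_le hT] at m2
    rw [le_div_iff₀ (by exact_mod_cast m1)]
    rw [mul_comm]; exact_mod_cast m2
  refine ⟨T, hT, fun k N => ⟨?_, ?_⟩⟩
  · have hsub : S k (N / T) ⊆ S k N := S_mono (Nat.div_le_self _ _)
    rw [R, D, Finset.mul_sum, Finset.mul_sum]
    refine le_trans (Finset.sum_le_sum (fun m hm => ?_)) (Finset.sum_le_sum_of_subset_of_nonneg hsub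
      (fun m _ _ => Chebyshev.theta_nonneg _))
    rw [mul_one_div]
    exact (H _ (big hm)).1
  · have hsub : S k (N / T) ⊆ S k N := S_mono (Nat.div_le_self _ _)
    have e : R k N - R k (N / T) = ∑ m ∈ S k N \ S k (N / T), (1:ℝ) / m := by
      rw [R, R, ← Finset.sum_sdiff hsub]; ring
    have hl : 0 ≤ Real.log 4 := Real.log_nonneg (by norm_num)
    have hR : (0:ℝ) ≤ R k (N / T) := R_nonneg _ _
    have hle := R_mono (j := k) (Nat.div_le_self N T)
    have u1 : ∑ m ∈ S k (N / T), Chebyshev.theta ((N:ℝ) / m) ≤ (1 + ε) * (N * R k (N / T)) := by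
      rw [R, Finset.mul_sum, Finset.mul_sum]
      refine Finset.sum_le_sum (fun m hm => ?_)
      rw [mul_one_div]
      exact (H _ (big hm)).2
    have u2 : ∑ m ∈ S k N \ S k (N / T), Chebyshev.theta ((N:ℝ) / m) ≤
        Real.log 4 * (N * (R k N - R k (N / T))) := by
      rw [e, Finset.mul_sum, Finset.mul_sum]
      refine Finset.sum_le_sum (fun m hm => ?_)
      rw [mul_one_div]
      exact Chebyshev.theta_le_log4_mul_x (by positivity)
    rw [D, ← Finset.sum_sdiff hsub]
    have : (1 + ε) * (N * R k (N / T)) ≤ (1 + ε) * (N * R k N) := by gcongr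
    linarith

lemma D_tendsto (k : ℕ) : Tendsto (fun N => D k N / (N * LL N ^ k)) atTop (𝓝 (1 / (k.factorial : ℝ))) := by
  have hR := (R_tendsto k).1
  have hRT : ∀ T : ℕ, 0 < T → Tendsto (fun N => R k (N / T) / LL N ^ k) atTop (𝓝 (1 / (k.factorial : ℝ))) := by
    intro T hT
    have h := (hR.comp (div_tendsto T hT)).mul ((LL_div T hT).pow k)
    rw [one_pow, mul_one] at h
    refine h.congr' ?_
    filter_upwards [(div_tendsto T hT).eventually (LL_tendsto.eventually_gt_atTop 0)] with N h1
    simp only [Function.comp]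
    rw [div_pow]
    field_simp
  set a : ℝ := 1 / (k.factorial : ℝ) with ha
  have hfac : (1:ℝ) ≤ k.factorial := by exact_mod_cast Nat.factorial_pos k
  have ha0 : 0 < a := by positivity
  have ha1 : a ≤ 1 := by rw [ha, div_le_one (by linarith)]; exact hfac
  rw [tendsto_order]
  constructor
  · intro b hb
    obtain ⟨T, hT, H⟩ := D_bounds ((a - b) / 2) (by linarith)
    have h := (hRT T hT).const_mul (1 - (a - b) / 2)
    have hlt : b < (1 - (a - b) / 2) * a := by nlinarith
    filter_upwards [h.eventually (lt_mem_nhds hlt), LL_tendsto.eventually_gt_atTop 0, eventually_gt_atTop 0] with N h1 h2 h3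
    refine h1.trans_le ?_
    have h3' : (0:ℝ) < N := by exact_mod_cast h3
    rw [le_div_iff₀ (by positivity)]
    refine le_trans (le_of_eq ?_) (H k N).1
    field_simp
  · intro b hb
    obtain ⟨T, hT, H⟩ := D_bounds ((b - a) / 2) (by linarith)
    have h := (hR.const_mul (1 + (b - a) / 2)).add ((hR.sub (hRT T hT)).const_mul (Real.log 4))
    have hlt : (1 + (b - a) / 2) * a + Real.log 4 * (a - a) < b := by nlinarith
    filter_upwards [h.eventually (gt_mem_nhds hlt), LL_tendsto.eventually_gt_atTop 0, eventually_gt_atTop 0] with N h1 h2 h3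
    refine lt_of_le_of_lt ?_ h1
    have h3' : (0:ℝ) < N := by exact_mod_cast h3
    rw [div_le_iff₀ (by positivity)]
    refine le_trans (H k N).2 (le_of_eq ?_)
    field_simp

lemma Th_tendsto (k : ℕ) : Tendsto (fun N => Th k N / (N * LL N ^ k)) atTop (𝓝 (1 / (k.factorial : ℝ))) := by
  obtain ⟨c, hc, H⟩ := Th_le
  have hup := (D_tendsto k).add (((R_tendsto k).2.const_mul c).const_mul ((k:ℝ)+1))
  rw [mul_zero, mul_zero, add_zero] at hup
  refine tendsto_of_tendsto_of_tendsto_of_le_of_le' (D_tendsto k) hup ?_ ?_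
  · filter_upwards [LL_tendsto.eventually_gt_atTop 0] with N h2
    exact div_le_div_of_nonneg_right (D_le k N) (by positivity)
  · filter_upwards [LL_tendsto.eventually_gt_atTop 0, eventually_gt_atTop 0] with N h2 h3
    have h3' : (0:ℝ) < N := by exact_mod_cast h3
    rw [div_le_iff₀ (by positivity)]
    refine le_trans (H k N) (le_of_eq ?_)
    field_simp

end B4
end Landau

namespace Landau
section B5
open Filter Topology

lemma Th_le_card (k N : ℕ) : Th k N ≤ (S (k+1) N).card * Real.log N := by
  rw [Th, ← nsmul_eq_mul]
  refine Finset.sum_le_card_nsmul _ _ _ (fun n hn => ?_)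
  obtain ⟨⟨n1, n2⟩, -⟩ := mem_S.mp hn
  exact Real.log_le_log (by exact_mod_cast n1) (by exact_mod_cast n2)

lemma card_le (k N : ℕ) (y : ℝ) (hy : 1 < y) :
    ((S (k+1) N).card : ℝ) ≤ y + Th k N / Real.log y := by
  have hl : 0 < Real.log y := Real.log_pos hy
  rw [← Finset.card_filter_add_card_filter_not (s := S (k+1) N) (fun n : ℕ => (n:ℝ) ≤ y)]
  push_cast
  refine add_le_add ?_ ?_
  · have h1 : (S (k+1) N).filter (fun n : ℕ => (n:ℝ) ≤ y) ⊆ Finset.Icc 1 ⌊y⌋₊ := by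
      intro n hn
      rw [Finset.mem_filter, mem_S] at hn
      rw [Finset.mem_Icc]
      exact ⟨hn.1.1.1, Nat.le_floor hn.2⟩
    have h2 := Finset.card_le_card h1
    rw [Nat.card_Icc, Nat.add_sub_cancel] at h2
    exact le_trans (by exact_mod_cast h2) (Nat.floor_le (by linarith))
  · rw [le_div_iff₀ hl, Th, ← nsmul_eq_mul]
    refine le_trans (Finset.card_nsmul_le_sum _ (fun n : ℕ => Real.log n) _ (fun n hn => ?_))
      (Finset.sum_le_sum_of_subset_of_nonneg (Finset.filter_subset _ _)
        (fun n _ _ => Real.log_natCast_nonneg n))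
    rw [Finset.mem_filter] at hn
    exact Real.log_le_log (by linarith) (not_le.mp hn.2).le

lemma LL_div_log : Tendsto (fun N : ℕ => LL N / Real.log N) atTop (𝓝 0) :=
  (Real.isLittleO_log_id_atTop.tendsto_div_nhds_zero).comp log_nat_tendsto

lemma card_tendsto (k : ℕ) : Tendsto (fun N : ℕ => ((S (k+1) N).card : ℝ) * Real.log N / (N * LL N ^ k))
    atTop (𝓝 (1 / (k.factorial : ℝ))) := by
  have h1 : Tendsto (fun N : ℕ => 1 / (1 - 2 * (LL N / Real.log N))) atTop (𝓝 1) := by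
    have := ((LL_div_log.const_mul 2).const_sub 1).inv₀ (by norm_num)
    simpa using this
  have h0 : Tendsto (fun N : ℕ => 1 / Real.log N) atTop (𝓝 0) := log_nat_tendsto.const_div_atTop 1
  have hup := h0.add ((Th_tendsto k).mul h1)
  rw [zero_add, mul_one] at hup
  refine tendsto_of_tendsto_of_tendsto_of_le_of_le' (Th_tendsto k) hup ?_ ?_
  · filter_upwards [LL_tendsto.eventually_gt_atTop 0] with N h2
    exact div_le_div_of_nonneg_right (Th_le_card k N) (by positivity)
  · filter_upwards [LL_tendsto.eventually_ge_atTop 1, eventually_gt_atTop 0,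
      log_nat_tendsto.eventually_gt_atTop 0,
      LL_div_log.eventually (gt_mem_nhds (show (0:ℝ) < 1/2 by norm_num))] with N a1 a2 a3 a4
    have hN : (0:ℝ) < N := by exact_mod_cast a2
    have hy0 : 0 < (N:ℝ) / Real.log N ^ 2 := by positivity
    have hly : Real.log ((N:ℝ) / Real.log N ^ 2) = Real.log N * (1 - 2 * (LL N / Real.log N)) := by
      rw [Real.log_div hN.ne' (by positivity), Real.log_pow, LL]
      field_simp
      push_cast; ring
    have hpos : 0 < 1 - 2 * (LL N / Real.log N) := by linarith
    have hy1 : 1 < (N:ℝ) / Real.log N ^ 2 := by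
      rw [← Real.log_pos_iff hy0.le, hly]; positivity
    have hc := card_le k N _ hy1
    rw [hly] at hc
    have hLk : 1 ≤ LL N ^ k := one_le_pow₀ a1
    have hLp : 0 < LL N ^ k := by linarith
    set w := 1 - 2 * (LL N / Real.log N) with hw
    calc ((S (k+1) N).card : ℝ) * Real.log N / (N * LL N ^ k)
        ≤ ((N:ℝ) / Real.log N ^ 2 + Th k N / (Real.log N * w)) * Real.log N / (N * LL N ^ k) := by
          gcongr
      _ = 1 / Real.log N * (1 / LL N ^ k) + Th k N / (N * LL N ^ k) * (1 / w) := by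
          field_simp
      _ ≤ _ := by
          refine add_le_add ?_ le_rfl
          refine mul_le_of_le_one_right (by positivity) ?_
          rw [div_le_one hLp]; exact hLk

lemma S_eq (k x : ℕ) : (Finset.range (x + 1)).filter (fun n => n.primeFactorsList.length = k + 1) = S (k+1) x := by
  ext n
  rw [Finset.mem_filter, Finset.mem_range, mem_S, ArithmeticFunction.cardFactors_apply]
  constructor
  · rintro ⟨h1, h2⟩
    refine ⟨⟨?_, by omega⟩, h2⟩
    rcases Nat.eq_zero_or_pos n with rfl | h
    · simp at h2
    · exact h
  · rintro ⟨⟨h1, h3⟩, h2⟩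
    exact ⟨by omega, h2⟩

end B5
end Landau

open Filter Asymptotics

theorem stmt_5 (k : ℕ) (hk : 1 ≤ k) :
    IsEquivalent atTop
      (fun x : ℕ => (((Finset.range (x + 1)).filter
        (fun n => n.primeFactorsList.length = k)).card : ℝ))
      (fun x : ℕ => x * (Real.log (Real.log x)) ^ (k - 1) /
        ((k - 1).factorial * Real.log x)) := by
  obtain ⟨k, rfl⟩ : ∃ j, k = j + 1 := ⟨k - 1, by omega⟩
  simp only [Nat.add_sub_cancel, Landau.S_eq]
  refine isEquivalent_of_tendsto_one ?_
  have h := (Landau.card_tendsto k).const_mul (k.factorial : ℝ)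
  rw [mul_one_div_cancel (by positivity)] at h
  refine h.congr' ?_
  filter_upwards [Landau.LL_tendsto.eventually_gt_atTop 0, eventually_gt_atTop 0,
      Landau.log_nat_tendsto.eventually_gt_atTop 0] with N a1 a2 a3
  have hN : (0:ℝ) < N := by exact_mod_cast a2
  simp only [Pi.div_apply, Landau.LL] at *
  field_simp
end

section
/- Fix N ≥ 1, k ≥ 2, and a k-tuple (m₁,…,m_k) of units modulo N. Let π_{k,m}(x) be the number of squarefree n ≤ x with n = p₁p₂⋯p_k, p₁ < p₂ < … < p_k primes, such that p_i ≡ m_i (mod N) for each i. Then π_{k,m}(x) ~ (1/φ(N)^k) · x (log log x)^{k-1} / ((k-1)! log x) as x → ∞. -/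
namespace Tau
open MeasureTheory Filter Topology Set

/-- Fejér kernel (up to scaling). -/
noncomputable def K (x : ℝ) : ℝ := 2 * (1 - Real.cos x) / x ^ 2

lemma K_nonneg (x : ℝ) : 0 ≤ K x := by
  unfold K
  have := Real.cos_le_one x
  apply div_nonneg (by linarith) (sq_nonneg x)

lemma K_le_one (x : ℝ) : K x ≤ 1 := by
  unfold K
  have := @Real.one_sub_sq_div_two_le_cos x
  apply div_le_one_of_le₀ (by linarith) (sq_nonneg x)

lemma K_le (x : ℝ) : K x ≤ 5 * (1 + x ^ 2)⁻¹ := by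
  have hp : 0 < 1 + x ^ 2 := by positivity
  rw [← div_eq_mul_inv]
  by_cases h : x ^ 2 ≤ 4
  · refine (K_le_one x).trans ?_
    rw [le_div_iff₀ hp]; linarith
  · push Not at h
    unfold K
    have := Real.neg_one_le_cos x
    rw [div_le_div_iff₀ (by linarith) hp]
    nlinarith

lemma K_meas : Measurable K := by
  unfold K; fun_prop

lemma K_int : Integrable K := by
  refine Integrable.mono' (integrable_inv_one_add_sq.const_mul 5) K_meas.aestronglyMeasurable ?_
  exact Eventually.of_forall fun x => by
    rw [Real.norm_of_nonneg (K_nonneg x)]; exact K_le x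

lemma K_four_pos {x : ℝ} (hx : x ≠ 0) :
    ∫ t in (0:ℝ)..1, (1 - t) * Real.cos (x * t) = (1 - Real.cos x) / x ^ 2 := by
  have h : ∀ t ∈ uIcc (0:ℝ) 1, HasDerivAt
      (fun t => (1 - t) * Real.sin (x * t) / x - Real.cos (x * t) / x ^ 2)
      ((1 - t) * Real.cos (x * t)) t := by
    intro t _
    have h1 : HasDerivAt (fun t => x * t) x t := by simpa using (hasDerivAt_id t).const_mul x
    have h2 := h1.sin
    have h3 := h1.cos
    have h4 : HasDerivAt (fun t : ℝ => 1 - t) (-1) t := by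
      simpa using (hasDerivAt_id t).const_sub 1
    have h5 := ((h4.mul h2).div_const x).sub (h3.div_const (x ^ 2))
    refine h5.congr_deriv ?_
    field_simp
    ring
  rw [intervalIntegral.integral_eq_sub_of_hasDerivAt h
    (Continuous.intervalIntegrable (by fun_prop) _ _)]
  simp
  field_simp
  ring

lemma K_four {x : ℝ} (hx : x ≠ 0) :
    ∫ t in Icc (-1:ℝ) 1, ((1 - |t| : ℝ) : ℂ) * Complex.exp (Complex.I * (x * t)) = K x := by
  rw [integral_Icc_eq_integral_Ioc, ← intervalIntegral.integral_of_le (by norm_num)]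
  have hc : Continuous fun t : ℝ => ((1 - |t| : ℝ) : ℂ) * Complex.exp (Complex.I * (x * t)) := by
    fun_prop
  rw [← intervalIntegral.integral_add_adjacent_intervals (b := 0)
    (hc.intervalIntegrable _ _) (hc.intervalIntegrable _ _)]
  have e1 : ∫ t in (-1:ℝ)..0, ((1 - |t| : ℝ) : ℂ) * Complex.exp (Complex.I * (x * t))
     = ∫ t in (0:ℝ)..1, ((1 - |t| : ℝ) : ℂ) * Complex.exp (- (Complex.I * (x * t))) := by
    have := intervalIntegral.integral_comp_neg (a := 0) (b := 1)
      (fun t : ℝ => ((1 - |t| : ℝ) : ℂ) * Complex.exp (Complex.I * (x * t)))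
    simp only [neg_zero] at this
    rw [← this]
    congr 1; ext t; simp
  rw [e1, ← intervalIntegral.integral_add
    (Continuous.intervalIntegrable (by fun_prop) _ _) (hc.intervalIntegrable _ _)]
  have e2 : ∫ t in (0:ℝ)..1, (((1 - |t| : ℝ) : ℂ) * Complex.exp (-(Complex.I * (x * t))) +
       ((1 - |t| : ℝ) : ℂ) * Complex.exp (Complex.I * (x * t)))
     = ∫ t in (0:ℝ)..1, ((2 * ((1 - t) * Real.cos (x * t)) : ℝ) : ℂ) := by
    apply intervalIntegral.integral_congr
    intro t ht
    rw [uIcc_of_le zero_le_one] at ht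
    simp only [abs_of_nonneg ht.1]
    push_cast
    rw [Complex.cos, show (x * t : ℂ) * Complex.I = Complex.I * (x * t) by ring,
      show (-(x * t : ℂ)) * Complex.I = -(Complex.I * (x * t)) by ring]
    ring
  rw [e2, intervalIntegral.integral_ofReal, intervalIntegral.integral_const_mul, K_four_pos hx, K]
  congr 1
  ring

lemma I_pos : 0 < ∫ x, K x := by
  rw [integral_pos_iff_support_of_nonneg K_nonneg K_int]
  have : Ioo (0:ℝ) 1 ⊆ Function.support K := by
    intro x hx
    simp only [Function.mem_support]
    apply ne_of_gt
    unfold K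
    have h2 : Real.cos x < 1 := by
      have := Real.cos_lt_cos_of_nonneg_of_le_pi_div_two le_rfl
        (by have := Real.pi_gt_three; linarith [hx.2] : x ≤ Real.pi / 2) hx.1
      simpa using this
    have := hx.1
    apply div_pos (by linarith) (by positivity)
  refine lt_of_lt_of_le ?_ (measure_mono this)
  simp

end Tau


namespace Tau
open MeasureTheory Filter Topology Set

lemma fub (D : ℝ → ℝ) (hDm : Measurable D) (M : ℝ) (hDM : ∀ u, |D u| ≤ M)
    (ε l y : ℝ) (hε : 0 < ε) (hl : 0 < l) :
    ((∫ u in Ioi (0:ℝ), D u * Real.exp (-ε * u) * K (l * (y - u)) : ℝ) : ℂ) =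
    ∫ t in Icc (-1:ℝ) 1, ((1 - |t| : ℝ) : ℂ) * Complex.exp (Complex.I * (l * y * t)) *
      ∫ u in Ioi (0:ℝ), (D u : ℂ) * Complex.exp (-((ε : ℂ) + Complex.I * (l * t)) * u) := by
  have hM : 0 ≤ M := (abs_nonneg _).trans (hDM 0)
  set F : ℝ → ℝ → ℂ := fun u t => ((1 - |t| : ℝ) : ℂ) * Complex.exp (Complex.I * (l * y * t)) *
      ((D u : ℂ) * Complex.exp (-((ε : ℂ) + Complex.I * (l * t)) * u)) with hF
  have hFint : Integrable (Function.uncurry F)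
      ((volume.restrict (Ioi (0:ℝ))).prod (volume.restrict (Icc (-1:ℝ) 1))) := by
    have h1 : Integrable (fun u : ℝ => M * Real.exp (-ε * u)) (volume.restrict (Ioi (0:ℝ))) :=
      (exp_neg_integrableOn_Ioi 0 hε).const_mul M
    have h2 : Integrable (fun _ : ℝ => (1:ℝ)) (volume.restrict (Icc (-1:ℝ) 1)) :=
      integrable_const _
    have h3 := h1.mul_prod h2
    have hm : Measurable (Function.uncurry F) := by
      simp only [hF]
      unfold Function.uncurry
      simp only
      fun_prop
    refine Integrable.mono' h3 hm.aestronglyMeasurable ?_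
    rw [Measure.prod_restrict]
    refine (ae_restrict_iff' (measurableSet_Ioi.prod measurableSet_Icc)).2 ?_
    refine Eventually.of_forall ?_
    rintro ⟨u, t⟩ ⟨hu, ht⟩
    simp only at hu ht
    simp only [Function.uncurry, hF, norm_mul, Complex.norm_exp, Complex.norm_real]
    have e1 : (Complex.I * (l * y * t : ℂ)).re = 0 := by simp
    have e2 : (-((ε : ℂ) + Complex.I * (l * t)) * u).re = -ε * u := by simp
    rw [e1, e2, Real.exp_zero, mul_one, mul_one]
    have h4 : |t| ≤ 1 := abs_le.2 ht
    have h5 : ‖1 - |t|‖ ≤ 1 := by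
      rw [Real.norm_eq_abs, abs_le]; constructor <;> linarith [abs_nonneg t]
    have h6 : ‖D u‖ ≤ M := hDM u
    calc _ ≤ 1 * (M * Real.exp (-ε * u)) := by gcongr
      _ = _ := one_mul _
  have hsw := integral_integral_swap hFint
  simp only [hF] at hsw
  simp_rw [integral_const_mul] at hsw
  rw [← hsw, ← integral_complex_ofReal]
  apply setIntegral_congr_ae measurableSet_Ioi
  have : ∀ᵐ u : ℝ, u ≠ y := by simp [ae_iff]
  filter_upwards [this] with u hu _
  have hx : l * (y - u) ≠ 0 := mul_ne_zero hl.ne' (sub_ne_zero.2 hu.symm)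
  have := K_four hx
  push_cast at this ⊢
  rw [← this, ← integral_const_mul]
  congr 1; ext t
  have : Complex.exp (Complex.I * (l * y * t)) * Complex.exp (-((ε : ℂ) + Complex.I * (l * t)) * u)
     = Complex.exp (-ε * u) * Complex.exp (Complex.I * (l * (y - u) * t)) := by
    rw [← Complex.exp_add, ← Complex.exp_add]; congr 1; ring
  linear_combination (-(D u : ℂ) * (1 - (|t| : ℝ))) * this

lemma K_shift_int (l y : ℝ) (hl : 0 < l) : Integrable (fun u => K (l * (y - u))) := by
  have := (K_int.comp_mul_left' hl.ne').comp_sub_left y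
  exact this

lemma lim_eps (D : ℝ → ℝ) (hDm : Measurable D) (M : ℝ) (hDM : ∀ u, |D u| ≤ M)
    (G : ℂ → ℂ) (hG : ContinuousOn G {s | 0 ≤ s.re})
    (hGD : ∀ s : ℂ, 0 < s.re → ∫ u in Ioi (0:ℝ), (D u : ℂ) * Complex.exp (-s * u) = G s)
    (l y : ℝ) (hl : 0 < l) :
    ((∫ u in Ioi (0:ℝ), D u * K (l * (y - u)) : ℝ) : ℂ) =
    ∫ t in Icc (-1:ℝ) 1, ((1 - |t| : ℝ) : ℂ) * Complex.exp (Complex.I * (l * y * t)) *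
      G (Complex.I * (l * t)) := by
  have hM : 0 ≤ M := (abs_nonneg _).trans (hDM 0)
  have L1 : Tendsto (fun ε : ℝ => ∫ u in Ioi (0:ℝ), D u * Real.exp (-ε * u) * K (l * (y - u)))
      (𝓝[>] 0) (𝓝 (∫ u in Ioi (0:ℝ), D u * K (l * (y - u)))) := by
    apply tendsto_integral_filter_of_dominated_convergence (fun u => M * K (l * (y - u)))
    · refine Eventually.of_forall fun ε => Measurable.aestronglyMeasurable ?_
      have := K_meas
      fun_prop
    · filter_upwards [self_mem_nhdsWithin] with ε hε
      refine (ae_restrict_iff' measurableSet_Ioi).2 (Eventually.of_forall fun u hu => ?_)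
      rw [norm_mul, norm_mul, Real.norm_of_nonneg (K_nonneg _), Real.norm_of_nonneg (Real.exp_nonneg _)]
      have h6 : ‖D u‖ ≤ M := hDM u
      have h7 : Real.exp (-ε * u) ≤ 1 := by
        rw [Real.exp_le_one_iff]
        have : (0:ℝ) < ε * u := mul_pos hε hu
        linarith
      have := K_nonneg (l * (y - u))
      calc _ ≤ M * 1 * K (l * (y - u)) := by gcongr
        _ = _ := by ring
    · exact ((K_shift_int l y hl).const_mul M).integrableOn
    · refine Eventually.of_forall fun u => ?_
      have : ContinuousAt (fun ε : ℝ => D u * Real.exp (-ε * u) * K (l * (y - u))) 0 := by fun_prop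
      have h := this.tendsto.mono_left (nhdsWithin_le_nhds (s := Ioi 0))
      simpa using h
  set S : Set (ℝ × ℝ) := Icc 0 1 ×ˢ Icc (-1) 1
  have hSc : IsCompact S := isCompact_Icc.prod isCompact_Icc
  have hGc : ContinuousOn (fun q : ℝ × ℝ => G ((q.1 : ℂ) + Complex.I * (l * q.2))) S := by
    refine hG.comp (Continuous.continuousOn (by fun_prop)) ?_
    rintro ⟨a, b⟩ ⟨ha, hb⟩
    simpa using ha.1
  obtain ⟨C, hC⟩ := hSc.exists_bound_of_continuousOn hGc
  have L2 : Tendsto (fun ε : ℝ => ∫ t in Icc (-1:ℝ) 1, ((1 - |t| : ℝ) : ℂ) *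
      Complex.exp (Complex.I * (l * y * t)) * G ((ε : ℂ) + Complex.I * (l * t)))
      (𝓝[>] 0) (𝓝 (∫ t in Icc (-1:ℝ) 1, ((1 - |t| : ℝ) : ℂ) *
      Complex.exp (Complex.I * (l * y * t)) * G (Complex.I * (l * t)))) := by
    have hev : ∀ᶠ ε : ℝ in 𝓝[>] 0, ε ∈ Ioo (0:ℝ) 1 := Ioo_mem_nhdsGT one_pos
    apply tendsto_integral_filter_of_dominated_convergence (fun _ => C)
    · filter_upwards [hev] with ε hε
      refine ContinuousOn.aestronglyMeasurable ?_ measurableSet_Icc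
      refine ContinuousOn.mul (Continuous.continuousOn (by fun_prop)) ?_
      refine hG.comp (Continuous.continuousOn (by fun_prop)) ?_
      intro t ht
      simpa using hε.1.le
    · filter_upwards [hev] with ε hε
      refine (ae_restrict_iff' measurableSet_Icc).2 (Eventually.of_forall fun t ht => ?_)
      rw [norm_mul, norm_mul, Complex.norm_exp, Complex.norm_real]
      have e1 : (Complex.I * (l * y * t : ℂ)).re = 0 := by simp
      rw [e1, Real.exp_zero, mul_one]
      have h4 : |t| ≤ 1 := abs_le.2 ht
      have h5 : ‖1 - |t|‖ ≤ 1 := by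
        rw [Real.norm_eq_abs, abs_le]; constructor <;> linarith [abs_nonneg t]
      have h6 := hC (ε, t) ⟨⟨hε.1.le, hε.2.le⟩, ht⟩
      simp only at h6
      calc _ ≤ 1 * C := by gcongr
        _ = C := one_mul _
    · exact integrable_const _
    · refine (ae_restrict_iff' measurableSet_Icc).2 (Eventually.of_forall fun t ht => ?_)
      refine Tendsto.const_mul _ ?_
      have h1 : Tendsto G (𝓝[{s | 0 ≤ s.re}] (Complex.I * (l * t))) (𝓝 (G (Complex.I * (l * t)))) :=
        hG _ (by simp)
      refine h1.comp (tendsto_nhdsWithin_iff.2 ⟨?_, ?_⟩)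
      · have : ContinuousAt (fun ε : ℝ => (ε : ℂ) + Complex.I * (l * t)) 0 := by fun_prop
        have h := this.tendsto.mono_left (nhdsWithin_le_nhds (s := Ioi 0))
        simpa using h
      · filter_upwards [hev] with ε hε
        simpa using hε.1.le
  have L1' := (Complex.continuous_ofReal.tendsto _).comp L1
  refine tendsto_nhds_unique L1' (L2.congr' ?_)
  filter_upwards [self_mem_nhdsWithin] with ε hε
  simp only [Function.comp]
  rw [fub D hDm M hDM ε l y hε hl]
  apply setIntegral_congr_fun measurableSet_Icc
  intro t _
  simp only
  rw [hGD]
  simpa using hε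

lemma step1 (D : ℝ → ℝ) (hDm : Measurable D) (M : ℝ) (hDM : ∀ u, |D u| ≤ M)
    (G : ℂ → ℂ) (hG : ContinuousOn G {s | 0 ≤ s.re})
    (hGD : ∀ s : ℂ, 0 < s.re → ∫ u in Ioi (0:ℝ), (D u : ℂ) * Complex.exp (-s * u) = G s)
    (l : ℝ) (hl : 0 < l) :
    Tendsto (fun y => ∫ u in Ioi (0:ℝ), D u * K (l * (y - u))) atTop (𝓝 0) := by
  have RL := Real.tendsto_integral_exp_smul_cocompact
    (fun t : ℝ => (Icc (-1:ℝ) 1).indicator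
      (fun t => ((1 - |t| : ℝ) : ℂ) * G (Complex.I * (l * t))) t)
  have h1 : Tendsto (fun y : ℝ => - (l * y / (2 * Real.pi))) atTop (cocompact ℝ) := by
    refine Tendsto.mono_right ?_ atBot_le_cocompact
    refine tendsto_neg_atTop_atBot.comp ?_
    refine Tendsto.atTop_div_const (by positivity) ?_
    exact tendsto_id.const_mul_atTop hl
  have h2 := RL.comp h1
  have h3 : Tendsto (fun y => ((∫ u in Ioi (0:ℝ), D u * K (l * (y - u)) : ℝ) : ℂ)) atTop (𝓝 0) := by
    refine h2.congr fun y => ?_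
    rw [lim_eps D hDm M hDM G hG hGD l y hl]
    simp only [Function.comp]
    rw [← integral_indicator measurableSet_Icc]
    congr 1; ext t
    by_cases ht : t ∈ Icc (-1:ℝ) 1
    · simp only [indicator_of_mem ht]
      rw [Circle.smul_def, Real.fourierChar_apply, smul_eq_mul]
      have : (↑(2 * Real.pi * -(t * -(l * y / (2 * Real.pi)))) : ℂ) * Complex.I
          = Complex.I * (l * y * t) := by
        have hpi : (Real.pi : ℂ) ≠ 0 := by exact_mod_cast Real.pi_ne_zero
        push_cast
        field_simp
      rw [this]; ring
    · simp only [indicator_of_notMem ht, smul_zero]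
  have h4 := (Complex.continuous_re.tendsto _).comp h3
  simpa [Function.comp_def] using h4

end Tau


namespace Tau
open MeasureTheory Filter Topology Set

lemma Wlim (B : ℝ → ℝ) (hBm : Measurable B) (M : ℝ) (hB0 : ∀ u, 0 ≤ B u) (hBM : ∀ u, B u ≤ M)
    (hBz : ∀ u ≤ 0, B u = 0) (c : ℝ)
    (l : ℝ) (hl : 0 < l)
    (h : Tendsto (fun y => ∫ u in Ioi (0:ℝ), (B u - c) * K (l * (y - u))) atTop (𝓝 0)) :
    Tendsto (fun y => ∫ v, B (y - v / l) * K v) atTop (𝓝 (c * ∫ v, K v)) := by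
  have hBi : ∀ y, Integrable (fun v => B (y - v / l) * K v) := by
    intro y
    refine Integrable.mono' (K_int.const_mul M) ?_ ?_
    · have := K_meas
      exact Measurable.aestronglyMeasurable (by fun_prop)
    · refine Eventually.of_forall fun v => ?_
      rw [Real.norm_of_nonneg (mul_nonneg (hB0 _) (K_nonneg _))]
      exact mul_le_mul_of_nonneg_right (hBM _) (K_nonneg _)
  have key : ∀ y, ∫ v, B (y - v / l) * K v =
      l * (∫ u in Ioi (0:ℝ), (B u - c) * K (l * (y - u))) + c * ∫ v in Iio (l * y), K v := by
    intro y
    set f : ℝ → ℝ := fun v => B (y - v / l) * K v - c * (Iio (l * y)).indicator K v with hf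
    have e1 : ∫ u in Ioi (0:ℝ), (B u - c) * K (l * (y - u)) = ∫ u, f (l * (y - u)) := by
      rw [← integral_indicator measurableSet_Ioi]
      congr 1; ext u
      have hu : y - l * (y - u) / l = u := by field_simp; ring
      simp only [hf, hu]
      by_cases h0 : 0 < u
      · have h1 : l * (y - u) ∈ Iio (l * y) := by
          simp only [mem_Iio]; nlinarith
        rw [indicator_of_mem (show u ∈ Ioi (0:ℝ) from h0), indicator_of_mem h1]; ring
      · have h1 : l * (y - u) ∉ Iio (l * y) := by
          simp only [mem_Iio]; push Not at h0; nlinarith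
        rw [indicator_of_notMem (show u ∉ Ioi (0:ℝ) from h0), indicator_of_notMem h1,
          hBz u (not_lt.1 h0)]; ring
    have e2 : ∫ u, f (l * (y - u)) = ∫ u, f (l * u) :=
      integral_sub_left_eq_self (fun u => f (l * u)) volume y
    have e3 := Measure.integral_comp_mul_left f l
    rw [e1, e2, e3, smul_eq_mul, abs_of_pos (inv_pos.2 hl), ← mul_assoc, mul_inv_cancel₀ hl.ne',
      one_mul]
    simp only [hf]
    rw [integral_sub (hBi y) ((K_int.indicator measurableSet_Iio).const_mul c),
      integral_const_mul, integral_indicator measurableSet_Iio]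
    ring
  have hI : Tendsto (fun y => ∫ v in Iio (l * y), K v) atTop (𝓝 (∫ v, K v)) := by
    have h1 : AECover (volume : Measure ℝ) atTop (fun y : ℝ => Iio (l * y)) :=
      aecover_Iio (tendsto_id.const_mul_atTop hl)
    exact h1.integral_tendsto_of_countably_generated K_int
  have := (h.const_mul l).add (hI.const_mul c)
  simp only [mul_zero, zero_add] at this
  exact this.congr fun y => (key y).symm

theorem tauber (B : ℝ → ℝ) (hBm : Measurable B) (M : ℝ) (hB0 : ∀ u, 0 ≤ B u) (hBM : ∀ u, B u ≤ M)
    (hBz : ∀ u ≤ 0, B u = 0) (hmono : ∀ u v, u ≤ v → B u * Real.exp u ≤ B v * Real.exp v)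
    (c : ℝ) 
    (G : ℂ → ℂ) (hG : ContinuousOn G {s | 0 ≤ s.re})
    (hGD : ∀ s : ℂ, 0 < s.re →
      ∫ u in Ioi (0:ℝ), ((B u - c : ℝ) : ℂ) * Complex.exp (-s * u) = G s) :
    Tendsto B atTop (𝓝 c) := by
  have hW : ∀ l : ℝ, 0 < l → Tendsto (fun y => ∫ v, B (y - v / l) * K v) atTop
      (𝓝 (c * ∫ v, K v)) := by
    intro l hl
    refine Wlim B hBm M hB0 hBM hBz c l hl ?_
    refine step1 (fun u => B u - c) (by fun_prop) (M + |c|) (fun u => ?_) G hG hGD l hl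
    calc |B u - c| ≤ |B u| + |c| := abs_sub _ _
      _ ≤ _ := by rw [abs_of_nonneg (hB0 u)]; linarith [hBM u]
  have hmono' : ∀ u s, 0 ≤ s → B u ≤ Real.exp s * B (u + s) := by
    intro u s hs
    have := hmono u (u + s) (by linarith)
    rw [Real.exp_add] at this
    have hp := Real.exp_pos u
    nlinarith
  have hBi : ∀ l y, Integrable (fun v => B (y - v / l) * K v) := by
    intro l y
    refine Integrable.mono' (K_int.const_mul M) ?_ ?_
    · have := K_meas
      exact Measurable.aestronglyMeasurable (by fun_prop)
    · refine Eventually.of_forall fun v => ?_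
      rw [Real.norm_of_nonneg (mul_nonneg (hB0 _) (K_nonneg _))]
      exact mul_le_mul_of_nonneg_right (hBM _) (K_nonneg _)
  set I := ∫ v, K v with hIdef
  have hI : 0 < I := I_pos
  set J : ℕ → ℝ := fun n => ∫ v in Icc (-(n:ℝ)) n, K v with hJ
  have hJlim : Tendsto J atTop (𝓝 I) := by
    have h1 : AECover (volume : Measure ℝ) atTop (fun n : ℕ => Icc (-(n:ℝ)) n) :=
      aecover_Icc (tendsto_neg_atTop_atBot.comp tendsto_natCast_atTop_atTop)
        tendsto_natCast_atTop_atTop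
    exact h1.integral_tendsto_of_countably_generated K_int
  have hJI : ∀ n, J n ≤ I := fun n => setIntegral_le_integral K_int (Eventually.of_forall K_nonneg)
  have hexp : Tendsto (fun n : ℕ => Real.exp (2 * (1 / (n:ℝ)))) atTop (𝓝 1) := by
    have h1 : Tendsto (fun n : ℕ => 2 * (1 / (n:ℝ))) atTop (𝓝 0) := by
      simpa using (tendsto_one_div_atTop_nhds_zero_nat (𝕜 := ℝ)).const_mul 2
    have := (Real.continuous_exp.tendsto 0).comp h1
    simpa [Function.comp_def] using this
  have up : ∀ n : ℕ, 0 < n → ∀ y, B y * J n ≤ Real.exp (2 * (1 / (n:ℝ))) *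
      ∫ v, B ((y + 1 / n) - v / ((n:ℝ) ^ 2)) * K v := by
    intro n hn y
    have hn' : (0:ℝ) < n := by exact_mod_cast hn
    simp only [hJ]
    rw [← integral_const_mul, ← integral_const_mul]
    refine le_trans ?_ (setIntegral_le_integral (s := Icc (-(n:ℝ)) n) ((hBi _ _).const_mul _)
      (Eventually.of_forall fun v => mul_nonneg (Real.exp_nonneg _)
        (mul_nonneg (hB0 _) (K_nonneg _))))
    refine setIntegral_mono_on (K_int.const_mul _).integrableOn
      ((hBi _ _).const_mul _).integrableOn measurableSet_Icc ?_
    intro v hv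
    rw [← mul_assoc]
    refine mul_le_mul_of_nonneg_right ?_ (K_nonneg v)
    have h1 : v / (n:ℝ) ^ 2 ≤ 1 / n := by
      rw [div_le_div_iff₀ (by positivity) hn']; nlinarith [hv.2]
    have h2 : -(1 / n) ≤ v / (n:ℝ) ^ 2 := by
      rw [← neg_div, div_le_div_iff₀ hn' (by positivity)]; nlinarith [hv.1]
    have h3 := hmono' y (1 / n - v / (n:ℝ) ^ 2) (by linarith)
    rw [show y + (1 / n - v / (n:ℝ) ^ 2) = y + 1 / n - v / (n:ℝ) ^ 2 by ring] at h3
    refine h3.trans ?_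
    refine mul_le_mul_of_nonneg_right ?_ (hB0 _)
    exact Real.exp_le_exp.2 (by linarith)
  have lo : ∀ n : ℕ, 0 < n → ∀ y, 
      ∫ v, B ((y - 1 / n) - v / ((n:ℝ) ^ 2)) * K v ≤ 
      Real.exp (2 * (1 / (n:ℝ))) * B y * J n + M * (I - J n) := by
    intro n hn y
    have hn' : (0:ℝ) < n := by exact_mod_cast hn
    have hIJ : I - J n = ∫ v in (Icc (-(n:ℝ)) n)ᶜ, K v := by
      rw [hIdef, ← integral_add_compl (measurableSet_Icc (a := -(n:ℝ)) (b := n)) K_int]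
      simp [hJ]
    rw [← integral_add_compl (measurableSet_Icc (a := -(n:ℝ)) (b := n)) (hBi _ _), hIJ,
      ← integral_const_mul M, hJ]
    simp only
    rw [← integral_const_mul]
    refine add_le_add ?_ ?_
    · refine setIntegral_mono_on (hBi _ _).integrableOn (K_int.const_mul _).integrableOn 
        measurableSet_Icc ?_
      intro v hv
      refine mul_le_mul_of_nonneg_right ?_ (K_nonneg v)
      have h1 : v / (n:ℝ) ^ 2 ≤ 1 / n := by
        rw [div_le_div_iff₀ (by positivity) hn']; nlinarith [hv.2]
      have h2 : -(1 / n) ≤ v / (n:ℝ) ^ 2 := by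
        rw [← neg_div, div_le_div_iff₀ hn' (by positivity)]; nlinarith [hv.1]
      have h3 := hmono' (y - 1 / n - v / (n:ℝ) ^ 2) (1 / n + v / (n:ℝ) ^ 2) (by linarith)
      rw [show y - 1 / n - v / (n:ℝ) ^ 2 + (1 / n + v / (n:ℝ) ^ 2) = y by ring] at h3
      refine h3.trans ?_
      refine mul_le_mul_of_nonneg_right ?_ (hB0 _)
      exact Real.exp_le_exp.2 (by linarith)
    · refine setIntegral_mono_on (hBi _ _).integrableOn (K_int.const_mul _).integrableOn 
        measurableSet_Icc.compl ?_
      intro v _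
      exact mul_le_mul_of_nonneg_right (hBM _) (K_nonneg v)
  rw [tendsto_order]
  constructor
  · intro c' hc'
    have h1 : Tendsto (fun n : ℕ => Real.exp (2 * (1 / (n:ℝ))) * c' * J n + M * (I - J n)) atTop
        (𝓝 (1 * c' * I + M * (I - I))) :=
      ((hexp.mul_const c').mul hJlim).add ((tendsto_const_nhds.sub hJlim).const_mul M)
    have h2 : 1 * c' * I + M * (I - I) < c * I := by nlinarith
    obtain ⟨n, hn, hn1, hn2⟩ := ((h1.eventually_lt_const h2).and
      ((eventually_gt_atTop 0).and (hJlim.eventually_const_lt hI))).exists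
    have hn' : (0:ℝ) < n := by exact_mod_cast hn1
    have h3 := (hW ((n:ℝ) ^ 2) (by positivity)).comp
      (tendsto_atTop_add_const_right atTop (-(1 / (n:ℝ))) tendsto_id)
    filter_upwards [h3.eventually_const_lt hn] with y hy
    simp only [Function.comp, id, ← sub_eq_add_neg] at hy
    have h4 := lo n hn1 y
    have h5 := hy.trans_le h4
    have h6 : 0 < Real.exp (2 * (1 / (n:ℝ))) * J n := mul_pos (Real.exp_pos _) hn2
    by_contra h7
    push Not at h7
    nlinarith
  · intro c' hc'
    have h1 : Tendsto (fun n : ℕ => Real.exp (2 * (1 / (n:ℝ))) * (c * I) - c' * J n) atTop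
        (𝓝 (1 * (c * I) - c' * I)) := (hexp.mul_const _).sub (hJlim.const_mul c')
    have h2 : 1 * (c * I) - c' * I < 0 := by nlinarith
    obtain ⟨n, hn, hn1, hn2⟩ := ((h1.eventually_lt_const h2).and
      ((eventually_gt_atTop 0).and (hJlim.eventually_const_lt hI))).exists
    have hn' : (0:ℝ) < n := by exact_mod_cast hn1
    have h3 := ((hW ((n:ℝ) ^ 2) (by positivity)).comp
      (tendsto_atTop_add_const_right atTop (1 / (n:ℝ)) tendsto_id)).const_mul
        (Real.exp (2 * (1 / (n:ℝ))))
    have hn3 : Real.exp (2 * (1 / (n:ℝ))) * (c * I) < c' * J n := by linarith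
    filter_upwards [h3.eventually_lt_const hn3] with y hy
    simp only [Function.comp, id] at hy
    have h4 := up n hn1 y
    have h5 := h4.trans_lt hy
    exact lt_of_mul_lt_mul_right h5 hn2.le

end Tau


namespace Tau
open MeasureTheory Filter Topology Set
open ArithmeticFunction.vonMangoldt

/-- Chebyshev psi function for a residue class. -/
noncomputable def psiA {q : ℕ} (a : ZMod q) (x : ℝ) : ℝ := ∑ k ∈ Finset.Icc 1 ⌊x⌋₊, residueClass a k

lemma psiA_nonneg {q : ℕ} (a : ZMod q) (x : ℝ) : 0 ≤ psiA a x :=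
  Finset.sum_nonneg fun n _ => residueClass_nonneg a n

lemma psiA_mono {q : ℕ} (a : ZMod q) : Monotone (psiA a) := by
  intro x y hxy
  refine Finset.sum_le_sum_of_subset_of_nonneg ?_ fun n _ _ => residueClass_nonneg a n
  exact Finset.Icc_subset_Icc le_rfl (Nat.floor_mono hxy)

lemma psiA_le {q : ℕ} (a : ZMod q) {x : ℝ} (hx : 0 ≤ x) : psiA a x ≤ (Real.log 4 + 4) * x := by
  refine le_trans ?_ (Chebyshev.psi_le_const_mul_self hx)
  unfold psiA Chebyshev.psi
  exact Finset.sum_le_sum fun n _ => residueClass_le a n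

lemma psiA_zero {q : ℕ} (a : ZMod q) {x : ℝ} (hx : x ≤ 1) : psiA a x = 0 := by
  have := (Chebyshev.psi_eq_zero_of_le_one hx)
  refine le_antisymm ?_ (psiA_nonneg a x)
  rw [← this]
  unfold psiA Chebyshev.psi
  exact Finset.sum_le_sum fun n _ => residueClass_le a n

lemma psiA_lim {q : ℕ} [NeZero q] {a : ZMod q} (ha : IsUnit a) :
    Tendsto (fun u => psiA a (Real.exp u) * Real.exp (-u)) atTop (𝓝 ((q.totient : ℝ)⁻¹)) := by
  set B : ℝ → ℝ := fun u => psiA a (Real.exp u) * Real.exp (-u) with hB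
  have hBm : Measurable B := by
    have := (psiA_mono a).measurable
    fun_prop
  have hB0 : ∀ u, 0 ≤ B u := fun u => mul_nonneg (psiA_nonneg a _) (Real.exp_nonneg _)
  have hBM : ∀ u, B u ≤ Real.log 4 + 4 := by
    intro u
    simp only [hB]
    rw [Real.exp_neg, ← div_eq_mul_inv, div_le_iff₀ (Real.exp_pos u)]
    exact psiA_le a (Real.exp_nonneg u)
  have hBe : ∀ u, B u * Real.exp u = psiA a (Real.exp u) := by
    intro u
    simp only [hB]
    rw [mul_assoc, ← Real.exp_add]; simp
  set c : ℝ := (q.totient : ℝ)⁻¹ with hc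
  refine tauber B hBm _ hB0 hBM ?_ ?_ c
    (fun s => (LFunctionResidueClassAux a (s + 1) - c) / (s + 1)) ?_ ?_
  · intro u hu
    simp only [hB]
    rw [psiA_zero a (Real.exp_le_one_iff.2 hu), zero_mul]
  · intro u v huv
    rw [hBe, hBe]
    exact psiA_mono a (Real.exp_le_exp.2 huv)
  · refine ContinuousOn.div ?_ (by fun_prop) ?_
    · refine ContinuousOn.sub ?_ continuousOn_const
      refine (continuousOn_LFunctionResidueClassAux a).comp (by fun_prop) ?_
      intro s hs
      simpa using hs
    · intro s hs h
      have := congrArg Complex.re h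
      simp at this hs
      linarith
  · intro s hs
    have hs1 : s ≠ 0 := by rintro rfl; simp at hs
    have hs2 : s + 1 ≠ 0 := by
      intro h
      have := congrArg Complex.re h
      simp at this
      linarith
    have hi1 : IntegrableOn (fun u : ℝ => Complex.exp (-s * u)) (Ioi 0) :=
      integrableOn_exp_mul_complex_Ioi (by simpa using hs) 0
    have hi2 : IntegrableOn (fun u : ℝ => (B u : ℂ) * Complex.exp (-s * u)) (Ioi 0) := by
      refine Integrable.bdd_mul hi1 (c := Real.log 4 + 4) ?_ ?_
      · exact (Complex.measurable_ofReal.comp hBm).aestronglyMeasurable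
      · refine Eventually.of_forall fun u => ?_
        rw [Complex.norm_real, Real.norm_of_nonneg (hB0 u)]
        exact hBM u
    have e1 : ∫ u in Ioi (0:ℝ), ((B u - c : ℝ) : ℂ) * Complex.exp (-s * u) =
        (∫ u in Ioi (0:ℝ), (B u : ℂ) * Complex.exp (-s * u)) - c / s := by
      have e2 : ∫ u in Ioi (0:ℝ), (c : ℂ) * Complex.exp (-s * u) = c / s := by
        rw [integral_const_mul, integral_exp_mul_complex_Ioi (by simpa using hs)]
        simp
        field_simp
      rw [← e2, ← integral_sub hi2 (hi1.const_mul _)]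
      congr 1; ext u; push_cast; ring
    have e3 : ∫ u in Ioi (0:ℝ), (B u : ℂ) * Complex.exp (-s * u) =
       ∫ t in Ioi (1:ℝ), (∑ k ∈ Finset.Icc 1 ⌊t⌋₊, (residueClass a k : ℂ)) *
         (t : ℂ) ^ (-((s + 1) + 1)) := by
      have := integral_comp_exp_Ioi (fun t : ℝ => (∑ k ∈ Finset.Icc 1 ⌊t⌋₊, (residueClass a k : ℂ)) *
         (t : ℂ) ^ (-((s + 1) + 1))) 0
      rw [Real.exp_zero] at this
      rw [← this]
      congr 1; ext u
      simp only [hB, psiA]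
      push_cast
      have hne : Complex.exp u ≠ 0 := Complex.exp_ne_zero _
      rw [Complex.real_smul, Complex.cpow_def_of_ne_zero hne,
        ← Complex.ofReal_exp, ← Complex.ofReal_log (Real.exp_nonneg _), Real.log_exp]
      push_cast
      rw [mul_left_comm, mul_assoc, ← Complex.exp_add, ← Complex.exp_add]
      congr 2; ring
    have e4 := LSeries_eq_mul_integral_of_nonneg (residueClass a) zero_le_one (s := s + 1)
      (by simpa using hs) (by
        refine Asymptotics.IsBigO.of_bound (Real.log 4 + 4) (Eventually.of_forall fun n => ?_)
        have h1 := psiA_le a (Nat.cast_nonneg (α := ℝ) n)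
        have h2 := psiA_nonneg a n
        unfold psiA at h1 h2
        rw [Nat.floor_natCast] at h1 h2
        rw [Real.norm_of_nonneg h2, Real.rpow_one, Real.norm_of_nonneg (Nat.cast_nonneg n)]
        exact h1) (residueClass_nonneg a)
    have e5 := eqOn_LFunctionResidueClassAux ha (show (s + 1) ∈ {s : ℂ | 1 < s.re} by simpa using hs)
    simp only at e5
    rw [e1, e3, e5, e4, hc]
    push_cast
    rw [add_sub_cancel_right]
    field_simp
    ring

lemma psiA_lim' {q : ℕ} [NeZero q] {a : ZMod q} (ha : IsUnit a) :
    Tendsto (fun x => psiA a x / x) atTop (𝓝 ((q.totient : ℝ)⁻¹)) := by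
  refine ((psiA_lim ha).comp Real.tendsto_log_atTop).congr' ?_
  filter_upwards [eventually_gt_atTop 0] with x hx
  simp only [Function.comp]
  rw [Real.exp_neg, Real.exp_log hx, div_eq_mul_inv]

end Tau


namespace Tau
open Filter Topology Set
open ArithmeticFunction.vonMangoldt

/-- primes in the residue class `a` -/
def C {q : ℕ} (a : ZMod q) (p : ℕ) : Prop := p.Prime ∧ (p : ZMod q) = a

open Classical in
noncomputable def thA {q : ℕ} (a : ZMod q) (x : ℝ) : ℝ :=
  ∑ p ∈ Finset.Ioc 0 ⌊x⌋₊ with C a p, Real.log p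

open Classical in
noncomputable def piA {q : ℕ} (a : ZMod q) (x : ℝ) : ℝ :=
  ((Finset.Ioc 0 ⌊x⌋₊).filter (C a)).card

lemma psi_sub_th {q : ℕ} (a : ZMod q) (x : ℝ) :
    0 ≤ psiA a x - thA a x ∧ psiA a x - thA a x ≤ Chebyshev.psi x - Chebyshev.theta x := by
  classical
  unfold psiA thA Chebyshev.psi Chebyshev.theta
  rw [show Finset.Icc 1 ⌊x⌋₊ = Finset.Ioc 0 ⌊x⌋₊ from rfl]
  rw [Finset.sum_filter, Finset.sum_filter, ← Finset.sum_sub_distrib, ← Finset.sum_sub_distrib]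
  constructor
  · refine Finset.sum_nonneg fun n _ => ?_
    by_cases h : C a n
    · rw [if_pos h, residueClass, Set.indicator_of_mem (show n ∈ {n : ℕ | (n : ZMod q) = a} from h.2),
        ArithmeticFunction.vonMangoldt_apply_prime h.1]; simp
    · rw [if_neg h, sub_zero]; exact residueClass_nonneg a n
  · refine Finset.sum_le_sum fun n _ => ?_
    by_cases h : C a n
    · rw [if_pos h, if_pos h.1]
      linarith [residueClass_le a n]
    · rw [if_neg h, sub_zero]
      by_cases h2 : n.Prime
      · rw [if_pos h2, ArithmeticFunction.vonMangoldt_apply_prime h2, sub_self, residueClass,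
          Set.indicator_of_notMem (show n ∉ {n : ℕ | (n : ZMod q) = a} from fun h3 => h ⟨h2, h3⟩)]
      · rw [if_neg h2]; simpa using residueClass_le a n

lemma log_div_rpow_lim {δ : ℝ} (hδ : 0 < δ) :
    Tendsto (fun x : ℝ => Real.log x / x ^ δ) atTop (𝓝 0) :=
  (isLittleO_log_rpow_atTop hδ).tendsto_div_nhds_zero

lemma thA_lim {q : ℕ} [NeZero q] {a : ZMod q} (ha : IsUnit a) :
    Tendsto (fun x => thA a x / x) atTop (𝓝 ((q.totient : ℝ)⁻¹)) := by
  have h1 : Tendsto (fun x => (psiA a x - thA a x) / x) atTop (𝓝 0) := by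
    have h2 := (log_div_rpow_lim (show (0:ℝ) < 1 / 2 by norm_num)).const_mul 2
    rw [mul_zero] at h2
    refine tendsto_of_tendsto_of_tendsto_of_le_of_le' tendsto_const_nhds h2 ?_ ?_
    · filter_upwards [eventually_ge_atTop 1] with x hx
      exact div_nonneg (psi_sub_th a x).1 (by linarith)
    · filter_upwards [eventually_ge_atTop 1] with x hx
      have h3 := (psi_sub_th a x).2.trans (Chebyshev.psi_sub_theta_le hx)
      have hx0 : 0 < x := by linarith
      rw [div_le_iff₀ hx0, ← Real.sqrt_eq_rpow]
      have h4 : 0 < √x := Real.sqrt_pos.2 hx0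
      calc _ ≤ _ := h3
        _ = 2 * (Real.log x / √x) * (√x * √x) := by field_simp
        _ = _ := by rw [Real.mul_self_sqrt hx0.le]
  have := (psiA_lim' ha).sub h1
  rw [sub_zero] at this
  refine this.congr fun x => ?_
  ring

lemma thA_le_pi {q : ℕ} (a : ZMod q) {x : ℝ} (hx : 1 ≤ x) : thA a x ≤ piA a x * Real.log x := by
  classical
  unfold thA piA
  rw [← nsmul_eq_mul]
  refine Finset.sum_le_card_nsmul _ _ _ fun p hp => ?_
  simp only [Finset.mem_filter, Finset.mem_Ioc] at hp
  refine Real.log_le_log (by exact_mod_cast hp.1.1) ?_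
  exact (Nat.le_floor_iff (by linarith)).1 hp.1.2

lemma pi_le_thA {q : ℕ} (a : ZMod q) {x y : ℝ} (hy : 1 ≤ y) :
    Real.log y * (piA a x - y) ≤ thA a x := by
  classical
  unfold thA piA
  have hly : 0 ≤ Real.log y := Real.log_nonneg hy
  have h1 : Real.log y * (((Finset.Ioc 0 ⌊x⌋₊).filter (C a)).card : ℝ) ≤
     ∑ p ∈ Finset.Ioc 0 ⌊x⌋₊ with C a p, (Real.log p + if p ≤ ⌊y⌋₊ then Real.log y else 0) := by
    rw [mul_comm, ← nsmul_eq_mul]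
    refine Finset.card_nsmul_le_sum _ _ _ fun p hp => ?_
    simp only [Finset.mem_filter, Finset.mem_Ioc] at hp
    have hp0 : (1:ℝ) ≤ p := by exact_mod_cast hp.1.1
    split_ifs with h
    · linarith [Real.log_nonneg hp0]
    · rw [add_zero]
      apply Real.log_le_log (by linarith)
      rw [Nat.le_floor_iff (by linarith)] at h
      linarith
  rw [Finset.sum_add_distrib, ← Finset.sum_filter, Finset.sum_const, nsmul_eq_mul] at h1
  have h2 : ((((Finset.Ioc 0 ⌊x⌋₊).filter (C a)).filter (fun p => p ≤ ⌊y⌋₊)).card : ℝ) ≤ y := by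
    refine le_trans ?_ (Nat.floor_le (by linarith : 0 ≤ y))
    have : (((Finset.Ioc 0 ⌊x⌋₊).filter (C a)).filter (fun p => p ≤ ⌊y⌋₊)) ⊆ Finset.Ioc 0 ⌊y⌋₊ := by
      intro p hp
      simp only [Finset.mem_filter, Finset.mem_Ioc] at hp ⊢
      exact ⟨hp.1.1.1, hp.2⟩
    have := Finset.card_le_card this
    simp only [Nat.card_Ioc, tsub_zero] at this
    exact_mod_cast this
  nlinarith

lemma piA_lim {q : ℕ} [NeZero q] {a : ZMod q} (ha : IsUnit a) :
    Tendsto (fun x => piA a x * Real.log x / x) atTop (𝓝 ((q.totient : ℝ)⁻¹)) := by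
  set c := (q.totient : ℝ)⁻¹
  have hth := thA_lim ha
  rw [tendsto_order]
  constructor
  · intro c' hc'
    filter_upwards [hth.eventually_const_lt hc', eventually_ge_atTop 1] with x hx hx1
    refine hx.trans_le ?_
    gcongr
    exact thA_le_pi a hx1
  · intro c' hc'
    have h1 : Tendsto (fun δ : ℝ => (1 - δ)⁻¹ * c) (𝓝[>] 0) (𝓝 c) := by
      have : ContinuousAt (fun δ : ℝ => (1 - δ)⁻¹ * c) 0 := by
        refine ContinuousAt.mul (ContinuousAt.inv₀ (by fun_prop) (by norm_num)) (by fun_prop)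
      have h := this.tendsto.mono_left (nhdsWithin_le_nhds (s := Ioi 0))
      simpa using h
    obtain ⟨δ, hδ, hδ1⟩ := ((h1.eventually_lt_const hc').and (Ioo_mem_nhdsGT one_pos)).exists
    have hδ0 : 0 < δ := hδ1.1
    have h2 := (hth.const_mul (1 - δ)⁻¹).add (log_div_rpow_lim hδ0)
    rw [add_zero] at h2
    filter_upwards [h2.eventually_lt_const hδ, eventually_gt_atTop 1] with x hx hx1
    refine lt_of_le_of_lt ?_ hx
    have hx0 : 0 < x := by linarith
    have h3 := pi_le_thA a (x := x) (y := x ^ (1 - δ))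
      (Real.one_le_rpow hx1.le (by linarith [hδ1.2]))
    rw [Real.log_rpow hx0] at h3
    have h4 : 0 < 1 - δ := by linarith [hδ1.2]
    have h5 : x ^ (1 - δ) = x / x ^ δ := by rw [Real.rpow_sub hx0, Real.rpow_one]
    rw [h5] at h3
    have hp : 0 < x ^ δ := Real.rpow_pos_of_pos hx0 δ
    rw [div_le_iff₀ hx0]
    have h6 : Real.log x * (piA a x - x / x ^ δ) ≤ (1 - δ)⁻¹ * thA a x := by
      rw [inv_mul_eq_div, le_div_iff₀ h4]; linarith
    calc piA a x * Real.log x = Real.log x * (piA a x - x / x ^ δ) + Real.log x * (x / x ^ δ) := by ring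
      _ ≤ (1 - δ)⁻¹ * thA a x + Real.log x * (x / x ^ δ) := by linarith
      _ = _ := by field_simp

/-- Stolz–Cesàro. -/
lemma stolz (a u e : ℕ → ℝ) (c : ℝ) (hu : Monotone u) (hu' : Tendsto u atTop atTop)
    (he : Tendsto e atTop (𝓝 c)) (h : ∀ᶠ n in atTop, a n = e n * (u (n + 1) - u n)) :
    Tendsto (fun n => (∑ i ∈ Finset.range n, a i) / u n) atTop (𝓝 c) := by
  have hg : ∀ n, ∑ i ∈ Finset.range n, (u (i + 1) - u i) = u n - u 0 := Finset.sum_range_sub u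
  have h1 : (fun n => a n - c * (u (n + 1) - u n)) =o[atTop] (fun n => u (n + 1) - u n) := by
    rw [Asymptotics.isLittleO_iff_exists_eq_mul]
    refine ⟨fun n => e n - c, by simpa using he.sub_const c, ?_⟩
    filter_upwards [h] with n hn
    simp only [Pi.mul_apply]
    rw [hn]; ring
  have hd : Tendsto (fun n => ∑ i ∈ Finset.range n, (u (i + 1) - u i)) atTop atTop := by
    simp_rw [hg]
    exact tendsto_atTop_add_const_right _ _ hu'
  have h2 := (h1.sum_range (fun n => sub_nonneg.2 (hu (Nat.le_succ n))) hd)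
  simp_rw [hg] at h2
  have h3 : (fun n => u n - u 0) =O[atTop] u := by
    refine (Asymptotics.isBigO_refl u atTop).sub ?_
    refine Asymptotics.IsBigO.of_bound |u 0| ?_
    filter_upwards [hu'.eventually_ge_atTop 1] with n hn
    rw [Real.norm_eq_abs, Real.norm_eq_abs, abs_of_pos (by linarith : 0 < u n)]
    nlinarith [abs_nonneg (u 0)]
  have h4 := (h2.trans_isBigO h3).tendsto_div_nhds_zero
  have h5 : Tendsto (fun n => c * (u n - u 0) / u n) atTop (𝓝 c) := by
    have h6 : Tendsto (fun n => c - c * u 0 / u n) atTop (𝓝 (c - 0)) :=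
      tendsto_const_nhds.sub (Tendsto.div_atTop tendsto_const_nhds hu')
    rw [sub_zero] at h6
    refine h6.congr' ?_
    filter_upwards [hu'.eventually_gt_atTop 0] with n hn
    field_simp
  have h7 := h4.add h5
  rw [zero_add] at h7
  refine h7.congr fun n => ?_
  rw [← add_div]
  congr 1
  rw [Finset.sum_sub_distrib, ← Finset.mul_sum, hg]
  ring

end Tau


namespace Tau
open Filter Topology Set

lemma loglem {ι : Type*} {l : Filter ι} {v w : ι → ℝ} {d : ℝ} (hd : 0 < d) (hv : Tendsto v l atTop)
    (h : Tendsto (fun i => w i / v i) l (𝓝 d)) :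
    Tendsto (fun i => Real.log (w i) / Real.log (v i)) l (𝓝 1) := by
  have h1 : Tendsto (fun i => Real.log (w i / v i)) l (𝓝 (Real.log d)) :=
    (Real.continuousAt_log hd.ne').tendsto.comp h
  have h2 : Tendsto (fun i => Real.log (v i)) l atTop := Real.tendsto_log_atTop.comp hv
  have h3 := (h1.div_atTop h2).const_add 1
  rw [add_zero] at h3
  refine h3.congr' ?_
  filter_upwards [hv.eventually_gt_atTop 0, h2.eventually_gt_atTop 0,
    h.eventually_const_lt hd] with i hi1 hi2 hi3
  have hw : 0 < w i := by
    by_contra hh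
    push Not at hh
    exact absurd (div_nonpos_of_nonpos_of_nonneg hh hi1.le) (not_le.2 hi3)
  rw [Real.log_div hw.ne' hi1.ne']
  field_simp
  ring

/-- iterated logarithm -/
noncomputable def L (n : ℕ) : ℝ := Real.log (Real.log n)

lemma logn : Tendsto (fun n : ℕ => Real.log n) atTop atTop :=
  Real.tendsto_log_atTop.comp tendsto_natCast_atTop_atTop

lemma L_lim : Tendsto L atTop atTop := Real.tendsto_log_atTop.comp logn

lemma add_ratio (r : ℝ) : Tendsto (fun n : ℕ => ((n : ℝ) + r) / n) atTop (𝓝 1) := by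
  have h : Tendsto (fun n : ℕ => 1 + r / (n:ℝ)) atTop (𝓝 (1 + 0)) :=
    tendsto_const_nhds.add (tendsto_const_nhds.div_atTop tendsto_natCast_atTop_atTop)
  rw [add_zero] at h
  refine h.congr' ?_
  filter_upwards [eventually_gt_atTop 0] with n hn
  have : (n:ℝ) ≠ 0 := by exact_mod_cast hn.ne'
  field_simp

lemma log_shift (r : ℝ) : Tendsto (fun n : ℕ => Real.log ((n : ℝ) + r) / Real.log n) atTop (𝓝 1) :=
  loglem one_pos tendsto_natCast_atTop_atTop (add_ratio r)

lemma L_shift (r : ℕ) : Tendsto (fun n : ℕ => L (n + r) / L n) atTop (𝓝 1) := by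
  have := loglem one_pos logn (log_shift r)
  simpa [L] using this

lemma L_floor {δ : ℝ} (hδ : 0 < δ) :
    Tendsto (fun n : ℕ => L (⌊(n:ℝ) ^ δ⌋₊) / L n) atTop (𝓝 1) := by
  have h0 : Tendsto (fun n : ℕ => (n:ℝ) ^ δ) atTop atTop :=
    (tendsto_rpow_atTop hδ).comp tendsto_natCast_atTop_atTop
  have h1 : Tendsto (fun n : ℕ => (⌊(n:ℝ) ^ δ⌋₊ : ℝ) / (n:ℝ) ^ δ) atTop (𝓝 1) :=
    (tendsto_nat_floor_div_atTop (R := ℝ)).comp h0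
  have h2 := (loglem one_pos h0 h1).const_mul δ
  have h3 : Tendsto (fun n : ℕ => Real.log (⌊(n:ℝ) ^ δ⌋₊ : ℝ) / Real.log n) atTop (𝓝 δ) := by
    rw [mul_one] at h2
    refine h2.congr' ?_
    filter_upwards [eventually_gt_atTop 0, logn.eventually_gt_atTop 0] with n hn hn1
    have : (0:ℝ) < n := by exact_mod_cast hn
    rw [Real.log_rpow this]
    field_simp
  exact loglem hδ logn h3

open Classical in
/-- reciprocal sums over primes in a residue class -/
noncomputable def AA {q : ℕ} (a : ZMod q) (n : ℕ) : ℝ :=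
  ∑ k ∈ Finset.range n, if C a k then (1:ℝ) / k else 0

open Classical in
lemma piA_succ {q : ℕ} (a : ZMod q) (n : ℕ) :
    piA a ((n + 1 : ℕ) : ℝ) = piA a (n : ℝ) + if C a (n + 1) then 1 else 0 := by
  unfold piA
  rw [Nat.floor_natCast, Nat.floor_natCast, ← Finset.insert_Ioc_right_eq_Ioc_add_one (Nat.zero_le n),
    Finset.filter_insert]
  split_ifs with h
  · rw [Finset.card_insert_of_notMem (by simp)]; push_cast; ring
  · simp

lemma AA_eq {q : ℕ} (a : ZMod q) (n : ℕ) :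
    AA a (n + 1) = piA a (n : ℝ) / (n + 1) +
      ∑ k ∈ Finset.range (n + 1), piA a (k : ℝ) / (k * (k + 1)) := by
  induction n with
  | zero => simp [AA, piA, C, Nat.not_prime_zero]
  | succ n ih =>
    rw [Finset.sum_range_succ, AA, Finset.sum_range_succ, ← AA, ih, piA_succ]
    push_cast
    have h1 : (n:ℝ) + 1 ≠ 0 := by positivity
    have h2 : (n:ℝ) + 1 + 1 ≠ 0 := by positivity
    split_ifs
    · field_simp; ring
    · field_simp; ring

lemma AA_lim {q : ℕ} [NeZero q] {a : ZMod q} (ha : IsUnit a) :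
    Tendsto (fun n => AA a n / L n) atTop (𝓝 ((q.totient : ℝ)⁻¹)) := by
  set c := (q.totient : ℝ)⁻¹
  have hpi : Tendsto (fun n : ℕ => piA a (n:ℝ) * Real.log n / n) atTop (𝓝 c) :=
    (piA_lim ha).comp tendsto_natCast_atTop_atTop
  set u : ℕ → ℝ := fun n => L (n + 3) with hu
  have hlogpos : ∀ n : ℕ, 1 ≤ Real.log ((n + 3 : ℕ) : ℝ) := by
    intro n
    rw [Real.le_log_iff_exp_le (by positivity)]
    have := Real.exp_one_lt_d9
    push_cast
    have h0 : (0:ℝ) ≤ n := Nat.cast_nonneg n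
    linarith
  have hbd : ∀ n : ℕ, 1 / (((n + 4 : ℕ) : ℝ) * Real.log ((n + 4 : ℕ) : ℝ)) ≤ u (n + 1) - u n ∧
      u (n + 1) - u n ≤ 1 / (((n + 3 : ℕ) : ℝ) * Real.log ((n + 3 : ℕ) : ℝ)) := by
    intro n
    have hx3 := hlogpos n
    have hx4 := hlogpos (n + 1)
    simp only [hu, L]
    rw [show n + 1 + 3 = n + 4 by ring] at hx4 ⊢
    set x : ℝ := ((n + 3 : ℕ) : ℝ) with hx
    have hy : ((n + 4 : ℕ) : ℝ) = x + 1 := by simp [hx]; ring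
    rw [hy] at hx4 ⊢
    have hxp : 0 < x := by simp only [hx]; positivity
    set p := Real.log x
    set r := Real.log (x + 1)
    have d1 : r - p ≤ 1 / x := by
      have := Real.log_le_sub_one_of_pos (show 0 < (x + 1) / x by positivity)
      rw [Real.log_div (by positivity) (by positivity)] at this
      refine this.trans_eq ?_
      field_simp; ring
    have d2 : 1 / (x + 1) ≤ r - p := by
      have := Real.one_sub_inv_le_log_of_pos (show 0 < (x + 1) / x by positivity)
      rw [Real.log_div (by positivity) (by positivity)] at this
      refine le_trans (le_of_eq ?_) this
      field_simp; ring
    have hp : 0 < p := by linarith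
    have hr : 0 < r := by linarith
    rw [← Real.log_div hr.ne' hp.ne']
    constructor
    · refine le_trans ?_ (Real.one_sub_inv_le_log_of_pos (by positivity))
      have : 1 - (r / p)⁻¹ = (r - p) / r := by field_simp
      rw [this, ← div_div]
      gcongr
    · refine (Real.log_le_sub_one_of_pos (by positivity)).trans ?_
      have : r / p - 1 = (r - p) / p := by field_simp
      rw [this, ← div_div]
      gcongr
  have hpos : ∀ n, 0 < u (n + 1) - u n := by
    intro n
    refine lt_of_lt_of_le ?_ (hbd n).1
    have := hlogpos (n + 1)
    rw [show n + 1 + 3 = n + 4 by ring] at this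
    have h2 : (0:ℝ) < ((n + 4 : ℕ) : ℝ) := by positivity
    have h3 : 0 < Real.log ((n + 4 : ℕ) : ℝ) := by linarith
    exact one_div_pos.2 (mul_pos h2 h3)
  have humono : Monotone u := monotone_nat_of_le_succ fun n => by linarith [hpos n]
  have hutop : Tendsto u atTop atTop := L_lim.comp (tendsto_add_atTop_nat 3)
  have key : Tendsto (fun n : ℕ => ((n:ℝ) + 1) * Real.log n * (u (n + 1) - u n)) atTop (𝓝 1) := by
    have T : ∀ r : ℕ, Tendsto (fun n : ℕ => ((n:ℝ) + 1) * Real.log n *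
        (1 / (((n + r : ℕ) : ℝ) * Real.log ((n + r : ℕ) : ℝ)))) atTop (𝓝 1) := by
      intro r
      have h := (add_ratio 1).mul (((add_ratio r).inv₀ one_ne_zero).mul
        ((log_shift r).inv₀ one_ne_zero))
      simp only [inv_one, mul_one] at h
      refine h.congr' ?_
      filter_upwards [eventually_gt_atTop 0, logn.eventually_gt_atTop 0] with n hn hn1
      have h1 : (0:ℝ) < n := by exact_mod_cast hn
      have h3 : (0:ℝ) < (n:ℝ) + r := by positivity
      have h4 : 0 < Real.log ((n:ℝ) + r) := by
        refine lt_of_lt_of_le hn1 (Real.log_le_log h1 ?_)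
        have : (0:ℝ) ≤ r := Nat.cast_nonneg r
        linarith
      push_cast
      field_simp
    refine tendsto_of_tendsto_of_tendsto_of_le_of_le' (T 4) (T 3) ?_ ?_
    · filter_upwards [logn.eventually_gt_atTop 0] with n hn
      exact mul_le_mul_of_nonneg_left (hbd n).1 (by positivity)
    · filter_upwards [logn.eventually_gt_atTop 0] with n hn
      exact mul_le_mul_of_nonneg_left (hbd n).2 (by positivity)
  have he : Tendsto (fun n : ℕ => (piA a (n:ℝ) * Real.log n / n) /
      (((n:ℝ) + 1) * Real.log n * (u (n + 1) - u n))) atTop (𝓝 c) := by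
    have := hpi.div key one_ne_zero
    rwa [div_one] at this
  have hs := stolz (fun k => piA a (k : ℝ) / (k * (k + 1))) u _ c humono hutop he (by
    filter_upwards [eventually_gt_atTop 0, logn.eventually_gt_atTop 0] with n hn hn1
    have h1 : (0:ℝ) < n := by exact_mod_cast hn
    have := hpos n
    field_simp)
  have hs1 := hs.comp (tendsto_add_atTop_nat 1)
  have hz : Tendsto (fun n : ℕ => piA a (n:ℝ) / (n + 1) / u (n + 1)) atTop (𝓝 0) := by
    have hp1 : Tendsto (fun n : ℕ => (piA a (n:ℝ) * Real.log n / n) / Real.log n) atTop (𝓝 0) :=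
      hpi.div_atTop logn
    have hp2 := hp1.div_atTop (hutop.comp (tendsto_add_atTop_nat 1))
    refine squeeze_zero' ?_ ?_ hp2
    · filter_upwards [(hutop.comp (tendsto_add_atTop_nat 1)).eventually_gt_atTop 0] with n hn
      have : 0 ≤ piA a (n:ℝ) := Nat.cast_nonneg _
      simp only [Function.comp] at hn
      positivity
    · filter_upwards [(hutop.comp (tendsto_add_atTop_nat 1)).eventually_gt_atTop 0,
        eventually_gt_atTop 0, logn.eventually_gt_atTop 0] with n hn hn1 hn2
      have : 0 ≤ piA a (n:ℝ) := Nat.cast_nonneg _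
      simp only [Function.comp] at hn ⊢
      have h1 : (0:ℝ) < n := by exact_mod_cast hn1
      rw [show piA a (n:ℝ) * Real.log n / n / Real.log n = piA a (n:ℝ) / n by field_simp]
      gcongr
      linarith
  have h5 := hz.add hs1
  rw [zero_add] at h5
  have h6 : Tendsto (fun n => AA a (n + 1) / u (n + 1)) atTop (𝓝 c) := by
    refine h5.congr fun n => ?_
    simp only [Function.comp]
    rw [AA_eq, add_div]
  have h7 := ((tendsto_add_atTop_iff_nat (f := fun n => AA a n / u n) 1).1 h6).mul (L_shift 3)
  rw [mul_one] at h7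
  refine h7.congr' ?_
  filter_upwards [hutop.eventually_gt_atTop 0] with n hn
  have : L (n + 3) ≠ 0 := hn.ne'
  simp only [hu]
  field_simp

end Tau

namespace Tau
open Filter Topology

open Classical in
/-- products of `j` increasing primes below `z` in prescribed classes -/
noncomputable def Qs {q : ℕ} (m : ℕ → ZMod q) : ℕ → ℕ → Finset ℕ
  | 0, _ => {1}
  | j + 1, z => ((Finset.range z).filter (C (m j))).biUnion
      (fun p => (Qs m j p).image (fun P => P * p))

lemma mem_Qs_succ {q : ℕ} {m : ℕ → ZMod q} {j z n : ℕ} :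
    n ∈ Qs m (j + 1) z ↔ ∃ p, p < z ∧ C (m j) p ∧ ∃ P ∈ Qs m j p, P * p = n := by
  simp [Qs, and_assoc]

lemma Qs_mono {q : ℕ} {m : ℕ → ZMod q} {j z z' : ℕ} (h : z ≤ z') : Qs m j z ⊆ Qs m j z' := by
  cases j with
  | zero => simp [Qs]
  | succ j =>
    intro n hn
    rw [mem_Qs_succ] at hn ⊢
    obtain ⟨p, hp, hr⟩ := hn
    exact ⟨p, hp.trans_le h, hr⟩

lemma Qs_pos {q : ℕ} {m : ℕ → ZMod q} {j : ℕ} : ∀ {z n : ℕ}, n ∈ Qs m j z → 0 < n := by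
  induction j with
  | zero => intro z n h; simp [Qs] at h; omega
  | succ j ih =>
    intro z n hn
    rw [mem_Qs_succ] at hn
    obtain ⟨p, hp, hC, P, hP, rfl⟩ := hn
    exact Nat.mul_pos (ih hP) hC.1.pos

lemma Qs_le {q : ℕ} {m : ℕ → ZMod q} {j : ℕ} : ∀ {z n : ℕ}, n ∈ Qs m j z → n ≤ z ^ j := by
  induction j with
  | zero => intro z n h; simp [Qs] at h; simp [h]
  | succ j ih =>
    intro z n hn
    rw [mem_Qs_succ] at hn
    obtain ⟨p, hp, hC, P, hP, rfl⟩ := hn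
    rw [pow_succ]
    exact Nat.mul_le_mul ((ih hP).trans (Nat.pow_le_pow_left hp.le _)) hp.le

lemma Qs_card {q : ℕ} {m : ℕ → ZMod q} {j z : ℕ} : (Qs m j z).card ≤ z ^ j := by
  have : Qs m j z ⊆ Finset.Icc 1 (z ^ j) := fun n hn =>
    Finset.mem_Icc.2 ⟨Qs_pos hn, Qs_le hn⟩
  simpa using Finset.card_le_card this

lemma Qs_prime_lt {q : ℕ} {m : ℕ → ZMod q} {j : ℕ} :
    ∀ {z n r : ℕ}, n ∈ Qs m j z → r.Prime → r ∣ n → r < z := by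
  induction j with
  | zero => intro z n r h hr hd; simp [Qs] at h; subst h; exact (hr.one_lt.ne' (Nat.dvd_one.1 hd)).elim
  | succ j ih =>
    intro z n r hn hr hd
    rw [mem_Qs_succ] at hn
    obtain ⟨p, hp, hC, P, hP, rfl⟩ := hn
    rcases (Nat.Prime.dvd_mul hr).1 hd with h | h
    · exact (ih hP hr h).trans hp
    · rw [(Nat.prime_dvd_prime_iff_eq hr hC.1).1 h]; exact hp

lemma Qs_uniq {q : ℕ} {m : ℕ → ZMod q} {j p p' P P' : ℕ} 
    (hP' : P' ∈ Qs m j p') (hp : p.Prime) (hp' : p'.Prime) (h : P * p = P' * p') : p ≤ p' := by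
  have : p ∣ P' * p' := h ▸ Dvd.intro_left _ rfl
  rcases (Nat.Prime.dvd_mul hp).1 this with h | h
  · exact (Qs_prime_lt hP' hp h).le
  · exact ((Nat.prime_dvd_prime_iff_eq hp hp').1 h).le

open Classical in
lemma Qs_sum {q : ℕ} {m : ℕ → ZMod q} {j z : ℕ} (f : ℕ → ℝ) :
    ∑ n ∈ Qs m (j + 1) z, f n =
      ∑ p ∈ (Finset.range z).filter (C (m j)), ∑ P ∈ Qs m j p, f (P * p) := by
  rw [Qs, Finset.sum_biUnion]
  · refine Finset.sum_congr rfl fun p hp => ?_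
    rw [Finset.sum_image]
    intro P _ P' _ h
    simp only [Finset.mem_filter] at hp
    exact Nat.eq_of_mul_eq_mul_right hp.2.1.pos h
  · intro p hp p' hp' hne
    simp only [Finset.mem_coe, Finset.mem_filter] at hp hp'
    rw [Function.onFun, Finset.disjoint_left]
    intro n hn hn'
    rw [Finset.mem_image] at hn hn'
    obtain ⟨P, hP, rfl⟩ := hn
    obtain ⟨P', hP', h⟩ := hn'
    exact hne (le_antisymm (Qs_uniq hP' hp.2.1 hp'.2.1 h.symm) (Qs_uniq hP hp'.2.1 hp.2.1 h))

/-- reciprocal sum -/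
noncomputable def T {q : ℕ} (m : ℕ → ZMod q) (j n : ℕ) : ℝ := ∑ P ∈ Qs m j n, (1:ℝ) / P

open Classical in
lemma T_succ {q : ℕ} (m : ℕ → ZMod q) (j n : ℕ) :
    T m (j + 1) n = ∑ p ∈ Finset.range n, (if C (m j) p then (1:ℝ) / p else 0) * T m j p := by
  rw [T, Qs_sum, Finset.sum_filter]
  refine Finset.sum_congr rfl fun p _ => ?_
  split_ifs
  · rw [T, Finset.mul_sum]
    refine Finset.sum_congr rfl fun P _ => ?_
    push_cast
    rw [mul_comm (P:ℝ), one_div_mul_one_div]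
  · simp

open Classical in
lemma AA_succ {q : ℕ} (a : ZMod q) (n : ℕ) :
    AA a (n + 1) - AA a n = if C a n then (1:ℝ) / n else 0 := by
  rw [AA, Finset.sum_range_succ, ← AA]; ring

lemma T_lim {q : ℕ} [NeZero q] {m : ℕ → ZMod q} (hm : ∀ j, IsUnit (m j)) (j : ℕ) :
    Tendsto (fun n => T m j n / L n ^ j) atTop (𝓝 ((q.totient : ℝ)⁻¹ ^ j / j.factorial)) := by
  have hcp : 0 < (q.totient : ℝ)⁻¹ :=
    inv_pos.2 (by exact_mod_cast Nat.totient_pos.2 (NeZero.pos q))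
  set c := (q.totient : ℝ)⁻¹
  induction j with
  | zero => simp [T, Qs]
  | succ j ih =>
    have hA := AA_lim (hm j)
    have hLp := L_lim.eventually_gt_atTop 0
    set A := AA (m j) with hAd
    have hA1 : Tendsto (fun n => A (n + 1) / L n) atTop (𝓝 c) := by
      have h1 := ((hA.comp (tendsto_add_atTop_nat 1)).mul (L_shift 1))
      rw [mul_one] at h1
      refine h1.congr' ?_
      filter_upwards [hLp, (tendsto_add_atTop_nat 1).eventually hLp] with n h1 h2
      simp only [Function.comp]
      field_simp
    have hmono : Monotone A := monotone_nat_of_le_succ fun n => by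
      have := AA_succ (m j) n
      have h2 : A (n + 1) - A n ≥ 0 := by
        rw [hAd, this]; split_ifs <;> positivity
      linarith
    have hAtop : Tendsto A atTop atTop := by
      have := L_lim.atTop_mul_pos hcp hA
      refine this.congr' ?_
      filter_upwards [hLp] with n h1
      field_simp
    have hA0 : ∀ n, 0 ≤ A n := fun n => by
      have := hmono (Nat.zero_le n)
      simpa [hAd, AA] using this
    set D : ℕ → ℝ := fun n => ∑ i ∈ Finset.range (j + 1), A (n + 1) ^ i * A n ^ (j - i) with hD
    have hDl : Tendsto (fun n => D n / L n ^ j) atTop (𝓝 ((j + 1) * c ^ j)) := by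
      have h1 : Tendsto (fun n => ∑ i ∈ Finset.range (j + 1),
          (A (n + 1) / L n) ^ i * (A n / L n) ^ (j - i)) atTop
          (𝓝 (∑ i ∈ Finset.range (j + 1), c ^ i * c ^ (j - i))) :=
        tendsto_finsetSum _ fun i _ => (hA1.pow i).mul (hA.pow (j - i))
      have h2 : ∑ i ∈ Finset.range (j + 1), c ^ i * c ^ (j - i) = (j + 1) * c ^ j := by
        rw [Finset.sum_congr rfl (g := fun _ => c ^ j)]
        · simp
        · intro i hi
          rw [← pow_add]; congr 1; have := Finset.mem_range.1 hi; omega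
      rw [h2] at h1
      refine h1.congr fun n => ?_
      rw [hD, Finset.sum_div]
      refine Finset.sum_congr rfl fun i hi => ?_
      rw [div_pow, div_pow, div_mul_div_comm, ← pow_add]
      congr 2; have := Finset.mem_range.1 hi; omega
    have he : Tendsto (fun n => (T m j n / L n ^ j) / (D n / L n ^ j)) atTop
        (𝓝 ((c ^ j / j.factorial) / ((j + 1) * c ^ j))) := ih.div hDl (by positivity)
    have hs := stolz (fun p => (A (p + 1) - A p) * T m j p) (fun n => A n ^ (j + 1)) _ _
      (fun a b hab => pow_le_pow_left₀ (hA0 a) (hmono hab) _)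
      ((tendsto_pow_atTop (Nat.succ_ne_zero j)).comp hAtop) he (by
        filter_upwards [hLp, hAtop.eventually_gt_atTop 0] with n h1 h2
        have hDp : 0 < D n := by
          have h3 : 0 < A (n + 1) := h2.trans_le (hmono (Nat.le_succ n))
          exact Finset.sum_pos (fun i _ => by positivity) ⟨0, by simp⟩
        have h4 : A (n + 1) ^ (j + 1) - A n ^ (j + 1) = (A (n + 1) - A n) * D n := by
          have := (Commute.all (A (n + 1)) (A n)).mul_geom_sum₂ (j + 1)
          rw [← this]
          simp [hD]
        have h5 : 0 < L n ^ j := by positivity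
        rw [h4]
        field_simp)
    have hf := hs.mul (hA.pow (j + 1))
    have hval : c ^ j / j.factorial / ((j + 1) * c ^ j) * c ^ (j + 1) =
        c ^ (j + 1) / (j + 1).factorial := by
      rw [Nat.factorial_succ]
      push_cast
      have : (j.factorial : ℝ) ≠ 0 := by positivity
      field_simp
    rw [hval] at hf
    refine hf.congr' ?_
    filter_upwards [hLp, hAtop.eventually_gt_atTop 0] with n h1 h2
    rw [T_succ]
    simp_rw [hAd, AA_succ]
    rw [← hAd, div_pow]
    field_simp

end Tau

namespace Tau
open Filter Topology

open Classical in
/-- the counting function -/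
noncomputable def SS {q : ℕ} (m : ℕ → ZMod q) (j x : ℕ) : ℝ :=
  (((Qs m (j + 1) (x + 1)).filter (fun n => n ≤ x)).card : ℝ)

open Classical in
/-- number of admissible largest primes for the cofactor `P` -/
noncomputable def NN {q : ℕ} (m : ℕ → ZMod q) (j x P : ℕ) : ℝ :=
  (((Finset.range (x + 1)).filter (fun p => C (m j) p ∧ P ∈ Qs m j p ∧ P * p ≤ x)).card : ℝ)

open Classical in
lemma SS_eq {q : ℕ} (m : ℕ → ZMod q) (j x : ℕ) :
    SS m j x = ∑ P ∈ Qs m j (x + 1), NN m j x P := by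
  have h1 : SS m j x = ∑ n ∈ Qs m (j + 1) (x + 1), if n ≤ x then (1:ℝ) else 0 := by
    rw [SS, Finset.card_filter]; push_cast; rfl
  rw [h1, Qs_sum, Finset.sum_comm' (t' := Qs m j (x + 1))
    (s' := fun P => (Finset.range (x + 1)).filter (fun p => C (m j) p ∧ P ∈ Qs m j p))]
  · refine Finset.sum_congr rfl fun P _ => ?_
    rw [← Finset.sum_filter, NN, Finset.filter_filter]
    simp [and_assoc]
  · intro p P
    simp only [Finset.mem_filter]
    constructor
    · rintro ⟨⟨h1, h2⟩, h3⟩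
      exact ⟨⟨h1, h2, h3⟩, Qs_mono (Finset.mem_range.1 h1).le h3⟩
    · rintro ⟨⟨h1, h2, h3⟩, _⟩
      exact ⟨⟨h1, h2⟩, h3⟩

lemma NN_le {q : ℕ} (m : ℕ → ZMod q) (j x P : ℕ) (hP : 0 < P) :
    NN m j x P ≤ piA (m j) ((x:ℝ) / P) := by
  unfold NN piA
  norm_cast
  refine Finset.card_le_card fun p hp => ?_
  simp only [Finset.mem_filter, Finset.mem_Ioc] at hp ⊢
  refine ⟨⟨hp.2.1.1.pos, ?_⟩, hp.2.1⟩
  rw [Nat.floor_div_eq_div, Nat.le_div_iff_mul_le hP, mul_comm]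
  exact hp.2.2.2

lemma le_NN {q : ℕ} (m : ℕ → ZMod q) (j x P w : ℕ) (hP : P ∈ Qs m j w) :
    piA (m j) ((x:ℝ) / P) - w ≤ NN m j x P := by
  classical
  have hP0 := Qs_pos hP
  rw [sub_le_iff_le_add]
  unfold NN piA
  have : ((Finset.Ioc 0 ⌊(x:ℝ) / P⌋₊).filter (C (m j))) ⊆
      ((Finset.range (x + 1)).filter (fun p => C (m j) p ∧ P ∈ Qs m j p ∧ P * p ≤ x)) ∪
        Finset.range w := by
    intro p hp
    simp only [Finset.mem_filter, Finset.mem_Ioc, Finset.mem_union, Finset.mem_range] at hp ⊢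
    rw [Nat.floor_div_eq_div, Nat.le_div_iff_mul_le hP0, mul_comm] at hp
    by_cases h : p < w
    · exact Or.inr h
    · left
      refine ⟨?_, hp.2, Qs_mono (not_lt.1 h) hP, hp.1.2⟩
      have := Nat.le_mul_of_pos_left p hP0
      omega
  have h2 := (Finset.card_le_card this).trans (Finset.card_union_le _ _)
  rw [Finset.card_range] at h2
  have h3 := (Nat.cast_le (α := ℝ)).2 h2
  push_cast at h3
  convert h3

lemma NN_ne {q : ℕ} (m : ℕ → ZMod q) (j x P : ℕ) (h : NN m j x P ≠ 0) (hP : 0 < P) :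
    (x:ℝ) ≤ ((x:ℝ) / P) ^ (j + 1) := by
  classical
  unfold NN at h
  rw [Nat.cast_ne_zero, Finset.card_ne_zero] at h
  obtain ⟨p, hp⟩ := h
  simp only [Finset.mem_filter] at hp
  have h1 := Qs_le hp.2.2.1
  have h2 := hp.2.2.2
  have hP' : (0:ℝ) < P := by exact_mod_cast hP
  have h3 : (p:ℝ) ≤ (x:ℝ) / P := by
    rw [le_div_iff₀ hP', mul_comm]; exact_mod_cast h2
  have h4 : (P:ℝ) ≤ ((x:ℝ) / P) ^ j :=
    le_trans (by exact_mod_cast h1) (pow_le_pow_left₀ (Nat.cast_nonneg p) h3 j)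
  calc (x:ℝ) = P * ((x:ℝ) / P) := by field_simp
    _ ≤ ((x:ℝ) / P) ^ j * ((x:ℝ) / P) := by gcongr
    _ = _ := by rw [pow_succ]

lemma w_pow {δ : ℝ} (x j : ℕ) :
    ((⌊(x:ℝ) ^ δ⌋₊ : ℕ) : ℝ) ^ j ≤ (x:ℝ) ^ (j * δ) := by
  have h : ((⌊(x:ℝ) ^ δ⌋₊ : ℕ) : ℝ) ≤ (x:ℝ) ^ δ := Nat.floor_le (by positivity)
  calc _ ≤ ((x:ℝ) ^ δ) ^ j := pow_le_pow_left₀ (Nat.cast_nonneg _) h j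
    _ = _ := by rw [← Real.rpow_natCast, ← Real.rpow_mul (Nat.cast_nonneg x), mul_comm]

lemma w_tend {δ : ℝ} (hδ : 0 < δ) : Tendsto (fun n : ℕ => ⌊(n:ℝ) ^ δ⌋₊) atTop atTop :=
  tendsto_nat_floor_atTop.comp ((tendsto_rpow_atTop hδ).comp tendsto_natCast_atTop_atTop)

lemma xP_ge {q : ℕ} {m : ℕ → ZMod q} {δ : ℝ} {x j P : ℕ} (hx : 0 < x)
    (hP : P ∈ Qs m j ⌊(x:ℝ) ^ δ⌋₊) : (x:ℝ) ^ (1 - j * δ) ≤ (x:ℝ) / P := by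
  have hx' : (0:ℝ) < x := by exact_mod_cast hx
  have hP' : (0:ℝ) < P := by exact_mod_cast Qs_pos hP
  rw [Real.rpow_sub hx', Real.rpow_one]
  have : (P:ℝ) ≤ (x:ℝ) ^ (j * δ) := le_trans (by exact_mod_cast Qs_le hP) (w_pow x j)
  gcongr

/-- limit of the reciprocal sum at a power of `x` -/
lemma T_w {q : ℕ} [NeZero q] {m : ℕ → ZMod q} (hm : ∀ j, IsUnit (m j)) (j : ℕ) {δ : ℝ}
    (hδ : 0 < δ) : Tendsto (fun x : ℕ => T m j ⌊(x:ℝ) ^ δ⌋₊ / L x ^ j) atTop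
      (𝓝 ((q.totient : ℝ)⁻¹ ^ j / j.factorial)) := by
  have h := ((T_lim hm j).comp (w_tend hδ)).mul ((L_floor hδ).pow j)
  rw [one_pow, mul_one] at h
  refine h.congr' ?_
  filter_upwards [(w_tend hδ).eventually (L_lim.eventually_gt_atTop 0),
    L_lim.eventually_gt_atTop 0] with n h1 h2
  simp only [Function.comp]
  rw [div_pow]
  field_simp

lemma T_s {q : ℕ} [NeZero q] {m : ℕ → ZMod q} (hm : ∀ j, IsUnit (m j)) (j : ℕ) :
    Tendsto (fun x : ℕ => T m j (x + 1) / L x ^ j) atTop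
      (𝓝 ((q.totient : ℝ)⁻¹ ^ j / j.factorial)) := by
  have h := ((T_lim hm j).comp (tendsto_add_atTop_nat 1)).mul ((L_shift 1).pow j)
  rw [one_pow, mul_one] at h
  refine h.congr' ?_
  filter_upwards [(tendsto_add_atTop_nat 1).eventually (L_lim.eventually_gt_atTop 0),
    L_lim.eventually_gt_atTop 0] with n h1 h2
  simp only [Function.comp]
  rw [div_pow]
  field_simp

lemma SS_lower {q : ℕ} [NeZero q] {m : ℕ → ZMod q} (hm : ∀ j, IsUnit (m j)) (j : ℕ) {ε : ℝ}
    (hε : 0 < ε) (hε' : ε < (q.totient : ℝ)⁻¹) :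
    ∀ᶠ x : ℕ in atTop, ((q.totient : ℝ)⁻¹ - ε) *
      (T m j ⌊(x:ℝ) ^ (1 / (2 * (j + 1)) : ℝ)⌋₊ / L x ^ j) -
        (Real.log x / (x:ℝ) ^ (1 / 2 : ℝ)) / L x ^ j ≤
      SS m j x * Real.log x / (x * L x ^ j) := by
  set c := (q.totient : ℝ)⁻¹
  set δ : ℝ := 1 / (2 * (j + 1)) with hδ
  have hδ0 : 0 < δ := by positivity
  have hjδ : ((j + 1 : ℕ):ℝ) * δ = 1 / 2 := by rw [hδ]; push_cast; field_simp
  have hpi := (piA_lim (hm j)).eventually_const_lt (show c - ε < c by linarith)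
  obtain ⟨Y, hY⟩ := eventually_atTop.1 hpi
  have hsq : Tendsto (fun n : ℕ => (n:ℝ) ^ (1 / 2 : ℝ)) atTop atTop :=
    (tendsto_rpow_atTop (by norm_num)).comp tendsto_natCast_atTop_atTop
  filter_upwards [eventually_gt_atTop 1, hsq.eventually_ge_atTop Y, hsq.eventually_gt_atTop 1,
    L_lim.eventually_gt_atTop 0, logn.eventually_gt_atTop 0] with x hx1 hxY hxs hL hlog
  set w := ⌊(x:ℝ) ^ δ⌋₊ with hw
  have hx0 : (0:ℝ) < x := by positivity
  have hwx : w ≤ x + 1 := by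
    have h1 : (x:ℝ) ^ δ ≤ (x:ℝ) ^ (1:ℝ) := by
      apply Real.rpow_le_rpow_of_exponent_le
      · exact_mod_cast hx1.le
      · have : (1:ℝ) ≤ ((j + 1 : ℕ):ℝ) := by exact_mod_cast Nat.le_add_left 1 j
        nlinarith
    rw [Real.rpow_one] at h1
    have : w ≤ x := Nat.floor_le_of_le h1
    omega
  have hterm : ∀ P ∈ Qs m j w, (c - ε) * (x / Real.log x) * (1 / P) - w ≤ NN m j x P := by
    intro P hP
    refine le_trans ?_ (le_NN m j x P w hP)
    have hP1 : (1:ℝ) ≤ P := by exact_mod_cast Qs_pos hP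
    have hy := xP_ge (by omega) hP
    have hy2 : (x:ℝ) ^ (1 / 2 : ℝ) ≤ (x:ℝ) / P := by
      refine le_trans (Real.rpow_le_rpow_of_exponent_le (by exact_mod_cast hx1.le) ?_) hy
      push_cast at hjδ
      linarith
    have hyx : (x:ℝ) / P ≤ x := div_le_self hx0.le hP1
    have hYy := hY _ (hxY.trans hy2)
    set y := (x:ℝ) / P with hyd
    have hy1 : 1 < y := hxs.trans_le hy2
    have hly : 0 < Real.log y := Real.log_pos hy1
    have hlyx : Real.log y ≤ Real.log x := Real.log_le_log (by linarith) hyx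
    have : (c - ε) * (x / Real.log x) * (1 / P) ≤ piA (m j) y := by
      calc (c - ε) * (x / Real.log x) * (1 / P) = (c - ε) * y / Real.log x := by
            rw [hyd]; field_simp
        _ ≤ (c - ε) * y / Real.log y := by
            gcongr
        _ ≤ piA (m j) y := by
            rw [lt_div_iff₀ (by linarith)] at hYy
            rw [div_le_iff₀ hly]
            exact hYy.le
    linarith
  have hsum : (c - ε) * (x / Real.log x) * T m j w - (x:ℝ) ^ (1 / 2 : ℝ) ≤ SS m j x := by
    have h1 : ∑ P ∈ Qs m j w, ((c - ε) * (x / Real.log x) * (1 / P) - w) ≤ SS m j x := by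
      rw [SS_eq]
      refine (Finset.sum_le_sum hterm).trans ?_
      exact Finset.sum_le_sum_of_subset_of_nonneg (Qs_mono hwx)
        fun P _ _ => Nat.cast_nonneg _
    rw [Finset.sum_sub_distrib, ← Finset.mul_sum, ← T, Finset.sum_const, nsmul_eq_mul] at h1
    have h2 : ((Qs m j w).card : ℝ) * w ≤ (x:ℝ) ^ (1 / 2 : ℝ) := by
      have h3 : ((Qs m j w).card : ℝ) ≤ (w:ℝ) ^ j := by exact_mod_cast Qs_card
      calc ((Qs m j w).card : ℝ) * w ≤ (w:ℝ) ^ j * w := by gcongr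
        _ = (w:ℝ) ^ (j + 1) := by rw [pow_succ]
        _ ≤ _ := by rw [← hjδ]; exact w_pow x (j + 1)
    linarith
  have hsx : (x:ℝ) = (x:ℝ) ^ (1 / 2 : ℝ) * (x:ℝ) ^ (1 / 2 : ℝ) := by
    rw [← Real.rpow_add hx0]; norm_num
  calc _ = ((c - ε) * (x / Real.log x) * T m j w - (x:ℝ) ^ (1 / 2 : ℝ)) * Real.log x /
        (x * L x ^ j) := by
        set s := (x:ℝ) ^ (1 / 2 : ℝ)
        have hs : 0 < s := by linarith
        generalize Real.log (x:ℝ) = l at hlog ⊢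
        rw [hsx]
        field_simp
    _ ≤ _ := by gcongr

lemma piA_up {q : ℕ} {a : ZMod q} {b Y y θ : ℝ} {x : ℕ} (hx : 1 < x) (hb : 0 ≤ b)
    (hY : ∀ y ≥ Y, piA a y * Real.log y / y < b) (hθ : 0 < θ) (hy : Y ≤ y)
    (h : (x:ℝ) ^ θ ≤ y) : piA a y ≤ b / θ * (y / Real.log x) := by
  have hx1 : (1:ℝ) < x := by exact_mod_cast hx
  have hl : 0 < Real.log x := Real.log_pos hx1
  have hxt : 1 < (x:ℝ) ^ θ := Real.one_lt_rpow hx1 hθ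
  have hy1 : 1 < y := hxt.trans_le h
  have hly : 0 < Real.log y := Real.log_pos hy1
  have h1 : θ * Real.log x ≤ Real.log y := by
    rw [← Real.log_rpow (by linarith)]
    exact Real.log_le_log (by linarith) h
  have h2 := hY y hy
  rw [div_lt_iff₀ (by linarith)] at h2
  calc piA a y ≤ b * y / Real.log y := by rw [le_div_iff₀ hly]; exact h2.le
    _ ≤ b * y / (θ * Real.log x) := by gcongr
    _ = _ := by field_simp

lemma SS_upper {q : ℕ} [NeZero q] {m : ℕ → ZMod q} (hm : ∀ j, IsUnit (m j)) (j : ℕ) {δ : ℝ}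
    (hδ : 0 < δ) (hδ' : j * δ < 1) (hδ1 : δ ≤ 1) :
    ∀ᶠ x : ℕ in atTop, SS m j x * Real.log x / (x * L x ^ j) ≤
      ((q.totient : ℝ)⁻¹ + δ) / (1 - j * δ) * (T m j ⌊(x:ℝ) ^ δ⌋₊ / L x ^ j) +
      ((q.totient : ℝ)⁻¹ + δ) / (1 / (j + 1)) *
        (T m j (x + 1) / L x ^ j - T m j ⌊(x:ℝ) ^ δ⌋₊ / L x ^ j) := by
  classical
  have hc0 : 0 ≤ (q.totient : ℝ)⁻¹ := by positivity
  set c := (q.totient : ℝ)⁻¹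
  have hpi := (piA_lim (hm j)).eventually_lt_const (show c < c + δ by linarith)
  obtain ⟨Y, hY⟩ := eventually_atTop.1 hpi
  have hsq : ∀ θ : ℝ, 0 < θ → Tendsto (fun n : ℕ => (n:ℝ) ^ θ) atTop atTop := fun θ h =>
    (tendsto_rpow_atTop h).comp tendsto_natCast_atTop_atTop
  have hj1 : (0:ℝ) < 1 / (j + 1) := by positivity
  have hj2 : 0 < 1 - j * δ := by linarith
  filter_upwards [eventually_gt_atTop 1, (hsq _ hj1).eventually_ge_atTop Y,
    (hsq _ hj2).eventually_ge_atTop Y,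
    L_lim.eventually_gt_atTop 0, logn.eventually_gt_atTop 0] with x hx1 hxY1 hxY2 hL hlog
  set w := ⌊(x:ℝ) ^ δ⌋₊ with hw
  have hx0 : (0:ℝ) < x := by positivity
  have hwx : w ≤ x + 1 := by
    have h1 : (x:ℝ) ^ δ ≤ (x:ℝ) ^ (1:ℝ) :=
      Real.rpow_le_rpow_of_exponent_le (by exact_mod_cast hx1.le) hδ1
    rw [Real.rpow_one] at h1
    have : w ≤ x := Nat.floor_le_of_le h1
    omega
  have t1 : ∀ P ∈ Qs m j w, NN m j x P ≤ (c + δ) / (1 - j * δ) * (x / Real.log x) * (1 / P) := by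
    intro P hP
    have hP1 : (0:ℝ) < P := by exact_mod_cast Qs_pos hP
    have hy := xP_ge (by omega) hP
    refine (NN_le m j x P (Qs_pos hP)).trans ?_
    refine (piA_up hx1 (by positivity) hY hj2 (hxY2.trans hy) hy).trans (le_of_eq ?_)
    field_simp
  have t2 : ∀ P ∈ Qs m j (x + 1), NN m j x P ≤
      (c + δ) / (1 / (j + 1)) * (x / Real.log x) * (1 / P) := by
    intro P hP
    have hP1 : (0:ℝ) < P := by exact_mod_cast Qs_pos hP
    by_cases h : NN m j x P = 0
    · rw [h]; positivity
    have hy0 := NN_ne m j x P h (Qs_pos hP)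
    have hy : (x:ℝ) ^ (1 / (j + 1) : ℝ) ≤ (x:ℝ) / P := by
      have h1 := Real.rpow_le_rpow hx0.le hy0 hj1.le
      rw [← Real.rpow_natCast, ← Real.rpow_mul (by positivity)] at h1
      push_cast at h1
      rwa [mul_one_div_cancel (by positivity), Real.rpow_one] at h1
    refine (NN_le m j x P (Qs_pos hP)).trans ?_
    refine (piA_up hx1 (by positivity) hY hj1 (hxY1.trans hy) hy).trans (le_of_eq ?_)
    field_simp
  have hsum : SS m j x ≤ (c + δ) / (1 - j * δ) * (x / Real.log x) * T m j w +
      (c + δ) / (1 / (j + 1)) * (x / Real.log x) * (T m j (x + 1) - T m j w) := by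
    rw [SS_eq, ← Finset.sum_sdiff (Qs_mono hwx), add_comm]
    have hT : T m j (x + 1) - T m j w = ∑ P ∈ Qs m j (x + 1) \ Qs m j w, (1:ℝ) / P := by
      rw [T, ← Finset.sum_sdiff (Qs_mono hwx), T]; ring
    rw [hT, T, Finset.mul_sum, Finset.mul_sum]
    exact add_le_add (Finset.sum_le_sum t1)
      (Finset.sum_le_sum fun P hP => t2 P (Finset.mem_sdiff.1 hP).1)
  calc _ ≤ ((c + δ) / (1 - j * δ) * (x / Real.log x) * T m j w +
      (c + δ) / (1 / (j + 1)) * (x / Real.log x) * (T m j (x + 1) - T m j w)) * Real.log x /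
        (x * L x ^ j) := by gcongr
    _ = _ := by field_simp

lemma SS_lim {q : ℕ} [NeZero q] {m : ℕ → ZMod q} (hm : ∀ j, IsUnit (m j)) (j : ℕ) :
    Tendsto (fun x : ℕ => SS m j x * Real.log x / (x * L x ^ j)) atTop
      (𝓝 ((q.totient : ℝ)⁻¹ * ((q.totient : ℝ)⁻¹ ^ j / j.factorial))) := by
  have hcp : 0 < (q.totient : ℝ)⁻¹ :=
    inv_pos.2 (by exact_mod_cast Nat.totient_pos.2 (NeZero.pos q))
  refine tendsto_order.2 ⟨fun b hb => ?_, fun b hb => ?_⟩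
  · have h1 : ∀ᶠ ε : ℝ in 𝓝[>] 0, b < ((q.totient : ℝ)⁻¹ - ε) *
        ((q.totient : ℝ)⁻¹ ^ j / j.factorial) := by
      have : Tendsto (fun ε : ℝ => ((q.totient : ℝ)⁻¹ - ε) *
        ((q.totient : ℝ)⁻¹ ^ j / j.factorial)) (𝓝[>] 0) (𝓝 (((q.totient : ℝ)⁻¹ - 0) *
        ((q.totient : ℝ)⁻¹ ^ j / j.factorial))) := by
        apply Tendsto.mono_left _ nhdsWithin_le_nhds
        exact Continuous.tendsto (by fun_prop) _
      rw [sub_zero] at this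
      exact this.eventually_const_lt hb
    obtain ⟨ε, hε, hε0, hε1⟩ := (h1.and (Ioo_mem_nhdsGT hcp)).exists
    have hz : Tendsto (fun x : ℕ => (Real.log x / (x:ℝ) ^ (1 / 2 : ℝ)) / L x ^ j) atTop (𝓝 0) := by
      have h2 : Tendsto (fun x : ℕ => Real.log x / (x:ℝ) ^ (1 / 2 : ℝ)) atTop (𝓝 0) :=
        ((isLittleO_log_rpow_atTop (by norm_num : (0:ℝ) < 1 / 2)).tendsto_div_nhds_zero).comp
          tendsto_natCast_atTop_atTop
      refine squeeze_zero' ?_ ?_ h2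
      · filter_upwards [L_lim.eventually_gt_atTop 0, logn.eventually_gt_atTop 0] with x a1 a2
        positivity
      · filter_upwards [L_lim.eventually_ge_atTop 1, logn.eventually_gt_atTop 0] with x a1 a2
        exact div_le_self (by positivity) (one_le_pow₀ a1)
    have hl := ((T_w hm j (δ := 1 / (2 * (j + 1))) (by positivity)).const_mul
      ((q.totient : ℝ)⁻¹ - ε)).sub hz
    rw [sub_zero] at hl
    filter_upwards [hl.eventually_const_lt hε, SS_lower hm j hε0 hε1] with x a1 a2
    exact a1.trans_le a2
  · have h1 : ∀ᶠ δ : ℝ in 𝓝[>] 0, ((q.totient : ℝ)⁻¹ + δ) / (1 - j * δ) *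
        ((q.totient : ℝ)⁻¹ ^ j / j.factorial) < b := by
      have : Tendsto (fun δ : ℝ => ((q.totient : ℝ)⁻¹ + δ) / (1 - j * δ) *
        ((q.totient : ℝ)⁻¹ ^ j / j.factorial)) (𝓝[>] 0)
        (𝓝 (((q.totient : ℝ)⁻¹ + 0) / (1 - j * 0) *
        ((q.totient : ℝ)⁻¹ ^ j / j.factorial))) := by
        apply Tendsto.mono_left _ nhdsWithin_le_nhds
        refine Tendsto.mul (Tendsto.div ?_ ?_ (by norm_num)) tendsto_const_nhds
        · exact Continuous.tendsto (by fun_prop) _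
        · exact Continuous.tendsto (by fun_prop) _
      rw [add_zero, mul_zero, sub_zero, div_one] at this
      exact this.eventually_lt_const hb
    obtain ⟨δ, hδ, hδ0, hδ1⟩ := (h1.and (Ioo_mem_nhdsGT
      (show (0:ℝ) < 1 / (j + 1) by positivity))).exists
    have hd : δ * (j + 1) < 1 := by
      rwa [lt_div_iff₀ (by positivity)] at hδ1
    have hj0 : (0:ℝ) ≤ j := Nat.cast_nonneg j
    have hl := ((T_w hm j hδ0).const_mul (((q.totient : ℝ)⁻¹ + δ) / (1 - j * δ))).add
      (((T_s hm j).sub (T_w hm j hδ0)).const_mul (((q.totient : ℝ)⁻¹ + δ) / (1 / (j + 1))))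
    rw [sub_self, mul_zero, add_zero] at hl
    filter_upwards [hl.eventually_lt_const hδ,
      SS_upper hm j hδ0 (by nlinarith) (by nlinarith)] with x a1 a2
    exact a2.trans_lt a1

end Tau

namespace Tau
open Filter Topology

lemma mem_Qs_iff {q : ℕ} (m : ℕ → ZMod q) (k : ℕ) : ∀ z n : ℕ, n ∈ Qs m k z ↔
    ∃ p : Fin k → ℕ, StrictMono p ∧ (∀ i, (p i).Prime) ∧ n = ∏ i, p i ∧
      (∀ i, (p i : ZMod q) = m i) ∧ ∀ i, p i < z := by
  induction k with
  | zero =>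
    intro z n
    simp only [Qs, Finset.mem_singleton]
    constructor
    · intro h
      exact ⟨fun i => i.elim0, fun i => i.elim0, fun i => i.elim0, by simpa using h,
        fun i => i.elim0, fun i => i.elim0⟩
    · rintro ⟨p, _, _, h, _⟩
      simpa using h
  | succ k ih =>
    intro z n
    rw [mem_Qs_succ]
    constructor
    · rintro ⟨r, hr, hC, P, hP, rfl⟩
      obtain ⟨p, h1, h2, h3, h4, h5⟩ := (ih r P).1 hP
      refine ⟨Fin.snoc p r, ?_, ?_, ?_, ?_, ?_⟩
      · intro i i' hii
        induction i' using Fin.lastCases with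
        | last =>
          induction i using Fin.lastCases with
          | last => exact absurd hii (lt_irrefl _)
          | cast i => simpa using h5 i
        | cast i' =>
          induction i using Fin.lastCases with
          | last => exact absurd (hii.trans (Fin.castSucc_lt_last i')) (lt_irrefl _)
          | cast i => simpa using h1 (by simpa using hii)
      · intro i
        induction i using Fin.lastCases with
        | last => simpa using hC.1
        | cast i => simpa using h2 i
      · rw [Fin.prod_univ_castSucc]; simp [h3]
      · intro i
        induction i using Fin.lastCases with
        | last => simpa using hC.2
        | cast i => simpa using h4 i
      · intro i
        induction i using Fin.lastCases with
        | last => simpa using hr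
        | cast i => simpa using (h5 i).trans hr
    · rintro ⟨p, h1, h2, h3, h4, h5⟩
      refine ⟨p (Fin.last k), h5 _, ⟨h2 _, by simpa using h4 (Fin.last k)⟩,
        ∏ i : Fin k, p i.castSucc, ?_, ?_⟩
      · rw [ih]
        exact ⟨fun i => p i.castSucc, fun i i' h => h1 (by simpa using h), fun i => h2 _, rfl,
          fun i => by simpa using h4 i.castSucc, fun i => h1 (Fin.castSucc_lt_last i)⟩
      · rw [h3, Fin.prod_univ_castSucc]

end Tau

open Filter Asymptotics
open scoped Classical

theorem stmt_6 (N : ℕ) (hN : 1 ≤ N) (k : ℕ) (hk : 2 ≤ k)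
    (m : Fin k → (ZMod N)ˣ) :
    IsEquivalent atTop
      (fun x : ℕ => (((Finset.range (x + 1)).filter
          (fun n => ∃ p : Fin k → ℕ, StrictMono p ∧ (∀ i, (p i).Prime) ∧
            n = ∏ i, p i ∧ ∀ i, (p i : ZMod N) = (m i : ZMod N))).card : ℝ))
      (fun x : ℕ => (1 / (N.totient : ℝ) ^ k) *
          (x * (Real.log (Real.log x)) ^ (k - 1) /
            ((k - 1).factorial * Real.log x))) := by
  have : NeZero N := ⟨by omega⟩
  obtain ⟨j, rfl⟩ : ∃ j, k = j + 1 := ⟨k - 1, by omega⟩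
  set M : ℕ → ZMod N := fun i => if h : i < j + 1 then (m ⟨i, h⟩ : ZMod N) else 1 with hM
  have hMu : ∀ i, IsUnit (M i) := by
    intro i
    simp only [hM]
    split_ifs
    · exact Units.isUnit _
    · exact isUnit_one
  have hMi : ∀ i : Fin (j + 1), M i = m i := by
    intro i
    simp only [hM, i.2, dif_pos]
  have hcard : ∀ x : ℕ, (((Finset.range (x + 1)).filter
          (fun n => ∃ p : Fin (j + 1) → ℕ, StrictMono p ∧ (∀ i, (p i).Prime) ∧
            n = ∏ i, p i ∧ ∀ i, (p i : ZMod N) = (m i : ZMod N))).card : ℝ) = Tau.SS M j x := by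
    intro x
    unfold Tau.SS
    congr 2
    ext n
    simp only [Finset.mem_filter, Finset.mem_range, Tau.mem_Qs_iff, hMi]
    constructor
    · rintro ⟨hn, p, h1, h2, h3, h4⟩
      refine ⟨⟨p, h1, h2, h3, h4, fun i => lt_of_le_of_lt ?_ hn⟩, by omega⟩
      refine Nat.le_of_dvd ?_ ?_
      · rw [h3]; exact Finset.prod_pos fun i _ => (h2 i).pos
      · rw [h3]; exact Finset.dvd_prod_of_mem p (Finset.mem_univ i)
    · rintro ⟨⟨p, h1, h2, h3, h4, _⟩, hn⟩
      exact ⟨by omega, p, h1, h2, h3, h4⟩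
  simp only [hcard, Nat.add_sub_cancel]
  have hφ : (0:ℝ) < N.totient := by exact_mod_cast Nat.totient_pos.2 hN
  have hf : (0:ℝ) < j.factorial := by positivity
  have hlim := (Tau.SS_lim hMu j).mul_const ((N.totient : ℝ) ^ (j + 1) * j.factorial)
  have hev : ∀ᶠ x : ℕ in atTop, 0 < (x:ℝ) ∧ 0 < Tau.L x ∧ 0 < Real.log (x:ℝ) := by
    filter_upwards [eventually_gt_atTop 0, Tau.L_lim.eventually_gt_atTop 0,
      Tau.logn.eventually_gt_atTop 0] with x h1 h2 h3
    exact ⟨by exact_mod_cast h1, h2, h3⟩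
  have hval : (N.totient : ℝ)⁻¹ * ((N.totient : ℝ)⁻¹ ^ j / j.factorial) *
      ((N.totient : ℝ) ^ (j + 1) * j.factorial) = 1 := by
    rw [inv_pow, pow_succ]; field_simp
  rw [hval] at hlim
  change IsEquivalent atTop (fun x : ℕ => Tau.SS M j x) (fun x : ℕ =>
    (1 / (N.totient : ℝ) ^ (j + 1)) * (x * (Tau.L x) ^ j / (j.factorial * Real.log x)))
  rw [isEquivalent_iff_tendsto_one]
  · refine hlim.congr' ?_
    filter_upwards [hev] with x ⟨h1, h2, h3⟩
    simp only [Pi.div_apply]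
    field_simp
  · filter_upwards [hev] with x ⟨h1, h2, h3⟩
    have : 0 < (1 / (N.totient : ℝ) ^ (j + 1)) *
      (x * (Tau.L x) ^ j / (j.factorial * Real.log x)) := by positivity
    exact this.ne'
end
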